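/- arXiv:2203.00671 — 15 statements merged into one kernel-verified Lean document; each statement's English description precedes it below -/
import Mathlib

section
/- Let 0 < α ≤ 1/2 and let u⁻ < f < u⁺ be reals, and let Δ be a real with |Δ| ≤ (1/10)·min(u⁺ − f, f − u⁻). Then: (i) (u⁺ − f − Δ)^{−α} + (f + Δ − u⁻)^{−α} ≤ (u⁺ − f)^{−α} + (f − u⁻)^{−α} + α·((u⁺ − f)^{−1−α} − (f − u⁻)^{−1−α})·Δ + α·((u⁺ − f)^{−2−α} + (f − u⁻)^{−2−α})·Δ²; (ii) |(u⁺ − f − Δ)^{−1−α} − (u⁺ − f)^{−1−α}| ≤ 2|Δ|·(u⁺ − f)^{−2−α}; and (iii) |(f + Δ − u⁻)^{−1−α} − (f − u⁻)^{−1−α}| ≤ 2|Δ|·(f − u⁻)^{−2−α}. -/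
lemma auxA (α t : ℝ) (hα : 0 < α) (hα' : α ≤ 1 / 2) (h1 : -(1/10) ≤ t) (h2 : t ≤ 1/10) :
    (1 - t) ^ (-α) ≤ 1 + α * t + α * t ^ 2 := by
  have hp : 0 < 1 - t := by linarith
  have e : (1 - t) ^ (-α) = ((1 - t) ^ (-(1/2) : ℝ)) ^ (2 * α) := by
    rw [← Real.rpow_mul hp.le]; congr 1; ring
  set s := (1 - t) ^ (-(1/2) : ℝ) with hs
  have hs0 : 0 < s := Real.rpow_pos_of_pos hp _
  have hss : s ^ 2 * (1 - t) = 1 := by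
    rw [hs, ← Real.rpow_natCast, ← Real.rpow_mul hp.le]
    norm_num
    rw [Real.rpow_neg_one]; field_simp
  have hb : s ^ (2 * α) ≤ 1 + 2 * α * (s - 1) := by
    have := rpow_one_add_le_one_add_mul_self (s := s - 1) (by linarith) (p := 2 * α)
      (by linarith) (by linarith)
    simpa using this
  have hs1 : s ≤ 1 + (t + t ^ 2) / 2 := by
    have hq : 0 < 1 + (t + t ^ 2) / 2 := by nlinarith [sq_nonneg t]
    refine (sq_le_sq₀ hs0.le hq.le).1 ?_
    have h3 : 0 ≤ (1 - t) * (1 + t) ^ 2 / 4 - t := by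
      nlinarith [mul_nonneg (sub_nonneg.2 h2) (sq_nonneg t), sq_nonneg t]
    have h4 : s ^ 2 * (1 - t) ≤ (1 + (t + t ^ 2) / 2) ^ 2 * (1 - t) := by
      rw [hss]
      nlinarith [mul_nonneg (sq_nonneg t) h3]
    exact le_of_mul_le_mul_right h4 hp
  rw [e]
  nlinarith

lemma auxB (α t : ℝ) (hα : 0 < α) (hα' : α ≤ 1 / 2) (h1 : -(1/10) ≤ t) (h2 : t ≤ 1/10) :
    |(1 - t) ^ (-1 - α) - 1| ≤ 2 * |t| := by
  have hp : 0 < 1 - t := by linarith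
  have hz : 0 < (1 - t) ^ (-1 - α) := Real.rpow_pos_of_pos hp _
  rcases le_total 0 t with ht | ht
  · have hA := auxA α t hα hα' h1 h2
    have hge : 1 ≤ (1 - t) ^ (-1 - α) :=
      Real.one_le_rpow_of_pos_of_le_one_of_nonpos hp (by linarith) (by linarith)
    have e : (1 - t) ^ (-1 - α) * (1 - t) = (1 - t) ^ (-α) := by
      rw [← Real.rpow_add_one hp.ne']; congr 1; ring
    rw [abs_of_nonneg ht, abs_of_nonneg (by linarith)]
    have : (1 - t) ^ (-1 - α) * (1 - t) ≤ (1 + 2 * t) * (1 - t) := by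
      rw [e]; nlinarith [sq_nonneg t, mul_nonneg ht (sub_nonneg.2 hα'), mul_nonneg (sq_nonneg t) (sub_nonneg.2 hα'), mul_nonneg ht (sub_nonneg.2 h2)]
    linarith [le_of_mul_le_mul_right this hp]
  · have hle : (1 - t) ^ (-1 - α) ≤ 1 :=
      Real.rpow_le_one_of_one_le_of_nonpos (by linarith) (by linarith)
    have hb : (1 - t) ^ α ≤ 1 - α * t := by
      have := rpow_one_add_le_one_add_mul_self (s := - t) (by linarith) (p := α)
        (by linarith) (by linarith)
      rw [← sub_eq_add_neg] at this
      linarith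
    have e : (1 - t) ^ (-1 - α) * ((1 - t) ^ α * (1 - t)) = 1 := by
      rw [← Real.rpow_add_one hp.ne', ← Real.rpow_add hp, show -1 - α + (α + 1) = 0 by ring, Real.rpow_zero]
    rw [abs_of_nonpos ht, abs_of_nonpos (by linarith)]
    have hw : 0 < (1 - t) ^ α := Real.rpow_pos_of_pos hp _
    have h5 : (1 - t) ^ α ≤ 1 - t / 2 := by nlinarith
    have h6 : (1 - t) ^ α * (1 - t) ≤ (1 - t / 2) * (1 - t) := by gcongr
    have h7 : (1 + 2 * t) * ((1 - t) ^ α * (1 - t)) ≤ 1 := by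
      nlinarith [mul_le_mul_of_nonneg_left h6 (show 0 ≤ 1 + 2 * t by linarith), sq_nonneg t, mul_nonneg (sq_nonneg t) (show 0 ≤ 1 + t by linarith)]
    have h8 := h7.trans_eq e.symm
    have h9 := le_of_mul_le_mul_right h8 (mul_pos hw hp)
    linarith

lemma auxC (α x d : ℝ) (hα : 0 < α) (hα' : α ≤ 1 / 2) (hx : 0 < x) (hd : |d| ≤ 1/10 * x) :
    (x - d) ^ (-α) ≤ x ^ (-α) + α * x ^ (-1 - α) * d + α * x ^ (-2 - α) * d ^ 2 ∧
    |(x - d) ^ (-1 - α) - x ^ (-1 - α)| ≤ 2 * |d| * x ^ (-2 - α) := by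
  obtain ⟨t, rfl⟩ : ∃ t, d = x * t := ⟨d / x, by field_simp⟩
  rw [abs_mul, abs_of_pos hx, mul_comm] at hd
  have ht := abs_le.1 (le_of_mul_le_mul_right hd hx)
  have hp : 0 ≤ 1 - t := by linarith
  rw [show x - x * t = x * (1 - t) by ring, Real.mul_rpow hx.le hp, Real.mul_rpow hx.le hp]
  have e1 : x ^ (-α) = x ^ (-2 - α) * x ^ 2 := by
    rw [← Real.rpow_add_natCast hx.ne']; congr 1; push_cast; ring
  have e2 : x ^ (-1 - α) = x ^ (-2 - α) * x := by
    rw [← Real.rpow_add_one hx.ne']; congr 1; ring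
  have hz : 0 < x ^ (-2 - α) := Real.rpow_pos_of_pos hx _
  constructor
  · have := mul_le_mul_of_nonneg_left (auxA α t hα hα' ht.1 ht.2)
      (show 0 ≤ x ^ (-2 - α) * x ^ 2 by positivity)
    rw [e1, e2]; linarith
  · have := mul_le_mul_of_nonneg_left (auxB α t hα hα' ht.1 ht.2)
      (show 0 ≤ x ^ (-2 - α) * x by positivity)
    rw [e2, abs_mul, abs_of_pos hx, ← mul_sub_one, abs_mul, abs_of_pos (by positivity : 0 < x ^ (-2 - α) * x)]
    linarith

/-- Taylor-expansion bounds for the barrier `x^{-α}`, `0 < α ≤ 1/2`: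
for reals `lo < f < hi` and `|Δ| ≤ (1/10) min (hi - f) (f - lo)`, the three stated
inequalities hold (real powers). -/
theorem stmt1 (α lo hi f Δ : ℝ)
    (hα : 0 < α) (hα' : α ≤ 1 / 2)
    (hlo : lo < f) (hhi : f < hi)
    (hΔ : |Δ| ≤ (1 / 10) * min (hi - f) (f - lo)) :
    ((hi - f - Δ) ^ (-α) + (f + Δ - lo) ^ (-α)
        ≤ (hi - f) ^ (-α) + (f - lo) ^ (-α)
          + α * ((hi - f) ^ (-1 - α) - (f - lo) ^ (-1 - α)) * Δ
          + α * ((hi - f) ^ (-2 - α) + (f - lo) ^ (-2 - α)) * Δ ^ 2) ∧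
      |(hi - f - Δ) ^ (-1 - α) - (hi - f) ^ (-1 - α)| ≤ 2 * |Δ| * (hi - f) ^ (-2 - α) ∧
      |(f + Δ - lo) ^ (-1 - α) - (f - lo) ^ (-1 - α)| ≤ 2 * |Δ| * (f - lo) ^ (-2 - α) := by
  have ha := auxC α (hi - f) Δ hα hα' (by linarith) (by linarith [min_le_left (hi - f) (f - lo)])
  have hb := auxC α (f - lo) (-Δ) hα hα' (by linarith)
    (by rw [abs_neg]; linarith [min_le_right (hi - f) (f - lo)])
  rw [show f - lo - -Δ = f + Δ - lo by ring, abs_neg] at hb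
  refine ⟨?_, ha.2, hb.2⟩
  linarith [ha.1, hb.1]
end

section
/- Let f be strictly feasible with c^⊤f > F*, and let κ ∈ (0,1). Let g̃ ∈ ℝ^E satisfy ‖L(f)^{−1}(g̃ − g(f))‖_∞ ≤ κ/8, and let ℓ̃ ∈ ℝ^E_{>0} satisfy ℓ̃ ≈₂ ℓ(f); write L̃ = diag(ℓ̃). Let Δ ∈ ℝ^E be a nonzero circulation with g̃^⊤Δ ≤ −κ·‖L̃Δ‖₁ (so that g̃^⊤Δ < 0), and set η := −κ²/(50·g̃^⊤Δ) > 0. Then f + ηΔ is strictly feasible, c^⊤(f + ηΔ) > F*, and Φ(f + ηΔ) ≤ Φ(f) − κ²/500. -/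
theorem aux_pow (x δ r a : ℝ) (hx : 0 < x) (hr : r ≤ 1/2) (ha : 0 < a) (ha1 : a ≤ 1)
    (hδ : |δ| ≤ r * x) :
    (x - δ) ^ (-a) ≤ x ^ (-a) + a * x ^ (-1 - a) * δ + 2 * r * a * (x ^ (-1 - a) * |δ|) := by
  obtain ⟨t, rfl⟩ : ∃ t, δ = x * t := ⟨δ / x, by field_simp⟩
  rw [abs_mul, abs_of_pos hx] at hδ ⊢
  have ht : |t| ≤ r := by
    have : x * |t| ≤ x * r := by linarith
    exact le_of_mul_le_mul_left this hx
  have ht2 : t ≤ 1/2 := (le_abs_self t).trans (ht.trans hr)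
  have h1t : 0 < 1 - t := by linarith
  have hxp : 0 < x ^ (-a) := Real.rpow_pos_of_pos hx _
  have e1 : x ^ (-1 - a) * x = x ^ (-a) := by
    have := Real.rpow_add hx (-1 - a) 1
    rw [Real.rpow_one] at this
    rw [← this]; congr 1; ring
  have e2 : (x - x * t) ^ (-a) = x ^ (-a) * (1 - t) ^ (-a) := by
    rw [← Real.mul_rpow hx.le h1t.le]; congr 1; ring
  have e3 : (1 - t) ^ (-a) ≤ 1 + a * (t / (1 - t)) := by
    have h := rpow_one_add_le_one_add_mul_self (s := t / (1 - t)) (p := a)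
      (by rw [le_div_iff₀ h1t]; linarith) ha.le ha1
    have e : 1 + t / (1 - t) = (1 - t)⁻¹ := by field_simp; ring
    rw [e, Real.inv_rpow h1t.le, ← Real.rpow_neg h1t.le] at h
    exact h
  have e4 : t / (1 - t) ≤ t + 2 * (r * |t|) := by
    rw [div_le_iff₀ h1t]
    have h1 : t ^ 2 ≤ r * |t| := by
      rw [← sq_abs]; nlinarith [abs_nonneg t]
    have h0 : 0 ≤ r * |t| := le_trans (sq_nonneg t) h1
    nlinarith
  have e5 : (1 - t) ^ (-a) ≤ 1 + a * (t + 2 * (r * |t|)) :=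
    e3.trans (by have := mul_le_mul_of_nonneg_left e4 ha.le; linarith)
  rw [e2]
  calc x ^ (-a) * (1 - t) ^ (-a) ≤ x ^ (-a) * (1 + a * (t + 2 * (r * |t|))) :=
        mul_le_mul_of_nonneg_left e5 hxp.le
    _ = _ := by rw [← e1]; ring

theorem aux_ratio (x δ a U M k : ℝ) (hx : 0 < x) (hU : 2 ≤ U) (hM : 2 ≤ M) (hxU : x ≤ 2 * U)
    (ha : a = 1 / (1000 * Real.log (M * U))) (hk : 0 < k)
    (h : x ^ (-1 - a) * |δ| ≤ k / 25) : |δ| ≤ k / 24 * x := by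
  have hMU : 2 * U ≤ M * U := by nlinarith
  have hlog : 0 < Real.log (M * U) := Real.log_pos (by nlinarith)
  have ha0 : 0 < a := by rw [ha]; positivity
  have hxa : x ^ a ≤ 25 / 24 := by
    have h1 : x ^ a ≤ (M * U) ^ a := Real.rpow_le_rpow hx.le (by linarith) ha0.le
    have h2 : (M * U) ^ a = Real.exp (1 / 1000) := by
      rw [Real.rpow_def_of_pos (by nlinarith)]
      congr 1; rw [ha]; field_simp
    have h3 : Real.exp (1 / 1000) ≤ 25 / 24 := by
      have := Real.one_sub_le_exp_neg (1 / 1000)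
      rw [Real.exp_neg] at this
      have hp := Real.exp_pos (1 / 1000)
      rw [← one_div, le_div_iff₀ hp] at this
      linarith
    linarith
  have e : x ^ (-1 - a) * (x ^ a * x) = 1 := by
    have h1 := Real.rpow_add hx a 1
    rw [Real.rpow_one] at h1
    rw [← h1, ← Real.rpow_add hx]
    have : -1 - a + (a + 1) = 0 := by ring
    rw [this, Real.rpow_zero]
  have hp : 0 < x ^ a := Real.rpow_pos_of_pos hx _
  calc |δ| = (x ^ (-1 - a) * |δ|) * (x ^ a * x) := by linear_combination -|δ| * e
    _ ≤ k / 25 * (25 / 24 * x) := by gcongr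
    _ = _ := by ring

set_option maxHeartbeats 2000000 in
open Finset

noncomputable section

/-- The `v`-entry of `Bᵀ f`, where `B` is the edge-vertex incidence matrix of the
directed graph with edge maps `tail, head`. -/
def excess {V E : Type} [Fintype E] [DecidableEq V] (tail head : E → V)
    (f : E → ℝ) (v : V) : ℝ :=
  ∑ e, f e * ((if tail e = v then (1 : ℝ) else 0) - (if head e = v then 1 else 0))

/-- Feasibility for the min-cost flow instance: `Bᵀ f = d` and `lo ≤ f ≤ hi`. -/
def IsFeasible {V E : Type} [Fintype E] [DecidableEq V] (tail head : E → V)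
    (d : V → ℝ) (lo hi : E → ℝ) (f : E → ℝ) : Prop :=
  (∀ v, excess tail head f v = d v) ∧ ∀ e, lo e ≤ f e ∧ f e ≤ hi e

/-- Cost `cᵀ f` of a flow. -/
def fcost {E : Type} [Fintype E] (c f : E → ℝ) : ℝ := ∑ e, c e * f e

/-- The barrier parameter `α = 1/(1000 log (m U))`. -/
def fAlpha (m : ℕ) (U : ℝ) : ℝ := 1 / (1000 * Real.log (m * U))

/-- The potential `Φ(f)`. -/
def fPhi {E : Type} [Fintype E] (m : ℕ) (U Fstar : ℝ) (c lo hi f : E → ℝ) : ℝ :=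
  20 * m * Real.log (fcost c f - Fstar)
    + ∑ e, ((hi e - f e) ^ (-fAlpha m U) + (f e - lo e) ^ (-fAlpha m U))

/-- The length `ℓ(f)_e = (u⁺_e - f_e)^{-1-α} + (f_e - u⁻_e)^{-1-α}`. -/
def flen {E : Type} (m : ℕ) (U : ℝ) (lo hi f : E → ℝ) (e : E) : ℝ :=
  (hi e - f e) ^ (-1 - fAlpha m U) + (f e - lo e) ^ (-1 - fAlpha m U)

/-- The gradient `g(f)_e = 20m (cᵀf - F*)⁻¹ c_e + α (u⁺_e - f_e)^{-1-α} - α (f_e - u⁻_e)^{-1-α}`. -/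
def fgrad {E : Type} [Fintype E] (m : ℕ) (U Fstar : ℝ) (c lo hi f : E → ℝ) (e : E) : ℝ :=
  20 * m * (fcost c f - Fstar)⁻¹ * c e
    + fAlpha m U * (hi e - f e) ^ (-1 - fAlpha m U)
    - fAlpha m U * (f e - lo e) ^ (-1 - fAlpha m U)

/-- one-step potential decrease: an approximately-optimal min-ratio
circulation step decreases the potential by `κ²/500`. -/
theorem stmt3
    {V E : Type} [Fintype V] [Fintype E] [DecidableEq V]
    (tail head : E → V)
    (m : ℕ) (hmcard : m = Fintype.card E) (hm : 2 ≤ m)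
    (U : ℝ) (hU : 2 ≤ U)
    (d : V → ℝ) (c lo hi : E → ℝ)
    (hcap : ∀ e, -U ≤ lo e ∧ lo e < hi e ∧ hi e ≤ U)
    (Fstar : ℝ)
    (hFstar : ∃ f0, IsFeasible tail head d lo hi f0 ∧ fcost c f0 = Fstar ∧
      ∀ f', IsFeasible tail head d lo hi f' → Fstar ≤ fcost c f')
    (f : E → ℝ)
    (hfd : ∀ v, excess tail head f v = d v)
    (hfs : ∀ e, lo e < f e ∧ f e < hi e)
    (hfc : Fstar < fcost c f)
    (κ : ℝ) (hκ : 0 < κ ∧ κ < 1)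
    (gtil : E → ℝ)
    (hg : ∀ e, |gtil e - fgrad m U Fstar c lo hi f e| ≤ κ / 8 * flen m U lo hi f e)
    (ltil : E → ℝ) (hlpos : ∀ e, 0 < ltil e)
    (hl : ∀ e, flen m U lo hi f e / 2 ≤ ltil e ∧ ltil e ≤ 2 * flen m U lo hi f e)
    (Δ : E → ℝ) (hΔcirc : ∀ v, excess tail head Δ v = 0) (hΔne : Δ ≠ 0)
    (hΔg : ∑ e, gtil e * Δ e ≤ -κ * ∑ e, |ltil e * Δ e|) :
    let η : ℝ := -κ ^ 2 / (50 * ∑ e, gtil e * Δ e)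
    let fη : E → ℝ := fun e => f e + η * Δ e
    ((∀ v, excess tail head fη v = d v) ∧ (∀ e, lo e < fη e ∧ fη e < hi e)) ∧
      Fstar < fcost c fη ∧
      fPhi m U Fstar c lo hi fη ≤ fPhi m U Fstar c lo hi f - κ ^ 2 / 500 := by
  intro η fη
  obtain ⟨hκ0, hκ1⟩ := hκ
  set a := fAlpha m U with ha
  have hm' : (2 : ℝ) ≤ (m : ℝ) := by exact_mod_cast hm
  have hlog1 : (1 : ℝ) / 2 ≤ Real.log (m * U) := by
    have h2 := Real.log_le_log (by norm_num : (0 : ℝ) < 2) (by nlinarith : (2 : ℝ) ≤ m * U)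
    have := Real.log_two_gt_d9
    linarith
  have ha0 : 0 < a := by rw [ha, fAlpha]; positivity
  have ha1 : a ≤ 1 / 500 := by
    rw [ha, fAlpha]
    apply one_div_le_one_div_of_le (by norm_num); linarith
  have hx : ∀ e, 0 < hi e - f e := fun e => by linarith [(hfs e).2]
  have hy : ∀ e, 0 < f e - lo e := fun e => by linarith [(hfs e).1]
  have hXp : ∀ e, 0 < (hi e - f e) ^ (-1 - a) := fun e => Real.rpow_pos_of_pos (hx e) _
  have hYp : ∀ e, 0 < (f e - lo e) ^ (-1 - a) := fun e => Real.rpow_pos_of_pos (hy e) _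
  have hlen : ∀ e, flen m U lo hi f e = (hi e - f e) ^ (-1 - a) + (f e - lo e) ^ (-1 - a) :=
    fun e => rfl
  have hlenp : ∀ e, 0 < flen m U lo hi f e := fun e => by
    rw [hlen]; exact add_pos (hXp e) (hYp e)
  set G := ∑ e, gtil e * Δ e with hG
  set S := ∑ e, |ltil e * Δ e| with hS
  have hSpos : 0 < S := by
    obtain ⟨e0, he0⟩ := Function.ne_iff.mp hΔne
    exact Finset.sum_pos' (fun e _ => abs_nonneg _)
      ⟨e0, Finset.mem_univ _, abs_pos.mpr (mul_ne_zero (hlpos e0).ne' he0)⟩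
  have hGneg : G < 0 := by nlinarith
  have hηG : η * G = -κ ^ 2 / 50 := by
    have : G ≠ 0 := hGneg.ne
    change -κ ^ 2 / (50 * G) * G = _
    field_simp
  have hη : 0 < η := by
    change 0 < -κ ^ 2 / (50 * G)
    apply div_pos_of_neg_of_neg
    · have : 0 < κ ^ 2 := by positivity
      linarith
    · linarith
  have hηS : η * S ≤ κ / 50 := by
    have h1 : η * G ≤ η * (-κ * S) := mul_le_mul_of_nonneg_left hΔg hη.le
    have h2 : κ * (η * S) ≤ κ * (κ / 50) := by nlinarith
    exact le_of_mul_le_mul_left h2 hκ0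
  set T := ∑ e, flen m U lo hi f e * |Δ e| with hT
  have hTS : T ≤ 2 * S := by
    rw [hT, hS, Finset.mul_sum]
    apply Finset.sum_le_sum
    intro e _
    rw [abs_mul, abs_of_pos (hlpos e)]
    nlinarith [(hl e).1, abs_nonneg (Δ e)]
  have hηT : η * T ≤ κ / 25 := by
    have := mul_le_mul_of_nonneg_left hTS hη.le
    linarith
  have hT1 : ∀ e, flen m U lo hi f e * |η * Δ e| ≤ κ / 25 := fun e => by
    have h1 : flen m U lo hi f e * |Δ e| ≤ T :=
      Finset.single_le_sum (f := fun e => flen m U lo hi f e * |Δ e|)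
        (fun e _ => mul_nonneg (hlenp e).le (abs_nonneg _)) (Finset.mem_univ e)
    have h2 := mul_le_mul_of_nonneg_left h1 hη.le
    rw [abs_mul, abs_of_pos hη]
    linarith
  have hbx : ∀ e, |η * Δ e| ≤ κ / 24 * (hi e - f e) := fun e => by
    refine aux_ratio _ _ a U m κ (hx e) hU hm' ?_ rfl hκ0 ?_
    · linarith [(hfs e).1, (hcap e).1, (hcap e).2.2]
    · have := hT1 e
      rw [hlen] at this
      nlinarith [mul_nonneg (hYp e).le (abs_nonneg (η * Δ e))]
  have hby : ∀ e, |η * Δ e| ≤ κ / 24 * (f e - lo e) := fun e => by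
    refine aux_ratio _ _ a U m κ (hy e) hU hm' ?_ rfl hκ0 ?_
    · linarith [(hfs e).2, (hcap e).1, (hcap e).2.2]
    · have := hT1 e
      rw [hlen] at this
      nlinarith [mul_nonneg (hXp e).le (abs_nonneg (η * Δ e))]
  have hbx' : ∀ e, |η * Δ e| ≤ 1 / 24 * (hi e - f e) := fun e =>
    (hbx e).trans (by have := hx e; gcongr)
  have hby' : ∀ e, |η * Δ e| ≤ 1 / 24 * (f e - lo e) := fun e =>
    (hby e).trans (by have := hy e; gcongr)
  have hexc : ∀ (s : ℝ) v, excess tail head (fun e => f e + s * Δ e) v = d v := fun s v => by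
    have h1 : excess tail head (fun e => f e + s * Δ e) v
        = excess tail head f v + s * excess tail head Δ v := by
      simp only [excess, Finset.mul_sum, ← Finset.sum_add_distrib]
      exact Finset.sum_congr rfl fun e _ => by ring
    rw [h1, hfd, hΔcirc]; ring
  have hcost : ∀ s : ℝ, fcost c (fun e => f e + s * Δ e) = fcost c f + s * fcost c Δ := fun s => by
    simp only [fcost, Finset.mul_sum, ← Finset.sum_add_distrib]
    exact Finset.sum_congr rfl fun e _ => by ring
  have hc2 : Fstar ≤ fcost c f + (2 * η) * fcost c Δ := by
    obtain ⟨f0, _, _, hmin⟩ := hFstar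
    rw [← hcost]
    apply hmin
    refine ⟨hexc _, fun e => ?_⟩
    have h1 := abs_le.mp (hbx' e)
    have h2 := abs_le.mp (hby' e)
    have h3 := hx e
    have h4 := hy e
    constructor
    · nlinarith
    · nlinarith
  have hfη : fcost c fη = fcost c f + η * fcost c Δ := hcost η
  have hcη : Fstar < fcost c fη := by rw [hfη]; linarith
  refine ⟨⟨hexc η, fun e => ?_⟩, hcη, ?_⟩
  · have h1 := abs_le.mp (hbx' e)
    have h2 := abs_le.mp (hby' e)
    have h3 := hx e
    have h4 := hy e
    change lo e < f e + η * Δ e ∧ f e + η * Δ e < hi e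
    constructor <;> linarith
  -- potential
  set D := fcost c f - Fstar with hD
  have hDpos : 0 < D := by linarith
  have hlogb : Real.log (fcost c fη - Fstar) ≤ Real.log D + D⁻¹ * (η * fcost c Δ) := by
    have hpos : 0 < fcost c fη - Fstar := by linarith
    have h1 := Real.log_le_sub_one_of_pos (div_pos hpos hDpos)
    rw [Real.log_div hpos.ne' hDpos.ne'] at h1
    have h2 : (fcost c fη - Fstar) / D - 1 = D⁻¹ * (η * fcost c Δ) := by
      rw [hfη]; field_simp; rw [hD]; ring
    linarith
  have hbar : ∀ e, (hi e - fη e) ^ (-a) + (fη e - lo e) ^ (-a) ≤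
      ((hi e - f e) ^ (-a) + (f e - lo e) ^ (-a))
      + η * ((a * (hi e - f e) ^ (-1 - a) - a * (f e - lo e) ^ (-1 - a)) * Δ e)
      + 2 * (κ / 24) * a * η * (flen m U lo hi f e * |Δ e|) := fun e => by
    have h1 := aux_pow (hi e - f e) (η * Δ e) (κ / 24) a (hx e) (by linarith) ha0 (by linarith) (hbx e)
    have h2 := aux_pow (f e - lo e) (-(η * Δ e)) (κ / 24) a (hy e) (by linarith) ha0 (by linarith)
      (by rw [abs_neg]; exact hby e)
    rw [abs_neg] at h2
    have e1 : hi e - fη e = hi e - f e - η * Δ e := by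
      change hi e - (f e + η * Δ e) = _; ring
    have e2 : fη e - lo e = f e - lo e - -(η * Δ e) := by
      change (f e + η * Δ e) - lo e = _; ring
    rw [e1, e2, hlen]
    rw [abs_mul, abs_of_pos hη] at h1 h2
    linarith
  have hbars := Finset.sum_le_sum fun e (_ : e ∈ Finset.univ) => hbar e
  simp only [Finset.sum_add_distrib, ← Finset.mul_sum, ← hT] at hbars
  have hgrad : ∑ e, fgrad m U Fstar c lo hi f e * Δ e = 20 * m * D⁻¹ * fcost c Δ
      + ∑ e, (a * (hi e - f e) ^ (-1 - a) - a * (f e - lo e) ^ (-1 - a)) * Δ e := by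
    simp only [fcost, Finset.mul_sum, ← Finset.sum_add_distrib]
    refine Finset.sum_congr rfl fun e _ => ?_
    simp only [fgrad, ← ha, ← hD]
    ring
  have hgd : ∑ e, fgrad m U Fstar c lo hi f e * Δ e ≤ G + κ / 8 * T := by
    rw [hG, hT, Finset.mul_sum, ← Finset.sum_add_distrib]
    refine Finset.sum_le_sum fun e _ => ?_
    have h1 := mul_le_mul_of_nonneg_right (hg e) (abs_nonneg (Δ e))
    rw [← abs_mul] at h1
    have h2 := (abs_le.mp h1).1
    linarith
  have hηg := mul_le_mul_of_nonneg_left hgd hη.le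
  rw [hgrad] at hηg
  have hlog20 := mul_le_mul_of_nonneg_left hlogb (by positivity : (0 : ℝ) ≤ 20 * m)
  have herr : 2 * (κ / 24) * a * η * T ≤ κ ^ 2 / 1000 := by
    have h1 : a * (η * T) ≤ 1 / 500 * (κ / 25) := by
      apply mul_le_mul ha1 hηT _ (by norm_num)
      apply mul_nonneg hη.le
      exact Finset.sum_nonneg fun e _ => mul_nonneg (hlenp e).le (abs_nonneg _)
    have h2 := mul_le_mul_of_nonneg_left h1 (by positivity : (0 : ℝ) ≤ 2 * (κ / 24))
    nlinarith [sq_nonneg κ]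
  have hk2 : κ / 8 * (η * T) ≤ κ / 8 * (κ / 25) :=
    mul_le_mul_of_nonneg_left hηT (by positivity)
  have hk3 : 0 < κ ^ 2 := by positivity
  simp only [fPhi, ← ha, ← hD, Finset.sum_add_distrib]
  linarith
end
end

section
/- Let f* be a feasible flow attaining F* = c^⊤f*, and let f be strictly feasible with Φ(f) ≤ 200·m·log(mU) and c^⊤f − F* ≥ (mU)^{−10}. Let 0 < ε < α/2, let g̃ ∈ ℝ^E satisfy ‖L(f)^{−1}(g̃ − g(f))‖_∞ ≤ ε, and let ℓ̃ ∈ ℝ^E_{>0} satisfy ℓ̃ ≈₂ ℓ(f); write L̃ = diag(ℓ̃). Then g̃^⊤(f* − f) ≤ −(α/4)·(100m + ‖L̃(f* − f)‖₁); equivalently, g̃^⊤(f* − f) / (100m + ‖L̃(f* − f)‖₁) ≤ −α/4. -/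
open Finset

noncomputable section

/-- quality of `f* - f`: the straight line to the optimum is a good
solution to the min-ratio cycle problem. -/
theorem stmt4
    {V E : Type} [Fintype V] [Fintype E] [DecidableEq V]
    (tail head : E → V)
    (m : ℕ) (hmcard : m = Fintype.card E) (hm : 2 ≤ m)
    (U : ℝ) (hU : 2 ≤ U)
    (d : V → ℝ) (c lo hi : E → ℝ)
    (hcap : ∀ e, -U ≤ lo e ∧ lo e < hi e ∧ hi e ≤ U)
    (Fstar : ℝ) (fstar : E → ℝ)
    (hfstarFeas : IsFeasible tail head d lo hi fstar)
    (hfstarCost : fcost c fstar = Fstar)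
    (hfstarOpt : ∀ f', IsFeasible tail head d lo hi f' → Fstar ≤ fcost c f')
    (f : E → ℝ)
    (hfd : ∀ v, excess tail head f v = d v)
    (hfs : ∀ e, lo e < f e ∧ f e < hi e)
    (hPhi : fPhi m U Fstar c lo hi f ≤ 200 * m * Real.log (m * U))
    (hgap : ((m : ℝ) * U) ^ (-10 : ℝ) ≤ fcost c f - Fstar)
    (ε : ℝ) (hε : 0 < ε ∧ ε < fAlpha m U / 2)
    (gtil : E → ℝ)
    (hg : ∀ e, |gtil e - fgrad m U Fstar c lo hi f e| ≤ ε * flen m U lo hi f e)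
    (ltil : E → ℝ) (hlpos : ∀ e, 0 < ltil e)
    (hl : ∀ e, flen m U lo hi f e / 2 ≤ ltil e ∧ ltil e ≤ 2 * flen m U lo hi f e) :
    ∑ e, gtil e * (fstar e - f e)
      ≤ -(fAlpha m U / 4) * (100 * m + ∑ e, |ltil e * (fstar e - f e)|) := by
  have hm' : (2:ℝ) ≤ m := by exact_mod_cast hm
  have hmU : (4:ℝ) ≤ m * U := by nlinarith
  have hlog : 1 ≤ Real.log (m * U) := by
    rw [Real.le_log_iff_exp_le (by linarith)]
    have := Real.exp_one_lt_d9
    linarith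
  have hαlog : fAlpha m U * Real.log (m * U) = 1 / 1000 := by
    unfold fAlpha
    field_simp
  set α := fAlpha m U with hα
  have hαpos : 0 < α := by rw [hα]; unfold fAlpha; positivity
  have hα1 : α ≤ 1 / 1000 := by nlinarith
  have hmUp : (0:ℝ) < ((m : ℝ) * U) ^ (-10 : ℝ) := Real.rpow_pos_of_pos (by linarith) _
  have hgp : 0 < fcost c f - Fstar := lt_of_lt_of_le hmUp hgap
  have hlg : -10 * Real.log (m * U) ≤ Real.log (fcost c f - Fstar) := by
    rw [← Real.log_rpow (by linarith)]
    exact Real.log_le_log hmUp hgap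
  have hS : ∑ e, ((hi e - f e) ^ (-α) + (f e - lo e) ^ (-α)) ≤ 400 * m * Real.log (m * U) := by
    unfold fPhi at hPhi
    rw [← hα] at hPhi
    have := mul_le_mul_of_nonneg_left hlg (by positivity : (0:ℝ) ≤ 20 * m)
    linarith
  have hc : ∑ e, 20 * m * (fcost c f - Fstar)⁻¹ * c e * (fstar e - f e) = -(20 * m) := by
    have h1 : ∑ e, c e * (fstar e - f e) = -(fcost c f - Fstar) := by
      rw [← hfstarCost]
      unfold fcost
      simp only [mul_sub, Finset.sum_sub_distrib]
      ring
    simp only [mul_assoc]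
    rw [← Finset.mul_sum, ← Finset.mul_sum, ← Finset.mul_sum, h1]
    field_simp
  have key : ∀ e, gtil e * (fstar e - f e) + α / 4 * |ltil e * (fstar e - f e)|
      ≤ 20 * m * (fcost c f - Fstar)⁻¹ * c e * (fstar e - f e)
        + 2 * α * ((hi e - f e) ^ (-α) + (f e - lo e) ^ (-α)) := by
    intro e
    have ha : 0 < hi e - f e := by linarith [(hfs e).2]
    have hb : 0 < f e - lo e := by linarith [(hfs e).1]
    obtain ⟨h1, h2⟩ := hfstarFeas.2 e
    have hg' := hg e
    have hl' := (hl e).2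
    have hlp := hlpos e
    unfold fgrad flen at hg'
    unfold flen at hl'
    rw [← hα] at hg' hl'
    have ea : (hi e - f e) ^ (-α) = (hi e - f e) ^ (-1 - α) * (hi e - f e) := by
      rw [← Real.rpow_add_one ha.ne']; congr 1; ring
    have eb : (f e - lo e) ^ (-α) = (f e - lo e) ^ (-1 - α) * (f e - lo e) := by
      rw [← Real.rpow_add_one hb.ne']; congr 1; ring
    rw [ea, eb, abs_mul, abs_of_pos hlp]
    have hA : 0 < (hi e - f e) ^ (-1 - α) := Real.rpow_pos_of_pos ha _
    have hB : 0 < (f e - lo e) ^ (-1 - α) := Real.rpow_pos_of_pos hb _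
    generalize (hi e - f e) ^ (-1 - α) = A at *
    generalize (f e - lo e) ^ (-1 - α) = B at *
    generalize 20 * m * (fcost c f - Fstar)⁻¹ * c e = q at *
    have hab : |fstar e - f e| * (A + B) + (A - B) * (fstar e - f e)
        ≤ 2 * (A * (hi e - f e) + B * (f e - lo e)) := by
      rcases abs_cases (fstar e - f e) with ⟨h, h'⟩ | ⟨h, h'⟩ <;> rw [h] <;> nlinarith
    have s1 : (gtil e - (q + α * A - α * B)) * (fstar e - f e)
        ≤ α / 2 * (A + B) * |fstar e - f e| := by
      refine (le_abs_self _).trans ?_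
      rw [abs_mul]
      refine mul_le_mul_of_nonneg_right (hg'.trans ?_) (abs_nonneg _)
      exact mul_le_mul_of_nonneg_right hε.2.le (by linarith)
    have s2 : α / 4 * (ltil e * |fstar e - f e|)
        ≤ α / 4 * (2 * (A + B) * |fstar e - f e|) := by gcongr
    have s3 := mul_le_mul_of_nonneg_left hab hαpos.le
    linarith
  have hsum := Finset.sum_le_sum (fun e (_ : e ∈ Finset.univ) => key e)
  rw [Finset.sum_add_distrib, Finset.sum_add_distrib, hc, ← Finset.mul_sum, ← Finset.mul_sum] at hsum
  have hS2 := mul_le_mul_of_nonneg_left hS (by linarith : 0 ≤ 2 * α)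
  have e1 : 2 * α * (400 * m * Real.log (m * U)) = 800 * m * (α * Real.log (m * U)) := by ring
  rw [e1, hαlog] at hS2
  have hαm : α * m ≤ 1 / 1000 * m := by gcongr
  linarith
end
end

section
/- Let f be strictly feasible with c^⊤f > F*. Let g̃ ∈ ℝ^E satisfy ‖L(f)^{−1}(g̃ − g(f))‖_∞ ≤ ε for some ε ∈ (0, 1/2], and let ℓ̃ ∈ ℝ^E_{>0} satisfy ℓ̃ ≈₂ ℓ(f); write L̃ = diag(ℓ̃). Let Δ ∈ ℝ^E be a circulation with g̃^⊤Δ ≤ −κ·‖L̃Δ‖₁ for some κ ∈ (0,1). Then |c^⊤Δ| / (c^⊤f − F*) ≤ |g̃^⊤Δ| / (κ·m). -/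
open Finset

noncomputable section

/-- residual stability: for an approximate min-ratio circulation `Δ`,
`|cᵀΔ| / (cᵀf - F*) ≤ |g̃ᵀΔ| / (κ m)`. -/
theorem stmt5
    {V E : Type} [Fintype V] [Fintype E] [DecidableEq V]
    (tail head : E → V)
    (m : ℕ) (hmcard : m = Fintype.card E) (hm : 2 ≤ m)
    (U : ℝ) (hU : 2 ≤ U)
    (d : V → ℝ) (c lo hi : E → ℝ)
    (hcap : ∀ e, -U ≤ lo e ∧ lo e < hi e ∧ hi e ≤ U)
    (Fstar : ℝ)
    (hFstar : ∃ f0, IsFeasible tail head d lo hi f0 ∧ fcost c f0 = Fstar ∧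
      ∀ f', IsFeasible tail head d lo hi f' → Fstar ≤ fcost c f')
    (f : E → ℝ)
    (hfd : ∀ v, excess tail head f v = d v)
    (hfs : ∀ e, lo e < f e ∧ f e < hi e)
    (hfc : Fstar < fcost c f)
    (ε : ℝ) (hε : 0 < ε ∧ ε ≤ 1 / 2)
    (gtil : E → ℝ)
    (hg : ∀ e, |gtil e - fgrad m U Fstar c lo hi f e| ≤ ε * flen m U lo hi f e)
    (ltil : E → ℝ) (hlpos : ∀ e, 0 < ltil e)
    (hl : ∀ e, flen m U lo hi f e / 2 ≤ ltil e ∧ ltil e ≤ 2 * flen m U lo hi f e)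
    (κ : ℝ) (hκ : 0 < κ ∧ κ < 1)
    (Δ : E → ℝ) (hΔcirc : ∀ v, excess tail head Δ v = 0)
    (hΔg : ∑ e, gtil e * Δ e ≤ -κ * ∑ e, |ltil e * Δ e|) :
    |∑ e, c e * Δ e| / (fcost c f - Fstar) ≤ |∑ e, gtil e * Δ e| / (κ * m) := by
  have hmR : (2:ℝ) ≤ m := by exact_mod_cast hm
  have hα0 : 0 ≤ fAlpha m U := by
    unfold fAlpha
    have : 0 ≤ Real.log (m * U) := Real.log_nonneg (by nlinarith)
    positivity
  have hα1 : fAlpha m U ≤ 1 := by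
    unfold fAlpha
    have h4 : Real.log 2 ≤ Real.log (m * U) := Real.log_le_log (by norm_num) (by nlinarith)
    have h2 := Real.log_two_gt_d9
    rw [div_le_one (by linarith)]
    linarith
  have hD : 0 < fcost c f - Fstar := by linarith
  obtain ⟨hκ0, hκ1⟩ := hκ
  generalize hGdef : fcost c f - Fstar = D at *
  have key : ∀ e, |20 * m * D⁻¹ * (c e * Δ e) - gtil e * Δ e| ≤ 3 * |ltil e * Δ e| := by
    intro e
    have h1 := hg e
    have h2 := (hl e).1
    unfold fgrad at h1
    unfold flen at h1 h2
    rw [hGdef] at h1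
    have ha : 0 ≤ (hi e - f e) ^ (-1 - fAlpha m U) :=
      Real.rpow_nonneg (by linarith [(hfs e).2]) _
    have hb : 0 ≤ (f e - lo e) ^ (-1 - fAlpha m U) :=
      Real.rpow_nonneg (by linarith [(hfs e).1]) _
    generalize (hi e - f e) ^ (-1 - fAlpha m U) = a at *
    generalize (f e - lo e) ^ (-1 - fAlpha m U) = b at *
    have h3 : ε * (a + b) ≤ 1 / 2 * (a + b) :=
      mul_le_mul_of_nonneg_right hε.2 (by linarith)
    have ha1 : fAlpha m U * a ≤ a := mul_le_of_le_one_left ha hα1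
    have hb1 : fAlpha m U * b ≤ b := mul_le_of_le_one_left hb hα1
    have ha2 : 0 ≤ fAlpha m U * a := mul_nonneg hα0 ha
    have hb2 : 0 ≤ fAlpha m U * b := mul_nonneg hα0 hb
    have h4 : |20 * m * D⁻¹ * c e - gtil e| ≤ 3 * ltil e := by
      rw [abs_le] at h1 ⊢
      constructor <;> linarith [h1.1, h1.2]
    have : 20 * m * D⁻¹ * (c e * Δ e) - gtil e * Δ e
        = (20 * m * D⁻¹ * c e - gtil e) * Δ e := by ring
    rw [this, abs_mul, abs_mul, abs_of_pos (hlpos e), ← mul_assoc]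
    exact mul_le_mul_of_nonneg_right h4 (abs_nonneg _)
  have hsum : |20 * m * D⁻¹ * (∑ e, c e * Δ e) - ∑ e, gtil e * Δ e|
      ≤ 3 * ∑ e, |ltil e * Δ e| := by
    rw [Finset.mul_sum, ← Finset.sum_sub_distrib, Finset.mul_sum]
    exact (Finset.abs_sum_le_sum_abs _ _).trans (Finset.sum_le_sum fun e _ => key e)
  have hS : 0 ≤ ∑ e, |ltil e * Δ e| := Finset.sum_nonneg fun e _ => abs_nonneg _
  generalize (∑ e, |ltil e * Δ e|) = S at *
  generalize (∑ e, gtil e * Δ e) = G at *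
  generalize (∑ e, c e * Δ e) = C at *
  have hGS : κ * S ≤ |G| := by linarith [neg_abs_le G]
  have h5 : |20 * m * D⁻¹ * C| ≤ 3 * S + |G| := by
    have := abs_sub_abs_le_abs_sub (20 * m * D⁻¹ * C) G
    linarith
  have h6 : |20 * m * D⁻¹ * C| = 20 * m * (|C| / D) := by
    rw [abs_mul, abs_of_nonneg (by positivity)]
    ring
  rw [h6] at h5
  have h7 : 0 ≤ |C| / D := by positivity
  generalize |C| / D = x at *
  rw [le_div_iff₀ (by positivity)]
  have h8 : κ * (20 * m * x) ≤ κ * (3 * S + |G|) := mul_le_mul_of_nonneg_left h5 hκ0.le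
  have h9 : κ * |G| ≤ |G| := mul_le_of_le_one_left (abs_nonneg _) hκ1.le
  nlinarith [abs_nonneg G]
end
end

section
/- Let f ∈ ℝ^E satisfy u⁻_e < f_e < u⁺_e for all e, and let f̄ ∈ ℝ^E satisfy ‖L(f)(f − f̄)‖_∞ ≤ ε for some ε ∈ (0, 1/100]. Then u⁻_e < f̄_e < u⁺_e for all e, and ℓ(f)_e ≈_{1+3ε} ℓ(f̄)_e for every e ∈ E. -/
open Finset

noncomputable section

theorem aux_scale (p a b c : ℝ) (hp : -2 ≤ p) (hp0 : p ≤ 0) (hc : 0 < c) (hc1 : c ≤ 1)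
    (ha : 0 < a) (hb : c * a ≤ b) : b ^ p ≤ (c ^ 2)⁻¹ * a ^ p := by
  have h1 : b ^ p ≤ (c * a) ^ p := Real.rpow_le_rpow_of_nonpos (by positivity) hb hp0
  have h2 : c ^ p ≤ c ^ (-2 : ℝ) := Real.rpow_le_rpow_of_exponent_ge hc hc1 hp
  have h3 : c ^ (-2 : ℝ) = (c ^ 2)⁻¹ := by
    rw [Real.rpow_neg hc.le]; norm_num
  rw [Real.mul_rpow hc.le ha.le] at h1
  rw [h3] at h2
  exact h1.trans (mul_le_mul_of_nonneg_right h2 (Real.rpow_nonneg ha.le _))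

theorem aux_alpha (m : ℕ) (U : ℝ) (hm : 2 ≤ m) (hU : 2 ≤ U) :
    0 < fAlpha m U ∧ fAlpha m U ≤ 1 ∧ (2 * U) ^ fAlpha m U ≤ 1.01 := by
  have hm' : (2 : ℝ) ≤ m := by exact_mod_cast hm
  have hle : 2 * U ≤ m * U := by nlinarith
  have h4 : (4 : ℝ) ≤ m * U := by nlinarith
  have hlog : 1 ≤ Real.log (m * U) := by
    rw [Real.le_log_iff_exp_le (by linarith)]
    linarith [Real.exp_one_lt_d9]
  have hpos : 0 < fAlpha m U := by unfold fAlpha; positivity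
  refine ⟨hpos, ?_, ?_⟩
  · unfold fAlpha
    rw [div_le_one (by positivity)]; linarith
  · have h1 : (2 * U) ^ fAlpha m U ≤ (m * U) ^ fAlpha m U :=
      Real.rpow_le_rpow (by linarith) hle hpos.le
    have h2 : ((m : ℝ) * U) ^ fAlpha m U = Real.exp (1 / 1000) := by
      rw [Real.rpow_def_of_pos (by linarith)]
      congr 1
      unfold fAlpha
      field_simp
    have h3 := Real.add_one_le_exp (-(1 / 1000) : ℝ)
    have h5 : Real.exp (-(1 / 1000) : ℝ) * Real.exp (1 / 1000) = 1 := by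
      rw [← Real.exp_add]; norm_num
    have h6 := Real.exp_pos (1 / 1000 : ℝ)
    rw [h2] at h1
    nlinarith

theorem aux_key (m : ℕ) (U : ℝ) (hm : 2 ≤ m) (hU : 2 ≤ U) (x y ε : ℝ) (hx : 0 < x)
    (hxU : x ≤ 2 * U) (h0 : 0 < ε) (h1 : ε ≤ 1 / 100)
    (h : x ^ (-1 - fAlpha m U) * |x - y| ≤ ε) :
    0 < y ∧ y ^ (-1 - fAlpha m U) ≤ (1 + 3 * ε) * x ^ (-1 - fAlpha m U) ∧
      x ^ (-1 - fAlpha m U) ≤ (1 + 3 * ε) * y ^ (-1 - fAlpha m U) := by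
  obtain ⟨ha, ha1, hU'⟩ := aux_alpha m U hm hU
  generalize fAlpha m U = α at *
  have hxa : x ^ α ≤ 1.01 := (Real.rpow_le_rpow hx.le hxU ha.le).trans hU'
  have hxp : x ^ (1 + α) * x ^ (-1 - α) = 1 := by
    rw [← Real.rpow_add hx]; ring_nf; simp
  have hx1 : x ^ (1 + α) = x * x ^ α := by rw [Real.rpow_add hx, Real.rpow_one]
  have hd : |x - y| ≤ 1.01 * ε * x := by
    have hpos : 0 < x ^ (1 + α) := Real.rpow_pos_of_pos hx _
    have := mul_le_mul_of_nonneg_left h hpos.le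
    rw [← mul_assoc, hxp, one_mul, hx1] at this
    have h2 : x * x ^ α * ε ≤ x * 1.01 * ε := by gcongr
    linarith
  obtain ⟨hd1, hd2⟩ := abs_le.1 hd
  have hy : 0 < y := by nlinarith
  have hc : 0 < 1 - 1.01 * ε := by linarith
  have hc' : 0 < 1 + 1.01 * ε := by linarith
  refine ⟨hy, ?_, ?_⟩
  · refine (aux_scale _ x y (1 - 1.01 * ε) (by linarith) (by linarith) hc (by linarith) hx
      (by linarith)).trans ?_
    refine mul_le_mul_of_nonneg_right ?_ (Real.rpow_nonneg hx.le _)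
    rw [inv_le_iff_one_le_mul₀ (by positivity)]
    nlinarith [mul_pos h0 h0, mul_pos (mul_pos h0 h0) h0]
  · refine (aux_scale _ y x (1 + 1.01 * ε)⁻¹ (by linarith) (by linarith) (by positivity)
      (inv_le_one_of_one_le₀ (by linarith)) hy ?_).trans ?_
    · rw [inv_mul_le_iff₀ hc']; linarith
    refine mul_le_mul_of_nonneg_right ?_ (Real.rpow_nonneg hy.le _)
    rw [inv_pow, inv_inv]
    nlinarith

/-- length stability: if `‖L(f)(f - f̄)‖_∞ ≤ ε ≤ 1/100` then `f̄` also
lies strictly within capacities and `ℓ(f) ≈_{1+3ε} ℓ(f̄)` entrywise. -/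
theorem stmt6
    {E : Type} [Fintype E]
    (m : ℕ) (hmcard : m = Fintype.card E) (hm : 2 ≤ m)
    (U : ℝ) (hU : 2 ≤ U)
    (lo hi : E → ℝ)
    (hcap : ∀ e, -U ≤ lo e ∧ lo e < hi e ∧ hi e ≤ U)
    (f fb : E → ℝ)
    (hfs : ∀ e, lo e < f e ∧ f e < hi e)
    (ε : ℝ) (hε : 0 < ε ∧ ε ≤ 1 / 100)
    (hclose : ∀ e, |flen m U lo hi f e * (f e - fb e)| ≤ ε) :
    (∀ e, lo e < fb e ∧ fb e < hi e) ∧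
      ∀ e, (1 + 3 * ε)⁻¹ * flen m U lo hi fb e ≤ flen m U lo hi f e ∧
        flen m U lo hi f e ≤ (1 + 3 * ε) * flen m U lo hi fb e := by
  have key : ∀ e, (lo e < fb e ∧ fb e < hi e) ∧
      (1 + 3 * ε)⁻¹ * flen m U lo hi fb e ≤ flen m U lo hi f e ∧
        flen m U lo hi f e ≤ (1 + 3 * ε) * flen m U lo hi fb e := by
    intro e
    obtain ⟨c1, c2, c3⟩ := hcap e
    obtain ⟨f1, f2⟩ := hfs e
    obtain ⟨h0, h1⟩ := hε
    have hc := hclose e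
    have pa : 0 < (hi e - f e) ^ (-1 - fAlpha m U) := Real.rpow_pos_of_pos (by linarith) _
    have pb : 0 < (f e - lo e) ^ (-1 - fAlpha m U) := Real.rpow_pos_of_pos (by linarith) _
    unfold flen at hc ⊢
    rw [abs_mul, abs_of_pos (by positivity), add_mul] at hc
    have na := mul_nonneg pa.le (abs_nonneg (f e - fb e))
    have nb := mul_nonneg pb.le (abs_nonneg (f e - fb e))
    obtain ⟨a1, a2, a3⟩ := aux_key m U hm hU (hi e - f e) (hi e - fb e) ε (by linarith)
      (by linarith) h0 h1 (by
        rw [show hi e - f e - (hi e - fb e) = -(f e - fb e) by ring, abs_neg]; linarith)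
    obtain ⟨b1, b2, b3⟩ := aux_key m U hm hU (f e - lo e) (fb e - lo e) ε (by linarith)
      (by linarith) h0 h1 (by
        rw [show f e - lo e - (fb e - lo e) = f e - fb e by ring]; linarith)
    refine ⟨⟨by linarith, by linarith⟩, ?_, by linarith⟩
    rw [inv_mul_le_iff₀ (by linarith)]
    linarith
  exact ⟨fun e => (key e).1, fun e => (key e).2⟩
end
end

section
/- Let f, f̄ ∈ ℝ^E with u⁻_e < f_e < u⁺_e and u⁻_e < f̄_e < u⁺_e for all e, with ‖L(f)(f − f̄)‖_∞ ≤ ε for some ε ∈ (0, 1/100], with c^⊤f̄ > F*, and let r > 0 satisfy r ≈_{1+ε} (c^⊤f̄ − F*). Define g̃ ∈ ℝ^E by g̃_e := 20m·c_e/r + α·(u⁺_e − f_e)^{−1−α} − α·(f_e − u⁻_e)^{−1−α}. Then ‖L(f)^{−1}(g̃ − ((c^⊤f̄ − F*)/r)·g(f̄))‖_∞ ≤ 6αε. -/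
open Finset

noncomputable section

theorem aux_key_s7 (a ε s x x' : ℝ) (ha : 0 ≤ a) (ha1 : a ≤ 1) (hε : 0 < ε) (hε1 : ε ≤ 1 / 100)
    (hs : (1 + ε)⁻¹ ≤ s) (hs1 : s ≤ 1 + ε) (hx : 0 < x) (hx' : 0 < x')
    (h : |x - x'| ≤ 2 * ε * x) :
    |x ^ (-1 - a) - s * x' ^ (-1 - a)| ≤ 6 * ε * x ^ (-1 - a) := by
  obtain ⟨t, ht⟩ : ∃ t, t = x' / x := ⟨_, rfl⟩
  have ht0 : 0 < t := by rw [ht]; positivity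
  have hxt : x' = x * t := by rw [ht]; field_simp
  have hxp : 0 < x ^ (-1 - a) := Real.rpow_pos_of_pos hx _
  have hs0 : 0 < s := lt_of_lt_of_le (by positivity) hs
  rw [abs_le] at h
  have h1 : 1 - 2 * ε ≤ t := by
    rw [ht, le_div_iff₀ hx]; linarith
  have h2 : t ≤ 1 + 2 * ε := by
    rw [ht, div_le_iff₀ hx]; linarith
  have e2 : ∀ z : ℝ, z ^ (-2 : ℝ) = (z ^ 2)⁻¹ := by
    intro z
    rw [show (-2 : ℝ) = ((-2 : ℤ) : ℝ) by norm_num, Real.rpow_intCast]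
    rfl
  have up : t ^ (-1 - a) ≤ ((1 - 2 * ε) ^ 2)⁻¹ := by
    calc t ^ (-1 - a) ≤ (1 - 2 * ε) ^ (-1 - a) :=
          Real.rpow_le_rpow_of_nonpos (by linarith) h1 (by linarith)
      _ ≤ (1 - 2 * ε) ^ (-2 : ℝ) :=
          Real.rpow_le_rpow_of_exponent_ge (by linarith) (by linarith) (by linarith)
      _ = _ := e2 _
  have lw : ((1 + 2 * ε) ^ 2)⁻¹ ≤ t ^ (-1 - a) := by
    calc ((1 + 2 * ε) ^ 2)⁻¹ = (1 + 2 * ε) ^ (-2 : ℝ) := (e2 _).symm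
      _ ≤ (1 + 2 * ε) ^ (-1 - a) :=
          Real.rpow_le_rpow_of_exponent_le (by linarith) (by linarith)
      _ ≤ _ := Real.rpow_le_rpow_of_nonpos ht0 h2 (by linarith)
  have U1 : s * t ^ (-1 - a) ≤ 1 + 6 * ε := by
    calc s * t ^ (-1 - a) ≤ (1 + ε) * ((1 - 2 * ε) ^ 2)⁻¹ := by gcongr
      _ ≤ 1 + 6 * ε := by
        have : 0 < (1 - 2 * ε) ^ 2 := by
          have : 0 < 1 - 2 * ε := by linarith
          positivity
        rw [← div_eq_mul_inv, div_le_iff₀ this]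
        nlinarith [mul_pos hε hε, pow_pos hε 3]
  have L1 : 1 - 6 * ε ≤ s * t ^ (-1 - a) := by
    calc 1 - 6 * ε ≤ (1 + ε)⁻¹ * ((1 + 2 * ε) ^ 2)⁻¹ := by
          rw [← mul_inv, ← one_div, le_div_iff₀ (by positivity)]
          nlinarith [mul_pos hε hε, pow_pos hε 3, pow_pos hε 4]
      _ ≤ _ := by gcongr
  rw [hxt, Real.mul_rpow hx.le ht0.le]
  have : x ^ (-1 - a) - s * (x ^ (-1 - a) * t ^ (-1 - a))
      = x ^ (-1 - a) * (1 - s * t ^ (-1 - a)) := by ring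
  rw [this, abs_mul, abs_of_pos hxp, mul_comm]
  gcongr
  rw [abs_le]
  constructor <;> linarith

theorem aux_dist (a ε M x l D : ℝ) (hM : 0 < M) (ha : a * Real.log M = 1 / 1000) (ha0 : 0 ≤ a)
    (hε : 0 < ε) (hx : 0 < x) (hxM : x ≤ M) (hl : x ^ (-1 - a) ≤ l) (h : |l * D| ≤ ε) :
    |D| ≤ 2 * ε * x := by
  have hxp : 0 < x ^ (-1 - a) := Real.rpow_pos_of_pos hx _
  have hl0 : 0 < l := lt_of_lt_of_le hxp hl
  rw [abs_mul, abs_of_pos hl0] at h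
  have h1 : x ^ (-1 - a) * |D| ≤ ε := le_trans (by gcongr) h
  have hxa : x ^ a ≤ 2 := by
    calc x ^ a ≤ M ^ a := Real.rpow_le_rpow hx.le hxM ha0
      _ = Real.exp (1 / 1000) := by
        rw [Real.rpow_def_of_pos hM, mul_comm, ha]
      _ ≤ 2 := by
        rw [← Real.le_log_iff_exp_le (by norm_num)]
        linarith [Real.log_two_gt_d9]
  have h2 : x ^ (-1 - a) * (x * x ^ a) = 1 := by
    have : x * x ^ a = x ^ (1 + a) := by rw [Real.rpow_add hx, Real.rpow_one]
    rw [this, ← Real.rpow_add hx]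
    simp
  have hxa0 : 0 < x ^ a := Real.rpow_pos_of_pos hx _
  calc |D| = (x ^ (-1 - a) * |D|) * (x * x ^ a) := by linear_combination (-|D|) * h2
    _ ≤ ε * (x * 2) := by gcongr
    _ = _ := by ring

/-- gradient stability: the lazily-updated gradient `g̃` defined from `r`
approximates the rescaled true gradient at `f̄` to within `6αε` in the `L(f)⁻¹`-weighted
sup norm. -/
theorem stmt7
    {V E : Type} [Fintype V] [Fintype E] [DecidableEq V]
    (tail head : E → V)
    (m : ℕ) (hmcard : m = Fintype.card E) (hm : 2 ≤ m)
    (U : ℝ) (hU : 2 ≤ U)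
    (d : V → ℝ) (c lo hi : E → ℝ)
    (hcap : ∀ e, -U ≤ lo e ∧ lo e < hi e ∧ hi e ≤ U)
    (Fstar : ℝ)
    (hFstar : ∃ f0, IsFeasible tail head d lo hi f0 ∧ fcost c f0 = Fstar ∧
      ∀ f', IsFeasible tail head d lo hi f' → Fstar ≤ fcost c f')
    (f fb : E → ℝ)
    (hfs : ∀ e, lo e < f e ∧ f e < hi e)
    (hfbs : ∀ e, lo e < fb e ∧ fb e < hi e)
    (ε : ℝ) (hε : 0 < ε ∧ ε ≤ 1 / 100)
    (hclose : ∀ e, |flen m U lo hi f e * (f e - fb e)| ≤ ε)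
    (hfbc : Fstar < fcost c fb)
    (r : ℝ) (hr : 0 < r)
    (hrapp : (1 + ε)⁻¹ * (fcost c fb - Fstar) ≤ r ∧ r ≤ (1 + ε) * (fcost c fb - Fstar)) :
    ∀ e,
      |(20 * m * c e / r + fAlpha m U * (hi e - f e) ^ (-1 - fAlpha m U)
            - fAlpha m U * (f e - lo e) ^ (-1 - fAlpha m U))
          - (fcost c fb - Fstar) / r * fgrad m U Fstar c lo hi fb e|
        ≤ 6 * fAlpha m U * ε * flen m U lo hi f e := by
  intro e
  obtain ⟨hε0, hε1⟩ := hε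
  have hmr : (2 : ℝ) ≤ m := by exact_mod_cast hm
  have hM : 0 < (m : ℝ) * U := by positivity
  have hM4 : 4 ≤ (m : ℝ) * U := by nlinarith
  have hlog : 3 / 4 ≤ Real.log (m * U) := by
    have h := Real.one_sub_inv_le_log_of_pos hM
    have : ((m : ℝ) * U)⁻¹ ≤ 4⁻¹ := by gcongr
    have h4 : (4 : ℝ)⁻¹ = 1 / 4 := by norm_num
    linarith
  have ha : fAlpha m U * Real.log (m * U) = 1 / 1000 := by
    unfold fAlpha; field_simp
  have ha0 : 0 ≤ fAlpha m U := by unfold fAlpha; positivity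
  have ha1 : fAlpha m U ≤ 1 := by nlinarith
  have hc := hclose e
  obtain ⟨k1, k2, k3⟩ := hcap e
  obtain ⟨p1, p2⟩ := hfs e
  obtain ⟨q1, q2⟩ := hfbs e
  have hR : 0 < fcost c fb - Fstar := by linarith
  obtain ⟨r1, r2⟩ := hrapp
  have hU2 : 2 * U ≤ m * U := by gcongr
  unfold flen at hc ⊢
  unfold fgrad
  generalize fAlpha m U = a at *
  generalize fcost c fb - Fstar = R at *
  have hs : (1 + ε)⁻¹ ≤ R / r := by
    rw [le_div_iff₀ hr, inv_mul_le_iff₀ (by positivity)]; exact r2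
  have hs1 : R / r ≤ 1 + ε := by
    rw [div_le_iff₀ hr]
    rwa [inv_mul_le_iff₀ (by positivity)] at r1
  have X0 : 0 < (hi e - f e) ^ (-1 - a) := Real.rpow_pos_of_pos (by linarith) _
  have Y0 : 0 < (f e - lo e) ^ (-1 - a) := Real.rpow_pos_of_pos (by linarith) _
  have dx := aux_dist a ε (m * U) (hi e - f e) _ _ hM ha ha0 hε0 (by linarith) (by linarith)
    (by linarith) hc
  have dy := aux_dist a ε (m * U) (f e - lo e) _ _ hM ha ha0 hε0 (by linarith) (by linarith)
    (by linarith) hc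
  have A := aux_key_s7 a ε (R / r) (hi e - f e) (hi e - fb e) ha0 ha1 hε0 hε1 hs hs1 (by linarith)
    (by linarith) (by
      rw [show hi e - f e - (hi e - fb e) = -(f e - fb e) by ring, abs_neg]; exact dx)
  have B := aux_key_s7 a ε (R / r) (f e - lo e) (fb e - lo e) ha0 ha1 hε0 hε1 hs hs1 (by linarith)
    (by linarith) (by
      rw [show f e - lo e - (fb e - lo e) = f e - fb e by ring]; exact dy)
  have key : ∀ X Y X' Y' : ℝ, (20 * m * c e / r + a * X - a * Y)
      - R / r * (20 * m * R⁻¹ * c e + a * X' - a * Y')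
      = a * ((X - R / r * X') - (Y - R / r * Y')) := by
    intro X Y X' Y'
    field_simp
    ring
  rw [key, abs_mul, abs_of_nonneg ha0]
  calc _ ≤ a * (6 * ε * (hi e - f e) ^ (-1 - a) + 6 * ε * (f e - lo e) ^ (-1 - a)) := by
        gcongr
        exact (abs_sub _ _).trans (add_le_add A B)
    _ = _ := by ring
end
end

section
/- (Initial point.) Let I = (G, d, c, u⁻, u⁺) be a min-cost flow instance on a directed graph G = (V,E) with n vertices and m ≥ 2 edges, with integral d ∈ {−U,…,U}^V satisfying Σ_v d_v = 0 and integral c, u⁻, u⁺ ∈ {−U,…,U}^E with u⁻_e < u⁺_e for all e, where U ≥ 2 is an integer. Then there exist: a directed graph G̃ with vertex set V ∪ {v*} (v* a new vertex) and edge set E ∪ E′ with |E′| ≤ n, where every edge of E′ has v* as an endpoint; integral data d̃ ∈ ℤ^{V∪{v*}} with ‖d̃‖_∞ ≤ 2mU and c̃, ũ⁻, ũ⁺ ∈ ℤ^{E∪E′} with all entries bounded by 4mU² in absolute value, agreeing with c, u⁻, u⁺ on E; and a flow f^init ∈ ℝ^{E∪E′} with B̃^⊤f^init = d̃ and ũ⁻_e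 < f^init_e < ũ⁺_e for all e, such that (a) Φ_Ĩ(f^init) ≤ 200·m̃·log(m̃·Ũ), where m̃ := |E ∪ E′|, Ũ := 4mU², and Φ_Ĩ is the potential of the instance Ĩ = (G̃, d̃, c̃, ũ⁻, ũ⁺) with parameter α̃ := 1/(1000·log(m̃Ũ)); and (b) if I admits a feasible flow, then every flow f̃ that is optimal for Ĩ satisfies f̃_e = 0 for all e ∈ E′, and the restriction of f̃ to E is an optimal flow for I. -/
open Finset

noncomputable section

lemma excess_sub_smul {V E : Type} [Fintype E] [DecidableEq V] (tail head : E → V)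
    (f g : E → ℝ) (t : ℝ) (v : V) :
    excess tail head (fun e => f e - t * g e) v
      = excess tail head f v - t * excess tail head g v := by
  unfold excess
  rw [Finset.mul_sum, ← Finset.sum_sub_distrib]
  exact Finset.sum_congr rfl fun e _ => by ring

lemma excess_continuous {V E : Type} [Fintype E] [DecidableEq V] (tail head : E → V) (v : V) :
    Continuous (fun f : E → ℝ => excess tail head f v) := by
  unfold excess
  fun_prop

lemma feasible_compact {V E : Type} [Fintype E] [DecidableEq V] (tail head : E → V)
    (d : V → ℝ) (lo hi : E → ℝ) : IsCompact {f | IsFeasible tail head d lo hi f} := by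
  have h1 : {f | IsFeasible tail head d lo hi f}
      = Set.Icc lo hi ∩ ⋂ v, {f | excess tail head f v = d v} := by
    ext f
    simp only [IsFeasible, Set.mem_ofPred_eq, Set.mem_inter_iff, Set.mem_Icc, Set.mem_iInter,
      Pi.le_def]
    constructor
    · rintro ⟨a, b⟩
      exact ⟨⟨fun e => (b e).1, fun e => (b e).2⟩, a⟩
    · rintro ⟨⟨a, b⟩, c⟩
      exact ⟨c, fun e => ⟨a e, b e⟩⟩
  rw [h1]
  exact isCompact_Icc.inter_right (isClosed_iInter fun v =>
    isClosed_eq (excess_continuous tail head v) continuous_const)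

/-- cut argument -/
lemma cut_bound {V E : Type} [Fintype V] [Fintype E] [DecidableEq V] [DecidableEq E] (a b : E → V)
    (w : E → ℝ) (hw : ∀ e, 0 ≤ w e) (e0 : E) (he0 : 0 < w e0) :
    w e0 ≤ ∑ v, |excess a b w v| ∨
    ∃ C : E → ℝ, (∀ e, 0 ≤ C e) ∧ (∀ e, w e = 0 → C e = 0) ∧ 1 ≤ C e0 ∧
      ∀ v, excess a b C v = 0 := by
  classical
  let P : V → Prop := fun v => ∃ h : E → ℝ, (∀ e, 0 ≤ h e) ∧ (∀ e, w e = 0 → h e = 0) ∧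
    ∀ u, excess a b h u = (if b e0 = u then (1:ℝ) else 0) - (if v = u then 1 else 0)
  have exadd : ∀ (h : E → ℝ) (e : E) (u : V),
      excess a b (fun e' => h e' + if e' = e then 1 else 0) u = excess a b h u +
        ((if a e = u then (1:ℝ) else 0) - (if b e = u then 1 else 0)) := by
    intro h e u
    unfold excess
    simp only [add_mul, Finset.sum_add_distrib, ite_mul, one_mul, zero_mul,
      Finset.sum_ite_eq', Finset.mem_univ, if_true]
  have hP0 : P (b e0) := ⟨fun _ => 0, by simp, by simp, by simp [excess]⟩
  have hstep : ∀ e, 0 < w e → P (a e) → P (b e) := by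
    rintro e he ⟨h, h1, h2, h3⟩
    refine ⟨fun e' => h e' + if e' = e then 1 else 0, ?_, ?_, ?_⟩
    · intro e'; have := h1 e'; dsimp only; split_ifs <;> linarith
    · intro e' h'
      have : e' ≠ e := by rintro rfl; linarith
      simp [this, h2 e' h']
    · intro u; rw [exadd, h3]; ring
  by_cases hA : P (a e0)
  · right
    obtain ⟨h, h1, h2, h3⟩ := hA
    refine ⟨fun e' => h e' + if e' = e0 then 1 else 0, ?_, ?_, ?_, ?_⟩
    · intro e'; have := h1 e'; dsimp only; split_ifs <;> linarith
    · intro e' h'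
      have : e' ≠ e0 := by rintro rfl; linarith
      simp [this, h2 e' h']
    · have := h1 e0
      simp [this]
    · intro u; rw [exadd, h3]; ring
  · left
    have hs : ∑ v ∈ Finset.univ.filter P, excess a b w v
        = ∑ e, w e * ((if P (a e) then (1:ℝ) else 0) - (if P (b e) then 1 else 0)) := by
      unfold excess
      rw [Finset.sum_comm]
      refine Finset.sum_congr rfl fun e _ => ?_
      rw [← Finset.mul_sum, Finset.sum_sub_distrib]
      simp
    have h1 : ∑ e, w e * ((if P (a e) then (1:ℝ) else 0) - (if P (b e) then 1 else 0))
        ≤ ∑ e, (if e = e0 then - w e0 else 0) := by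
      refine Finset.sum_le_sum fun e _ => ?_
      by_cases h : e = e0
      · subst h; simp [hA, hP0]
      · simp only [h, if_false]
        rcases (hw e).eq_or_lt with h0 | h0
        · simp [← h0]
        · have := hstep e h0
          by_cases ha : P (a e)
          · simp [ha, this ha]
          · by_cases hb : P (b e) <;> simp [ha, hb, hw e]
    simp only [Finset.sum_ite_eq', Finset.mem_univ, if_true] at h1
    have h2 : -∑ v ∈ Finset.univ.filter P, excess a b w v ≤ ∑ v, |excess a b w v| := by
      calc _ ≤ |∑ v ∈ Finset.univ.filter P, excess a b w v| := neg_le_abs _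
        _ ≤ ∑ v ∈ Finset.univ.filter P, |excess a b w v| := Finset.abs_sum_le_sum_abs _ _
        _ ≤ _ := Finset.sum_le_sum_of_subset_of_nonneg (Finset.filter_subset _ _)
            (fun _ _ _ => abs_nonneg _)
    linarith

lemma exists_eps {E : Type} [Fintype E] (w C : E → ℝ) (hw : ∀ e, 0 ≤ w e)
    (hC : ∀ e, w e = 0 → C e = 0) : ∃ t : ℝ, 0 < t ∧ ∀ e, t * C e ≤ w e := by
  have h : ∀ᶠ t in nhdsWithin (0:ℝ) (Set.Ioi 0), ∀ e, t * C e ≤ w e := by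
    rw [Filter.eventually_all]
    intro e
    rcases (hw e).eq_or_lt with h0 | h0
    · simp [hC e h0.symm, hw e]
    · have : Filter.Tendsto (fun t : ℝ => t * C e) (nhdsWithin (0:ℝ) (Set.Ioi 0))
          (nhds (0 * C e)) :=
        ((continuous_id.mul continuous_const).tendsto 0).mono_left nhdsWithin_le_nhds
      rw [zero_mul] at this
      exact (this.eventually (gt_mem_nhds h0)).mono fun _ h => le_of_lt h
  obtain ⟨t, h1, h2⟩ := (h.and self_mem_nhdsWithin).exists
  exact ⟨t, h2, h1⟩

lemma hoffman {V E : Type} [Fintype V] [Fintype E] [DecidableEq V] [DecidableEq E]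
    (tail head : E → V) (d : V → ℝ) (lo hi : E → ℝ)
    (hne : ∃ f0, IsFeasible tail head d lo hi f0) (p : E → ℝ)
    (hp : ∀ e, lo e ≤ p e ∧ p e ≤ hi e) :
    ∃ g, IsFeasible tail head d lo hi g ∧
      ∀ e, |g e - p e| ≤ ∑ v, |d v - excess tail head p v| := by
  obtain ⟨g, hg, hmin⟩ := (feasible_compact tail head d lo hi).exists_isMinOn hne
    (f := fun g => ∑ e, |g e - p e|) (by fun_prop)
  refine ⟨g, hg, fun e0 => ?_⟩
  set w : E → ℝ := fun e => |g e - p e| with hwdef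
  let s : E → ℝ := fun e => if 0 ≤ g e - p e then 1 else -1
  let a : E → V := fun e => if 0 ≤ g e - p e then tail e else head e
  let b : E → V := fun e => if 0 ≤ g e - p e then head e else tail e
  have hab : ∀ (C : E → ℝ) v, excess a b C v = excess tail head (fun e => s e * C e) v := by
    intro C v
    unfold excess
    refine Finset.sum_congr rfl fun e _ => ?_
    simp only [a, b, s]
    by_cases h : 0 ≤ g e - p e
    · simp only [h, if_true]; ring
    · simp only [h, if_false]; ring
  have hsw : ∀ e, s e * w e = g e - p e := by
    intro e
    simp only [s, hwdef]
    split_ifs with h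
    · rw [abs_of_nonneg h]; ring
    · rw [abs_of_neg (not_le.1 h)]; ring
  have hw : ∀ e, 0 ≤ w e := fun e => abs_nonneg _
  have hex : ∀ v, excess a b w v = d v - excess tail head p v := by
    intro v
    rw [hab]
    simp only [hsw]
    have := excess_sub_smul tail head g p 1 v
    simp only [one_mul] at this
    rw [this, hg.1 v]
  change w e0 ≤ _
  simp only [← hex]
  rcases (hw e0).eq_or_lt with h0 | h0
  · rw [← h0]; exact Finset.sum_nonneg fun _ _ => abs_nonneg _
  rcases cut_bound a b w hw e0 h0 with h | ⟨C, hC0, hCw, hC1, hCe⟩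
  · exact h
  exfalso
  obtain ⟨t, ht, htC⟩ := exists_eps w C hw hCw
  let g' : E → ℝ := fun e => g e - t * (s e * C e)
  have hd : ∀ e, g' e - p e = s e * (w e - t * C e) := by
    intro e
    have := hsw e
    simp only [g']
    linarith
  have hfe : IsFeasible tail head d lo hi g' := by
    refine ⟨fun v => ?_, fun e => ?_⟩
    · simp only [g']
      rw [excess_sub_smul, ← hab, hCe, hg.1 v]; ring
    · have h1 := hd e
      have h2 := hsw e
      have h3 := htC e
      have h4 := mul_nonneg ht.le (hC0 e)
      have h5 := hp e
      have h6 := hg.2 e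
      rcases (show s e = 1 ∨ s e = -1 by simp only [s]; split_ifs <;> simp) with h | h <;>
        rw [h] at h1 h2 <;> constructor <;> linarith
  have habs : ∀ e, |g' e - p e| = w e - t * C e := by
    intro e
    rw [hd, abs_mul, abs_of_nonneg (sub_nonneg.2 (htC e))]
    rcases (show s e = 1 ∨ s e = -1 by simp only [s]; split_ifs <;> simp) with h | h <;>
      simp [h]
  have h1 : ∑ e, w e ≤ ∑ e, |g' e - p e| := hmin hfe
  have h2 : ∑ e, |g' e - p e| < ∑ e, w e := by
    refine Finset.sum_lt_sum (fun e _ => ?_) ⟨e0, Finset.mem_univ _, ?_⟩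
    · rw [habs]; linarith [mul_nonneg ht.le (hC0 e)]
    · rw [habs]; nlinarith
  linarith

lemma phi_bound {A : Type} [Fintype A] (N : ℕ) (hN : Fintype.card A = N) (W F : ℝ)
    (c lo hi f : A → ℝ) (hlog : 1 ≤ Real.log (N * W))
    (h0 : 0 ≤ fcost c f - F) (hD : fcost c f - F ≤ (N * W) ^ 2)
    (hlo : ∀ a, 1 / 2 ≤ f a - lo a) (hhi : ∀ a, 1 / 2 ≤ hi a - f a) :
    fPhi N W F c lo hi f ≤ 200 * (N : ℝ) * Real.log (N * W) := by
  have hα0 : 0 ≤ fAlpha N W := by unfold fAlpha; positivity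
  have hα1 : fAlpha N W ≤ 1 := by
    unfold fAlpha
    rw [div_le_one (by linarith)]; linarith
  have hx : ∀ x : ℝ, 1 / 2 ≤ x → x ^ (-fAlpha N W) ≤ 2 := by
    intro x hx
    calc x ^ (-fAlpha N W) ≤ (1/2 : ℝ) ^ (-fAlpha N W) :=
          Real.rpow_le_rpow_of_nonpos (by norm_num) hx (by linarith)
      _ ≤ (1/2 : ℝ) ^ (-1 : ℝ) :=
          Real.rpow_le_rpow_of_exponent_ge (by norm_num) (by norm_num) (by linarith)
      _ = 2 := by rw [Real.rpow_neg_one]; norm_num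
  have hsum : ∑ a, ((hi a - f a) ^ (-fAlpha N W) + (f a - lo a) ^ (-fAlpha N W)) ≤ N * 4 := by
    calc _ ≤ ∑ a : A, (4 : ℝ) := Finset.sum_le_sum fun a _ => by
            linarith [hx _ (hlo a), hx _ (hhi a)]
      _ = N * 4 := by simp [hN]
  have hl : Real.log (fcost c f - F) ≤ 2 * Real.log (N * W) := by
    rcases h0.eq_or_lt with h | h
    · rw [← h, Real.log_zero]; linarith
    · calc _ ≤ Real.log ((N * W) ^ 2) := Real.log_le_log h hD
        _ = _ := by rw [Real.log_pow]; norm_num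
  unfold fPhi
  have hN0 : (0 : ℝ) ≤ N := Nat.cast_nonneg _
  have h1 : 20 * (N : ℝ) * Real.log (fcost c f - F) ≤ 20 * N * (2 * Real.log (N * W)) :=
    mul_le_mul_of_nonneg_left hl (by positivity)
  have h2 : (N : ℝ) * 1 ≤ N * Real.log (N * W) := mul_le_mul_of_nonneg_left hlog hN0
  nlinarith

def tlT {V E : Type} {k : ℕ} (tail : E → V) (vtx : Fin k → V) (R : V → ℤ) :
    E ⊕ Fin k → V ⊕ Unit :=
  Sum.elim (fun e => Sum.inl (tail e))
    (fun j => if 0 < R (vtx j) then Sum.inl (vtx j) else Sum.inr ())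

def hdT {V E : Type} {k : ℕ} (head : E → V) (vtx : Fin k → V) (R : V → ℤ) :
    E ⊕ Fin k → V ⊕ Unit :=
  Sum.elim (fun e => Sum.inl (head e))
    (fun j => if 0 < R (vtx j) then Sum.inr () else Sum.inl (vtx j))

def sgT (z : ℤ) : ℝ := if 0 < z then 1 else -1

lemma sgT_abs (z : ℤ) : |sgT z| = 1 := by unfold sgT; split_ifs <;> simp

lemma sgT_mul (z : ℤ) : |(z : ℝ)| * sgT z = z := by
  unfold sgT
  split_ifs with h
  · rw [abs_of_pos (by exact_mod_cast h)]; ring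
  · rw [abs_of_nonpos (by exact_mod_cast not_lt.1 h)]; ring

lemma excess_inl {V E : Type} [Fintype E] [DecidableEq V] {k : ℕ} (tail head : E → V)
    (vtx : Fin k → V) (R : V → ℤ) (f : E ⊕ Fin k → ℝ) (v : V) :
    excess (tlT tail vtx R) (hdT head vtx R) f (Sum.inl v)
      = excess tail head (fun e => f (Sum.inl e)) v
        + ∑ j, f (Sum.inr j) * (sgT (R (vtx j)) * if vtx j = v then 1 else 0) := by
  unfold excess
  rw [Fintype.sum_sum_type]
  congr 1
  · simp [tlT, hdT]
  · refine Finset.sum_congr rfl fun j _ => ?_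
    by_cases h : 0 < R (vtx j) <;> simp [tlT, hdT, sgT, h]
    split_ifs <;> simp

lemma excess_inr {V E : Type} [Fintype E] [DecidableEq V] {k : ℕ} (tail head : E → V)
    (vtx : Fin k → V) (R : V → ℤ) (f : E ⊕ Fin k → ℝ) :
    excess (tlT tail vtx R) (hdT head vtx R) f (Sum.inr ())
      = - ∑ j, f (Sum.inr j) * sgT (R (vtx j)) := by
  unfold excess
  rw [Fintype.sum_sum_type, ← Finset.sum_neg_distrib]
  have : ∀ x y : ℝ, x = 0 → x + y = y := fun x y h => by rw [h, zero_add]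
  rw [this]
  · refine Finset.sum_congr rfl fun j _ => ?_
    by_cases h : 0 < R (vtx j) <;> simp [tlT, hdT, sgT, h]
  · simp [tlT, hdT]

lemma excess_total {V E : Type} [Fintype V] [Fintype E] [DecidableEq V] (tail head : E → V)
    (f : E → ℝ) : ∑ v, excess tail head f v = 0 := by
  unfold excess
  rw [Finset.sum_comm]
  refine Finset.sum_eq_zero fun e _ => ?_
  rw [← Finset.mul_sum, Finset.sum_sub_distrib]
  simp

/-- part (b) -/
lemma part_b {V E : Type} [Fintype V] [Fintype E] [DecidableEq V] [DecidableEq E] {k : ℕ}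
    (tail head : E → V) (vtx : Fin k → V) (R : V → ℤ) (d : V → ℝ) (c lo hi : E → ℝ)
    (U M : ℝ) (hc : ∀ e, |c e| ≤ U) (hM : U * Fintype.card E < M)
    (dt : V ⊕ Unit → ℝ) (ct lot hit : E ⊕ Fin k → ℝ)
    (hdt : ∀ v, dt (Sum.inl v) = d v) (hdt' : dt (Sum.inr ()) = 0)
    (hct : ∀ e, ct (Sum.inl e) = c e) (hct' : ∀ j, ct (Sum.inr j) = M)
    (hlot : ∀ e, lot (Sum.inl e) = lo e) (hlot' : ∀ j, lot (Sum.inr j) = 0)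
    (hhit : ∀ e, hit (Sum.inl e) = hi e) (hhit' : ∀ j, 0 ≤ hit (Sum.inr j))
    (hfe : ∃ f0, IsFeasible tail head d lo hi f0) (ft : E ⊕ Fin k → ℝ)
    (hft : IsFeasible (tlT tail vtx R) (hdT head vtx R) dt lot hit ft)
    (hopt : ∀ g, IsFeasible (tlT tail vtx R) (hdT head vtx R) dt lot hit g →
      fcost ct ft ≤ fcost ct g) :
    (∀ j : Fin k, ft (Sum.inr j) = 0) ∧
      IsFeasible tail head d lo hi (fun e => ft (Sum.inl e)) ∧
      (∀ f', IsFeasible tail head d lo hi f' →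
        fcost c (fun e => ft (Sum.inl e)) ≤ fcost c f') := by
  have hext : ∀ f', IsFeasible tail head d lo hi f' →
      fcost ct ft ≤ fcost c f' := by
    intro f' hf'
    have h := hopt (Sum.elim f' fun _ => 0) ?_
    · refine h.trans (le_of_eq ?_)
      simp [fcost, hct]
    · refine ⟨?_, ?_⟩
      · rintro (v | ⟨⟩)
        · rw [excess_inl]
          simpa [hdt] using hf'.1 v
        · rw [excess_inr]
          simp [hdt']
      · rintro (e | j)
        · simpa [hlot, hhit] using hf'.2 e
        · simpa [hlot'] using hhit' j
  have hcost : fcost ct ft = fcost c (fun e => ft (Sum.inl e)) + M * ∑ j, ft (Sum.inr j) := by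
    simp [fcost, hct, hct', Finset.mul_sum]
  have hnn : ∀ j, 0 ≤ ft (Sum.inr j) := fun j => by
    have := (hft.2 (Sum.inr j)).1
    rwa [hlot'] at this
  set x := ∑ j, ft (Sum.inr j) with hx
  have hx0 : 0 ≤ x := Finset.sum_nonneg fun j _ => hnn j
  have hbox : ∀ e, lo e ≤ ft (Sum.inl e) ∧ ft (Sum.inl e) ≤ hi e := fun e => by
    have := hft.2 (Sum.inl e)
    rwa [hlot, hhit] at this
  have hexv : ∀ v, d v - excess tail head (fun e => ft (Sum.inl e)) v
      = ∑ j, ft (Sum.inr j) * (sgT (R (vtx j)) * if vtx j = v then 1 else 0) := by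
    intro v
    have := hft.1 (Sum.inl v)
    rw [excess_inl, hdt] at this
    linarith
  obtain ⟨g, hg, hgd⟩ := hoffman tail head d lo hi hfe (fun e => ft (Sum.inl e)) hbox
  have hsx : ∑ v, |d v - excess tail head (fun e => ft (Sum.inl e)) v| ≤ x := by
    calc _ ≤ ∑ v, ∑ j, ft (Sum.inr j) * (if vtx j = v then 1 else 0) := by
          refine Finset.sum_le_sum fun v _ => ?_
          rw [hexv]
          refine (Finset.abs_sum_le_sum_abs _ _).trans (Finset.sum_le_sum fun j _ => ?_)
          rw [abs_mul, abs_mul, sgT_abs, one_mul, abs_of_nonneg (hnn j)]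
          split_ifs <;> simp
      _ = x := by
          rw [Finset.sum_comm, hx]
          refine Finset.sum_congr rfl fun j _ => ?_
          rw [← Finset.mul_sum]; simp
  have hcg : fcost c g - fcost c (fun e => ft (Sum.inl e)) ≤ U * Fintype.card E * x := by
    unfold fcost
    rw [← Finset.sum_sub_distrib]
    calc _ ≤ ∑ e : E, U * x := by
          refine Finset.sum_le_sum fun e _ => ?_
          rw [← mul_sub]
          calc _ ≤ |c e * (g e - ft (Sum.inl e))| := le_abs_self _
            _ = |c e| * |g e - ft (Sum.inl e)| := abs_mul _ _
            _ ≤ U * x := mul_le_mul (hc e) ((hgd e).trans hsx) (abs_nonneg _)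
                ((abs_nonneg _).trans (hc e))
      _ = _ := by simp; ring
  have h1 := hext g hg
  have hx00 : x = 0 := by
    by_contra hne
    have : 0 < x := lt_of_le_of_ne hx0 (Ne.symm hne)
    have := mul_lt_mul_of_pos_right hM this
    linarith
  have hz : ∀ j, ft (Sum.inr j) = 0 := fun j =>
    (Finset.sum_eq_zero_iff_of_nonneg (fun j _ => hnn j)).1 (hx ▸ hx00) j (Finset.mem_univ _)
  refine ⟨hz, ⟨fun v => ?_, hbox⟩, fun f' hf' => ?_⟩
  · have := hexv v
    simp only [hz, zero_mul, Finset.sum_const_zero] at this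
    linarith
  · have := hext f' hf'
    rw [hcost, hx00] at this
    linarith

/-- initial point: any integral min-cost flow instance can be augmented
by at most `n` new edges through a new vertex `v*` into an instance `Ĩ` with polynomially
bounded integral data admitting a strictly feasible initial flow of potential at most
`200 m̃ log(m̃ Ũ)`, such that (if the original instance is feasible) optimal flows of `Ĩ`
vanish on the new edges and restrict to optimal flows of the original instance. -/
theorem stmt9
    {V E : Type} [Fintype V] [Fintype E] [DecidableEq V] [DecidableEq E]
    (tail head : E → V)
    (m : ℕ) (hmcard : m = Fintype.card E) (hm : 2 ≤ m)
    (U : ℕ) (hU : 2 ≤ U)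
    (d : V → ℤ) (hd : ∀ v, |d v| ≤ (U : ℤ)) (hdsum : ∑ v, d v = 0)
    (c lo hi : E → ℤ)
    (hc : ∀ e, |c e| ≤ (U : ℤ)) (hlo : ∀ e, |lo e| ≤ (U : ℤ)) (hhi : ∀ e, |hi e| ≤ (U : ℤ))
    (hlohi : ∀ e, lo e < hi e) :
    ∃ k : ℕ, k ≤ Fintype.card V ∧
      ∃ (tl hd' : E ⊕ Fin k → V ⊕ Unit) (dt : V ⊕ Unit → ℤ) (ct lot hit : E ⊕ Fin k → ℤ)
        (finit : E ⊕ Fin k → ℝ),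
        (∀ e, tl (Sum.inl e) = Sum.inl (tail e) ∧ hd' (Sum.inl e) = Sum.inl (head e)) ∧
        (∀ j : Fin k, tl (Sum.inr j) = Sum.inr () ∨ hd' (Sum.inr j) = Sum.inr ()) ∧
        (∀ w, |dt w| ≤ 2 * (m : ℤ) * (U : ℤ)) ∧
        (∀ a, |ct a| ≤ 4 * (m : ℤ) * (U : ℤ) ^ 2 ∧ |lot a| ≤ 4 * (m : ℤ) * (U : ℤ) ^ 2 ∧
          |hit a| ≤ 4 * (m : ℤ) * (U : ℤ) ^ 2) ∧
        (∀ e, ct (Sum.inl e) = c e ∧ lot (Sum.inl e) = lo e ∧ hit (Sum.inl e) = hi e) ∧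
        (∀ w, excess tl hd' finit w = (dt w : ℝ)) ∧
        (∀ a, (lot a : ℝ) < finit a ∧ finit a < (hit a : ℝ)) ∧
        fPhi (m + k) ((4 * m * U ^ 2 : ℕ) : ℝ)
            (sInf {x : ℝ | ∃ g : E ⊕ Fin k → ℝ,
              IsFeasible tl hd' (fun w => (dt w : ℝ)) (fun a => (lot a : ℝ))
                (fun a => (hit a : ℝ)) g ∧ fcost (fun a => (ct a : ℝ)) g = x})
            (fun a => (ct a : ℝ)) (fun a => (lot a : ℝ)) (fun a => (hit a : ℝ)) finit
          ≤ 200 * ((m + k : ℕ) : ℝ) *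
              Real.log (((m + k : ℕ) : ℝ) * ((4 * m * U ^ 2 : ℕ) : ℝ)) ∧
        ((∃ f0 : E → ℝ, IsFeasible tail head (fun v => (d v : ℝ)) (fun e => (lo e : ℝ))
            (fun e => (hi e : ℝ)) f0) →
          ∀ ft : E ⊕ Fin k → ℝ,
            IsFeasible tl hd' (fun w => (dt w : ℝ)) (fun a => (lot a : ℝ))
              (fun a => (hit a : ℝ)) ft →
            (∀ g, IsFeasible tl hd' (fun w => (dt w : ℝ)) (fun a => (lot a : ℝ))
                (fun a => (hit a : ℝ)) g →
              fcost (fun a => (ct a : ℝ)) ft ≤ fcost (fun a => (ct a : ℝ)) g) →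
            (∀ j : Fin k, ft (Sum.inr j) = 0) ∧
              IsFeasible tail head (fun v => (d v : ℝ)) (fun e => (lo e : ℝ))
                (fun e => (hi e : ℝ)) (fun e => ft (Sum.inl e)) ∧
              (∀ f', IsFeasible tail head (fun v => (d v : ℝ)) (fun e => (lo e : ℝ))
                  (fun e => (hi e : ℝ)) f' →
                fcost (fun e => (c e : ℝ)) (fun e => ft (Sum.inl e))
                  ≤ fcost (fun e => (c e : ℝ)) f')) := by
  classical
  let R : V → ℤ := fun v => 2 * d v - ∑ e, (lo e + hi e) *
    ((if tail e = v then (1 : ℤ) else 0) - (if head e = v then 1 else 0))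
  have hU' : (2 : ℤ) ≤ U := by exact_mod_cast hU
  have hm' : (2 : ℤ) ≤ m := by exact_mod_cast hm
  have hmU : 2 * (U : ℤ) ≤ m * U := mul_le_mul_of_nonneg_right hm' (by omega)
  have hUU : 2 * (U : ℤ) ≤ U * U := mul_le_mul_of_nonneg_right hU' (by omega)
  have hmUU : 2 * (m * U : ℤ) ≤ m * U ^ 2 := by nlinarith
  have hRb : ∀ v, |R v| ≤ 4 * (m : ℤ) * U := by
    intro v
    have h1 : |∑ e, (lo e + hi e) *
        ((if tail e = v then (1 : ℤ) else 0) - (if head e = v then 1 else 0))| ≤ m * (2 * U) := by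
      refine (Finset.abs_sum_le_sum_abs _ _).trans ?_
      calc _ ≤ ∑ e : E, (2 * (U : ℤ)) := by
            refine Finset.sum_le_sum fun e _ => ?_
            have h1 := abs_le.1 (hlo e)
            have h2 := abs_le.1 (hhi e)
            rw [abs_le]
            split_ifs <;> constructor <;> simp <;> linarith
        _ = _ := by simp [hmcard]
    have h2 := abs_le.1 (hd v)
    have h3 := abs_le.1 h1
    simp only [R]
    rw [abs_le]
    constructor <;> linarith
  let S : Finset V := Finset.univ.filter fun v => R v ≠ 0
  let vtx : Fin S.card → V := fun j => (S.equivFin.symm j : V)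
  have hvR : ∀ j, R (vtx j) ≠ 0 := fun j => (Finset.mem_filter.1 (S.equivFin.symm j).2).2
  have hsumS : ∀ F : V → ℝ, (∀ v, R v = 0 → F v = 0) → ∑ j, F (vtx j) = ∑ v, F v := by
    intro F hF
    have h1 : ∑ j, F (vtx j) = ∑ x : S, F x :=
      Equiv.sum_comp S.equivFin.symm (fun x : S => F x)
    rw [h1, Finset.sum_coe_sort S F]
    refine Finset.sum_subset (Finset.subset_univ _) fun v _ hv => hF v ?_
    by_contra h
    exact hv (Finset.mem_filter.2 ⟨Finset.mem_univ _, h⟩)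
  let dt : V ⊕ Unit → ℤ := Sum.elim d fun _ => 0
  let ct : E ⊕ Fin S.card → ℤ := Sum.elim c fun _ => 4 * m * U ^ 2
  let lot : E ⊕ Fin S.card → ℤ := Sum.elim lo fun _ => 0
  let hit : E ⊕ Fin S.card → ℤ := Sum.elim hi fun j => |R (vtx j)|
  let finit : E ⊕ Fin S.card → ℝ :=
    Sum.elim (fun e => ((lo e : ℝ) + hi e) / 2) fun j => |(R (vtx j) : ℝ)| / 2
  have hRex : ∀ v, (R v : ℝ) / 2
      = d v - excess tail head (fun e => ((lo e : ℝ) + hi e) / 2) v := by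
    intro v
    simp only [R, excess]
    push_cast
    rw [sub_div, Finset.sum_div]
    congr 1
    · ring
    · exact Finset.sum_congr rfl fun e _ => by ring
  have hRsum : ∑ v, (R v : ℝ) / 2 = 0 := by
    simp only [hRex]
    rw [Finset.sum_sub_distrib, excess_total]
    have : ((∑ v, d v : ℤ) : ℝ) = 0 := by rw [hdsum]; simp
    push_cast at this
    linarith
  have hex : ∀ w, excess (tlT tail vtx R) (hdT head vtx R) finit w = (dt w : ℝ) := by
    rintro (v | ⟨⟩)
    · rw [excess_inl]
      have h1 : ∑ j, finit (Sum.inr j) * (sgT (R (vtx j)) * if vtx j = v then 1 else 0)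
          = (R v : ℝ) / 2 := by
        have h2 : ∀ j, finit (Sum.inr j) * (sgT (R (vtx j)) * if vtx j = v then 1 else 0)
            = (fun u => (R u : ℝ) / 2 * if u = v then 1 else 0) (vtx j) := by
          intro j
          have := sgT_mul (R (vtx j))
          simp only [finit, Sum.elim_inr]
          linear_combination (if vtx j = v then (1 : ℝ) else 0) / 2 * this
        simp only [h2]
        rw [hsumS (fun u => (R u : ℝ) / 2 * if u = v then 1 else 0) (by
          intro u hu; simp [hu])]
        simp
      rw [h1, hRex]
      simp [finit, dt]
    · rw [excess_inr]
      have h2 : ∀ j, finit (Sum.inr j) * sgT (R (vtx j))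
            = (fun u => (R u : ℝ) / 2) (vtx j) := by
          intro j
          have := sgT_mul (R (vtx j))
          simp only [finit, Sum.elim_inr]
          linear_combination this / 2
      simp only [h2]
      rw [hsumS (fun u => (R u : ℝ) / 2) (by intro u hu; simp [hu]), hRsum]
      simp [dt]
  have hR1 : ∀ j, (1 : ℝ) ≤ |(R (vtx j) : ℝ)| := fun j => by
    have := Int.one_le_abs (hvR j)
    exact_mod_cast this
  have hhalf : ∀ a, 1 / 2 ≤ finit a - lot a ∧ 1 / 2 ≤ hit a - finit a := by
    rintro (e | j)
    · have : (lo e : ℝ) + 1 ≤ hi e := by exact_mod_cast hlohi e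
      simp only [finit, lot, hit, Sum.elim_inl]
      constructor <;> linarith
    · have := hR1 j
      simp only [finit, lot, hit, Sum.elim_inr]
      push_cast
      constructor <;> linarith
  have hUr : (2 : ℝ) ≤ U := by exact_mod_cast hU
  have hmr : (2 : ℝ) ≤ m := by exact_mod_cast hm
  set W : ℝ := ((4 * m * U ^ 2 : ℕ) : ℝ) with hW
  have hWe : W = 4 * m * U ^ 2 := by rw [hW]; push_cast; ring
  have hmUr : (4 : ℝ) ≤ m * U := by nlinarith
  have hW8 : 8 * (m : ℝ) * U ≤ W := by rw [hWe]; nlinarith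
  have hWU : 8 * (U : ℝ) ^ 2 ≤ W := by rw [hWe]; nlinarith [sq_nonneg (U : ℝ)]
  have hW32 : 32 ≤ W := by nlinarith
  have hcard : Fintype.card (E ⊕ Fin S.card) = m + S.card := by simp [hmcard]
  have hNr : (2 : ℝ) ≤ ((m + S.card : ℕ) : ℝ) := by
    exact_mod_cast hm.trans (Nat.le_add_right _ _)
  have hlog : 1 ≤ Real.log (((m + S.card : ℕ) : ℝ) * W) := by
    rw [Real.le_log_iff_exp_le (by positivity)]
    have := Real.exp_one_lt_d9
    nlinarith
  have hbd : ∀ g, IsFeasible (tlT tail vtx R) (hdT head vtx R) (fun w => (dt w : ℝ))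
      (fun a => (lot a : ℝ)) (fun a => (hit a : ℝ)) g →
      fcost (fun a => (ct a : ℝ)) finit - (((m + S.card : ℕ) : ℝ) * W) ^ 2
        ≤ fcost (fun a => (ct a : ℝ)) g := by
    intro g hg
    have h1 : fcost (fun a => (ct a : ℝ)) finit - fcost (fun a => (ct a : ℝ)) g
        ≤ ((m + S.card : ℕ) : ℝ) * W ^ 2 := by
      unfold fcost
      rw [← Finset.sum_sub_distrib]
      calc _ ≤ ∑ a : E ⊕ Fin S.card, W ^ 2 := by
            refine Finset.sum_le_sum fun a _ => ?_
            have hb := hg.2 a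
            rw [← mul_sub]
            rcases a with e | j
            · simp only [ct, lot, hit, finit, Sum.elim_inl] at hb ⊢
              have a1 : |(c e : ℝ)| ≤ U := by exact_mod_cast hc e
              have a2 : |(lo e : ℝ)| ≤ U := by exact_mod_cast hlo e
              have a3 : |(hi e : ℝ)| ≤ U := by exact_mod_cast hhi e
              have a4 := abs_le.1 a2
              have a5 := abs_le.1 a3
              have a6 : |((lo e : ℝ) + hi e) / 2 - g (Sum.inl e)| ≤ 2 * U := by
                rw [abs_le]; constructor <;> linarith
              calc _ ≤ |(c e : ℝ) * (((lo e : ℝ) + hi e) / 2 - g (Sum.inl e))| := le_abs_self _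
                _ = |(c e : ℝ)| * |((lo e : ℝ) + hi e) / 2 - g (Sum.inl e)| := abs_mul _ _
                _ ≤ U * (2 * U) := mul_le_mul a1 a6 (abs_nonneg _) (by linarith)
                _ ≤ W ^ 2 := by nlinarith
            · simp only [ct, lot, hit, finit, Sum.elim_inr] at hb ⊢
              have a1 : |(R (vtx j) : ℝ)| ≤ 4 * m * U := by exact_mod_cast hRb (vtx j)
              have a2 : ((4 * m * U ^ 2 : ℤ) : ℝ) = W := by rw [hWe]; push_cast; ring
              have a3 := hb.1
              push_cast at a3
              rw [a2, pow_two]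
              refine mul_le_mul_of_nonneg_left ?_ (by linarith)
              nlinarith
        _ = _ := by rw [Finset.sum_const, Finset.card_univ, hcard, nsmul_eq_mul]
    have h2 : ((m + S.card : ℕ) : ℝ) * W ^ 2 ≤ (((m + S.card : ℕ) : ℝ) * W) ^ 2 := by
      rw [mul_pow]
      refine mul_le_mul_of_nonneg_right ?_ (sq_nonneg _)
      nlinarith
    linarith
  have hfin : IsFeasible (tlT tail vtx R) (hdT head vtx R) (fun w => (dt w : ℝ))
      (fun a => (lot a : ℝ)) (fun a => (hit a : ℝ)) finit :=
    ⟨hex, fun a => ⟨by linarith [(hhalf a).1], by linarith [(hhalf a).2]⟩⟩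
  refine ⟨S.card, Finset.card_le_univ _, tlT tail vtx R, hdT head vtx R, dt, ct, lot, hit, finit,
    fun e => ⟨rfl, rfl⟩, ?_, ?_, ?_, fun e => ⟨rfl, rfl, rfl⟩, hex, ?_, ?_, ?_⟩
  · intro j
    by_cases h : 0 < R (vtx j)
    · right; simp [hdT, h]
    · left; simp [tlT, h]
  · rintro (v | ⟨⟩)
    · have := hd v
      simp only [dt, Sum.elim_inl]
      linarith
    · simp only [dt, Sum.elim_inr, abs_zero]
      linarith
  · rintro (e | j)
    · simp only [ct, lot, hit, Sum.elim_inl]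
      have := hc e
      have := hlo e
      have := hhi e
      refine ⟨?_, ?_, ?_⟩ <;> linarith
    · simp only [ct, lot, hit, Sum.elim_inr, abs_zero, abs_abs]
      have := hRb (vtx j)
      refine ⟨?_, ?_, ?_⟩
      · rw [abs_of_nonneg (by positivity)]
      · positivity
      · linarith
  · intro a
    have := hhalf a
    constructor <;> linarith
  · refine phi_bound (m + S.card) hcard W _ _ _ _ _ hlog ?_ ?_ (fun a => (hhalf a).1)
      (fun a => (hhalf a).2)
    · rw [sub_nonneg]
      refine csInf_le ⟨fcost (fun a => (ct a : ℝ)) finit - (((m + S.card : ℕ) : ℝ) * W) ^ 2, ?_⟩ ⟨finit, hfin, rfl⟩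
      rintro x ⟨g, hg, rfl⟩
      exact hbd g hg
    · have := le_csInf (s := {x : ℝ | ∃ g : E ⊕ Fin S.card → ℝ,
              IsFeasible (tlT tail vtx R) (hdT head vtx R) (fun w => (dt w : ℝ))
                (fun a => (lot a : ℝ))
                (fun a => (hit a : ℝ)) g ∧ fcost (fun a => (ct a : ℝ)) g = x})
        ⟨_, finit, hfin, rfl⟩ (by
          rintro x ⟨g, hg, rfl⟩
          exact hbd g hg)
      linarith
  · intro hfe ft hft hopt
    refine part_b tail head vtx R _ _ _ _ U W (fun e => by exact_mod_cast hc e) ?_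
      (fun w => (dt w : ℝ)) (fun a => (ct a : ℝ)) (fun a => (lot a : ℝ)) (fun a => (hit a : ℝ))
      (fun _ => rfl) ?_ (fun _ => rfl) ?_ (fun _ => rfl) ?_ (fun _ => rfl) ?_ hfe ft hft hopt
    · rw [← hmcard]; nlinarith
    · simp [dt]
    · intro j; simp only [ct, Sum.elim_inr]; rw [hWe]; push_cast; ring
    · intro j; simp [lot]
    · intro j; simp only [hit, Sum.elim_inr]; exact_mod_cast abs_nonneg _
end
end

section
/- (Sampling sparsifies an expander's cuts.) Let G be an undirected multigraph on finite vertex set X with no self-loops that is a ψ-expander for some ψ ∈ (0,1], with deg_G(v) ≥ Δ_min ≥ 1 for every v ∈ X. Let C ≥ 1 and let m ≥ 2 satisfy m ≥ |X| and m ≥ |E(G)|. Set p := min(96·C·log(m)/(ψ·Δ_min), 1), and form a random subgraph H of G by retaining each edge of G independently with probability p. Then with probability at least 1 − 4·m^{−2C}, every subset S ⊆ X satisfies (1/2)·|E_H(S, X∖S)|/p ≤ |E_G(S, X∖S)| ≤ 2·|E_H(S, X∖S)|/p. -/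
open Finset MeasureTheory
open scoped Classical

noncomputable section

/-- Degree of `v` in the multigraph with endpoint maps `a, b`, restricted to the edges
satisfying `P`. -/
def degIn {X E : Type} [Fintype E] (a b : E → X) (P : E → Prop) (v : X) : ℕ :=
  (univ.filter fun e => P e ∧ (a e = v ∨ b e = v)).card

/-- Volume of a vertex set `S`: the sum of degrees of its vertices. -/
def volIn {X E : Type} [Fintype E] (a b : E → X) (P : E → Prop) (S : Finset X) : ℕ :=
  ∑ v ∈ S, degIn a b P v

/-- Number of edges (satisfying `P`) with exactly one endpoint in `S`. -/
def cutIn {X E : Type} [Fintype E] (a b : E → X) (P : E → Prop) (S : Finset X) : ℕ :=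
  (univ.filter fun e => P e ∧ ((a e ∈ S ∧ b e ∉ S) ∨ (a e ∉ S ∧ b e ∈ S))).card

/-- Bernoulli measure. -/
def bern (p : ℝ) : Measure Bool :=
  ENNReal.ofReal p • Measure.dirac true + ENNReal.ofReal (1 - p) • Measure.dirac false

lemma bern_prob (p : ℝ) (h0 : 0 ≤ p) (h1 : p ≤ 1) : IsProbabilityMeasure (bern p) := by
  constructor
  simp only [bern, Measure.add_apply, Measure.smul_apply, measure_univ, smul_eq_mul, mul_one]
  rw [← ENNReal.ofReal_add h0 (by linarith)]
  simp

lemma bern_integral (p : ℝ) (h0 : 0 ≤ p) (h1 : p ≤ 1) (f : Bool → ℝ) :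
    ∫ x, f x ∂(bern p) = p * f true + (1 - p) * f false := by
  unfold bern
  rw [integral_add_measure, integral_smul_measure, integral_smul_measure, integral_dirac,
    integral_dirac, ENNReal.toReal_ofReal h0, ENNReal.toReal_ofReal (by linarith)]
  · simp
  · exact (Integrable.of_finite).smul_measure (by simp)
  · exact (Integrable.of_finite).smul_measure (by simp)

/-- Number of retained edges satisfying `Q`. -/
def cnt {E : Type} [Fintype E] (Q : E → Prop) (ω : E → Bool) : ℝ :=
  ((univ.filter fun e => ω e = true ∧ Q e).card : ℝ)

lemma cnt_mgf {E : Type} [Fintype E] (Q : E → Prop) (p : ℝ) (h0 : 0 ≤ p) (h1 : p ≤ 1) (t : ℝ) :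
    ProbabilityTheory.mgf (cnt Q) (Measure.pi fun _ : E => bern p) t
      ≤ Real.exp (p * ((univ.filter fun e => Q e).card : ℝ) * (Real.exp t - 1)) := by
  have := bern_prob p h0 h1
  have hprod : ∀ ω : E → Bool, Real.exp (t * cnt Q ω)
      = ∏ e, (fun (e : E) (x : Bool) => if x = true ∧ Q e then Real.exp t else 1) e (ω e) := by
    intro ω
    rw [Finset.prod_ite]
    simp [cnt, mul_comm t, Real.exp_nat_mul]
  unfold ProbabilityTheory.mgf
  simp_rw [hprod]
  rw [integral_fintype_prod_eq_prod
    (f := fun (e : E) (x : Bool) => if x = true ∧ Q e then Real.exp t else 1)]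
  have : ∀ e : E, ∫ x, (if x = true ∧ Q e then Real.exp t else 1) ∂(bern p)
      = if Q e then 1 + p * (Real.exp t - 1) else 1 := by
    intro e
    rw [bern_integral p h0 h1]
    by_cases h : Q e <;> simp [h] ; ring
  simp_rw [this]
  rw [Finset.prod_ite]
  simp only [prod_const, one_pow, mul_one]
  have e1 : p * ((univ.filter fun e => Q e).card : ℝ) * (Real.exp t - 1)
    = ((univ.filter fun e => Q e).card : ℝ) * (p * (Real.exp t - 1)) := by ring
  rw [e1, Real.exp_nat_mul]
  apply pow_le_pow_left₀
  · nlinarith [Real.exp_pos t]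
  · linarith [Real.add_one_le_exp (p * (Real.exp t - 1))]

lemma cnt_upper {E : Type} [Fintype E] (Q : E → Prop) (p : ℝ) (h0 : 0 ≤ p) (h1 : p ≤ 1) :
    (Measure.pi fun _ : E => bern p).real
      {ω | 2 * (p * ((univ.filter fun e => Q e).card : ℝ)) ≤ cnt Q ω}
      ≤ Real.exp (-(p * ((univ.filter fun e => Q e).card : ℝ)) / 8) := by
  have := bern_prob p h0 h1
  refine (ProbabilityTheory.measure_ge_le_exp_mul_mgf (t := Real.log 2) _
    (Real.log_nonneg (by norm_num)) Integrable.of_finite).trans ?_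
  refine (mul_le_mul_of_nonneg_left (cnt_mgf Q p h0 h1 _) (Real.exp_pos _).le).trans ?_
  rw [← Real.exp_add, Real.exp_le_exp, Real.exp_log (by norm_num)]
  have : 0 ≤ p * ((univ.filter fun e => Q e).card : ℝ) := by positivity
  nlinarith [Real.log_two_gt_d9]

lemma cnt_lower {E : Type} [Fintype E] (Q : E → Prop) (p : ℝ) (h0 : 0 ≤ p) (h1 : p ≤ 1) :
    (Measure.pi fun _ : E => bern p).real
      {ω | cnt Q ω ≤ (p * ((univ.filter fun e => Q e).card : ℝ)) / 2}
      ≤ Real.exp (-(p * ((univ.filter fun e => Q e).card : ℝ)) / 8) := by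
  have := bern_prob p h0 h1
  refine (ProbabilityTheory.measure_le_le_exp_mul_mgf (t := -Real.log 2) _
    (by linarith [Real.log_nonneg (x := 2) (by norm_num)]) Integrable.of_finite).trans ?_
  refine (mul_le_mul_of_nonneg_left (cnt_mgf Q p h0 h1 _) (Real.exp_pos _).le).trans ?_
  rw [← Real.exp_add, Real.exp_le_exp, Real.exp_neg, Real.exp_log (by norm_num)]
  have : 0 ≤ p * ((univ.filter fun e => Q e).card : ℝ) := by positivity
  nlinarith [Real.log_two_lt_d9]

lemma sum_q {X : Type} [Fintype X] (q : ℝ) (hq : 0 ≤ q) (m : ℝ)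
    (hmX : (Fintype.card X : ℝ) ≤ m) (hmq : m * q ≤ 1) :
    ∑ S ∈ (univ : Finset (Finset X)).filter (fun S => S.Nonempty), q ^ S.card ≤ 2 * (m * q) := by
  have h1 : ∑ S : Finset X, q ^ S.card = (q + 1) ^ Fintype.card X := by
    simpa using Fintype.sum_pow_mul_eq_add_pow X q 1
  have h2 := Finset.sum_filter_add_sum_filter_not (univ : Finset (Finset X))
    (fun S => S.Nonempty) (fun S => q ^ S.card)
  have h3 : ∑ S ∈ (univ : Finset (Finset X)).filter (fun S => ¬ S.Nonempty), q ^ S.card = 1 := by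
    have : (univ : Finset (Finset X)).filter (fun S => ¬ S.Nonempty) = {∅} := by
      ext S; simp
    rw [this]; simp
  have h4 : (q + 1) ^ Fintype.card X ≤ Real.exp (m * q) := by
    calc (q + 1) ^ Fintype.card X ≤ (Real.exp q) ^ Fintype.card X :=
          pow_le_pow_left₀ (by linarith) (Real.add_one_le_exp q) _
      _ = Real.exp (Fintype.card X * q) := (Real.exp_nat_mul _ _).symm
      _ ≤ _ := Real.exp_le_exp.2 (by gcongr)
  have hm0 : 0 ≤ m * q := mul_nonneg ((Nat.cast_nonneg _).trans hmX) hq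
  have h5 := Real.abs_exp_sub_one_le (x := m * q) (by rw [abs_of_nonneg hm0]; exact hmq)
  rw [abs_of_nonneg hm0] at h5
  have := (abs_le.1 h5).2
  linarith

lemma sum_q2 {X : Type} [Fintype X] (q : ℝ) (hq : 0 ≤ q) (m : ℝ)
    (hmX : (Fintype.card X : ℝ) ≤ m) (hmq : m * q ≤ 1) :
    ∑ S ∈ (univ : Finset (Finset X)).filter (fun S => S.Nonempty ∧ S ≠ univ),
      (q ^ S.card + q ^ Sᶜ.card) ≤ 4 * (m * q) := by
  have h := sum_q (X := X) q hq m hmX hmq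
  rw [Finset.sum_add_distrib]
  have a1 : ∑ S ∈ (univ : Finset (Finset X)).filter (fun S => S.Nonempty ∧ S ≠ univ), q ^ S.card
      ≤ ∑ S ∈ (univ : Finset (Finset X)).filter (fun S => S.Nonempty), q ^ S.card := by
    apply Finset.sum_le_sum_of_subset_of_nonneg
    · intro S; simp; tauto
    · intros; positivity
  have a2 : ∑ S ∈ (univ : Finset (Finset X)).filter (fun S => S.Nonempty ∧ S ≠ univ), q ^ Sᶜ.card
      = ∑ S ∈ (univ : Finset (Finset X)).filter (fun S => S.Nonempty ∧ S ≠ univ), q ^ S.card := by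
    refine Finset.sum_nbij' (fun S => Sᶜ) (fun S => Sᶜ) ?_ ?_ ?_ ?_ ?_
    · intro S; simp [Finset.nonempty_iff_ne_empty]; tauto
    · intro S; simp [Finset.nonempty_iff_ne_empty]; tauto
    · simp
    · simp
    · simp
  linarith

/-- Edge crosses the cut. -/
def crosses {X E : Type} (a b : E → X) (S : Finset X) (e : E) : Prop :=
  (a e ∈ S ∧ b e ∉ S) ∨ (a e ∉ S ∧ b e ∈ S)

lemma cut_true {X E : Type} [Fintype E] (a b : E → X) (S : Finset X) :
    cutIn a b (fun _ => True) S = (univ.filter fun e => crosses a b S e).card := by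
  simp only [cutIn, true_and]
  congr 1
  ext e
  rw [Finset.mem_filter, Finset.mem_filter]
  rfl

lemma cut_omega {X E : Type} [Fintype E] (a b : E → X) (S : Finset X) (ω : E → Bool) :
    (cutIn a b (fun e => ω e = true) S : ℝ) = cnt (crosses a b S) ω := by
  simp only [cutIn, cnt]
  congr 2
  ext e
  rw [Finset.mem_filter, Finset.mem_filter]
  rfl

/-- sampling sparsifies an expander's cuts: retaining each edge of a
`ψ`-expander independently with probability `p = min(96 C log m/(ψ Δ_min), 1)` yields,
with probability at least `1 - 4 m^{-2C}`, a subgraph whose cuts approximate all cuts of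
`G` within a factor `2` after rescaling by `1/p`. -/
theorem stmt10
    {X E : Type} [Fintype X] [Fintype E]
    (a b : E → X) (hab : ∀ e, a e ≠ b e)
    (ψ : ℝ) (hψ0 : 0 < ψ) (hψ1 : ψ ≤ 1)
    (Δmin : ℝ) (hΔmin : 1 ≤ Δmin)
    (hdeg : ∀ v, Δmin ≤ (degIn a b (fun _ => True) v : ℝ))
    (hexp : ∀ S : Finset X, S.Nonempty → S ≠ univ →
      ψ * min (volIn a b (fun _ => True) S : ℝ) (volIn a b (fun _ => True) Sᶜ : ℝ)
        ≤ (cutIn a b (fun _ => True) S : ℝ))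
    (C : ℝ) (hC : 1 ≤ C)
    (m : ℕ) (hm : 2 ≤ m) (hmX : Fintype.card X ≤ m) (hmE : Fintype.card E ≤ m) :
    let p : ℝ := min (96 * C * Real.log m / (ψ * Δmin)) 1
    let μ : Measure (E → Bool) := Measure.pi fun _ =>
      ENNReal.ofReal p • Measure.dirac true + ENNReal.ofReal (1 - p) • Measure.dirac false
    ENNReal.ofReal (1 - 4 * (m : ℝ) ^ (-(2 * C))) ≤
      μ {ω : E → Bool | ∀ S : Finset X,
        1 / 2 * (cutIn a b (fun e => ω e = true) S : ℝ) / p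
            ≤ (cutIn a b (fun _ => True) S : ℝ) ∧
          (cutIn a b (fun _ => True) S : ℝ)
            ≤ 2 * (cutIn a b (fun e => ω e = true) S : ℝ) / p} := by
  intro p μ
  have hm1 : (1 : ℝ) < m := by exact_mod_cast hm
  have hm2 : (2 : ℝ) ≤ m := by exact_mod_cast hm
  have hlog : 0 < Real.log m := Real.log_pos hm1
  have hx0 : 0 < 96 * C * Real.log m / (ψ * Δmin) := by positivity
  have hp0 : 0 < p := lt_min hx0 one_pos
  have hp1 : p ≤ 1 := min_le_right _ _
  have := bern_prob p hp0.le hp1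
  have hμ : μ = Measure.pi fun _ : E => bern p := rfl
  clear_value μ
  subst hμ
  by_cases hpe : p = 1
  · have hone : (Measure.pi fun _ : E => bern p) {fun _ => true} = 1 := by
      rw [Measure.pi_singleton]
      simp [bern, hpe]
    calc ENNReal.ofReal (1 - 4 * (m : ℝ) ^ (-(2 * C))) ≤ 1 := by
          rw [ENNReal.ofReal_le_one]
          have : 0 ≤ (m : ℝ) ^ (-(2 * C)) := by positivity
          linarith
      _ = _ := hone.symm
      _ ≤ _ := by
          apply measure_mono
          intro ω hω
          rw [Set.mem_singleton_iff] at hω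
          subst hω
          intro S
          have : (0 : ℝ) ≤ (cutIn a b (fun _ => True) S : ℝ) := by positivity
          simp only [hpe, div_one]
          constructor <;> linarith
  · have hpx : p = 96 * C * Real.log m / (ψ * Δmin) := by
      rcases min_choice (96 * C * Real.log m / (ψ * Δmin)) 1 with h | h
      · exact h
      · exact absurd h hpe
    set ν := Measure.pi fun _ : E => bern p with hν
    set q : ℝ := (m : ℝ) ^ (-(12 * C)) with hq
    have hq0 : 0 < q := by positivity
    have hqle1 : q ≤ 1 := Real.rpow_le_one_of_one_le_of_nonpos hm1.le (by linarith)
    have hmq : m * q = (m : ℝ) ^ (1 - 12 * C) := by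
      rw [sub_eq_add_neg, Real.rpow_add (by linarith), Real.rpow_one]
    have hmq1 : m * q ≤ 1 := by
      rw [hmq]; exact Real.rpow_le_one_of_one_le_of_nonpos hm1.le (by linarith)
    have h2mq : 2 * (m * q) ≤ (m : ℝ) ^ (-(2 * C)) := by
      calc 2 * (m * q) ≤ m * (m * q) := by gcongr
        _ = (m : ℝ) ^ (1 + (1 - 12 * C)) := by
          rw [Real.rpow_add (by linarith), Real.rpow_one, hmq]
        _ ≤ _ := Real.rpow_le_rpow_of_exponent_le hm1.le (by linarith)
    have hvol : ∀ S : Finset X, Δmin * (S.card : ℝ) ≤ (volIn a b (fun _ => True) S : ℝ) := by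
      intro S
      unfold volIn
      push_cast
      calc Δmin * (S.card : ℝ) = ∑ v ∈ S, Δmin := by simp [mul_comm]
        _ ≤ _ := Finset.sum_le_sum fun v _ => hdeg v
    -- bad events
    let F := (univ : Finset (Finset X)).filter (fun S => S.Nonempty ∧ S ≠ univ)
    let c : Finset X → ℝ := fun S => ((univ.filter fun e => crosses a b S e).card : ℝ)
    let B : Finset X → Set (E → Bool) := fun S =>
      {ω | 2 * (p * c S) ≤ cnt (crosses a b S) ω} ∪ {ω | cnt (crosses a b S) ω ≤ (p * c S) / 2}
    have hB : ∀ S ∈ F, ν.real (B S) ≤ 2 * (q ^ S.card + q ^ Sᶜ.card) := by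
      intro S hS
      have hS' : S.Nonempty ∧ S ≠ univ := by simpa [F] using hS
      have hexp' := hexp S hS'.1 hS'.2
      rw [cut_true] at hexp'
      have key : ∀ k : ℕ, ψ * (Δmin * k) ≤ c S → Real.exp (-(p * c S) / 8) ≤ q ^ k := by
        intro k hk
        have e1 : q ^ k = Real.exp (-(12 * C * Real.log m * k)) := by
          rw [hq, Real.rpow_def_of_pos (by linarith), ← Real.exp_nat_mul]
          congr 1; ring
        rw [e1, Real.exp_le_exp]
        have : 96 * C * Real.log m * k ≤ p * c S := by
          calc 96 * C * Real.log m * k = p * (ψ * (Δmin * k)) := by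
                rw [hpx]; field_simp
            _ ≤ _ := by gcongr
        linarith
      have hexpb : Real.exp (-(p * c S) / 8) ≤ q ^ S.card + q ^ Sᶜ.card := by
        have p1 : 0 ≤ q ^ S.card := by positivity
        have p2 : 0 ≤ q ^ Sᶜ.card := by positivity
        rcases min_choice (volIn a b (fun _ => True) S : ℝ)
          (volIn a b (fun _ => True) Sᶜ : ℝ) with h | h
        · rw [h] at hexp'
          have := key S.card (le_trans (mul_le_mul_of_nonneg_left (hvol S) hψ0.le) hexp')
          linarith
        · rw [h] at hexp'
          have := key Sᶜ.card (le_trans (mul_le_mul_of_nonneg_left (hvol Sᶜ) hψ0.le) hexp')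
          linarith
      have u := cnt_upper (crosses a b S) p hp0.le hp1
      have l := cnt_lower (crosses a b S) p hp0.le hp1
      have := measureReal_union_le (μ := ν) {ω | 2 * (p * c S) ≤ cnt (crosses a b S) ω}
        {ω | cnt (crosses a b S) ω ≤ (p * c S) / 2}
      linarith
    have hU : ν.real (⋃ S ∈ F, B S) ≤ 4 * (m : ℝ) ^ (-(2 * C)) := by
      calc ν.real (⋃ S ∈ F, B S) ≤ ∑ S ∈ F, ν.real (B S) := measureReal_biUnion_finset_le _ _
        _ ≤ ∑ S ∈ F, 2 * (q ^ S.card + q ^ Sᶜ.card) := Finset.sum_le_sum hB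
        _ = 2 * ∑ S ∈ F, (q ^ S.card + q ^ Sᶜ.card) := by rw [Finset.mul_sum]
        _ ≤ 2 * (4 * (m * q)) := by
          gcongr
          exact sum_q2 q hq0.le m (by exact_mod_cast hmX) hmq1
        _ ≤ _ := by linarith
    have hcompl : ν.real (⋃ S ∈ F, B S)ᶜ = 1 - ν.real (⋃ S ∈ F, B S) :=
      probReal_compl_eq_one_sub (Set.toFinite _).measurableSet
    calc ENNReal.ofReal (1 - 4 * (m : ℝ) ^ (-(2 * C)))
        ≤ ENNReal.ofReal (ν.real (⋃ S ∈ F, B S)ᶜ) := ENNReal.ofReal_le_ofReal (by linarith)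
      _ = ν (⋃ S ∈ F, B S)ᶜ := by simp
      _ ≤ _ := by
        apply measure_mono
        intro ω hω S
        rw [cut_true, cut_omega]
        by_cases hS : S.Nonempty ∧ S ≠ univ
        · have hSF : S ∈ F := by simpa [F] using hS
          have hnot : ω ∉ B S := fun h => hω (Set.mem_biUnion hSF h)
          simp only [B, Set.mem_union, Set.mem_ofPred_eq, not_or, not_le] at hnot
          obtain ⟨h1, h2⟩ := hnot
          constructor
          · rw [div_le_iff₀ hp0]; linarith
          · rw [le_div_iff₀ hp0]; linarith
        · have hz : ∀ e, ¬ crosses a b S e := by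
            intro e
            rw [not_and_or, Finset.not_nonempty_iff_eq_empty, not_not] at hS
            rcases hS with h | h <;> simp [crosses, h]
          simp [cnt, hz]
end
end

section
/- Let G be an undirected multigraph on finite vertex set X with no self-loops that is a ψ-expander for some ψ ∈ (0,1]. Let H be a subgraph of G (same vertex set, E(H) ⊆ E(G), same endpoints), let p ∈ (0,1], and suppose every subset S ⊆ X satisfies (1/2)·|E_H(S, X∖S)|/p ≤ |E_G(S, X∖S)| ≤ 2·|E_H(S, X∖S)|/p. Then H is a (ψ/4)-expander. -/
open Finset
open scoped Classical

noncomputable section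

/-- if a subgraph `H` (given by the kept edges `keep`) of a
`ψ`-expander `G` approximates all cuts of `G` within a factor `2` after rescaling by
`1/p`, then `H` is a `ψ/4`-expander. -/
theorem stmt11
    {X E : Type} [Fintype X] [Fintype E]
    (a b : E → X) (hab : ∀ e, a e ≠ b e)
    (keep : E → Prop)
    (ψ : ℝ) (hψ0 : 0 < ψ) (hψ1 : ψ ≤ 1)
    (p : ℝ) (hp0 : 0 < p) (hp1 : p ≤ 1)
    (hexpG : ∀ S : Finset X, S.Nonempty → S ≠ univ →
      ψ * min (volIn a b (fun _ => True) S : ℝ) (volIn a b (fun _ => True) Sᶜ : ℝ)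
        ≤ (cutIn a b (fun _ => True) S : ℝ))
    (hsand : ∀ S : Finset X,
      1 / 2 * (cutIn a b keep S : ℝ) / p ≤ (cutIn a b (fun _ => True) S : ℝ) ∧
        (cutIn a b (fun _ => True) S : ℝ) ≤ 2 * (cutIn a b keep S : ℝ) / p) :
    ∀ S : Finset X, S.Nonempty → S ≠ univ →
      ψ / 4 * min (volIn a b keep S : ℝ) (volIn a b keep Sᶜ : ℝ)
        ≤ (cutIn a b keep S : ℝ) := by
  have hdeg : ∀ (P : E → Prop) (v : X), cutIn a b P {v} = degIn a b P v := by
    intro P v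
    unfold cutIn degIn
    congr 1
    ext e
    have := hab e
    simp only [mem_filter, mem_univ, true_and, mem_singleton]
    constructor
    · rintro ⟨h, h1 | h1⟩
      · exact ⟨h, Or.inl h1.1⟩
      · exact ⟨h, Or.inr h1.2⟩
    · rintro ⟨h, h1 | h1⟩
      · exact ⟨h, Or.inl ⟨h1, fun h2 => this (h1.trans h2.symm)⟩⟩
      · exact ⟨h, Or.inr ⟨fun h2 => this (h2.trans h1.symm), h1⟩⟩
  have hvol : ∀ S : Finset X,
      (volIn a b keep S : ℝ) ≤ 2 * p * (volIn a b (fun _ => True) S : ℝ) := by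
    intro S
    unfold volIn
    push_cast
    rw [Finset.mul_sum]
    refine Finset.sum_le_sum fun v _ => ?_
    have h := (hsand {v}).1
    rw [hdeg, hdeg, div_le_iff₀ hp0] at h
    linarith
  intro S h1 h2
  have hG := hexpG S h1 h2
  have hs := (hsand S).2
  rw [le_div_iff₀ hp0] at hs
  have hm : min (volIn a b keep S : ℝ) (volIn a b keep Sᶜ : ℝ) ≤
      2 * p * min (volIn a b (fun _ => True) S : ℝ) (volIn a b (fun _ => True) Sᶜ : ℝ) := by
    rw [mul_min_of_nonneg _ _ (by positivity)]
    exact min_le_min (hvol S) (hvol Sᶜ)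
  have k1 := mul_le_mul_of_nonneg_left hm (by positivity : 0 ≤ ψ / 4)
  have k2 := mul_le_mul_of_nonneg_right hG hp0.le
  linarith
end
end

section
/- (Validity of rerouting a circulation through a spanner embedding.) Let C be a directed multigraph on vertex set V with arc set Ê (each arc having distinct endpoints) and lengths ℓ ∈ ℝ^{Ê}_{>0}, and let S be a subgraph of C with arc set E_S ⊆ Ê. Let γ_l ≥ 1 and let Π assign to each ê ∈ Ê a vector Π(ê) ∈ {−1,0,1}^{E_S} with at most γ_l nonzero entries such that B_S^⊤Π(ê) = b_ê and such that every ê′ ∈ E_S with Π(ê)_{ê′} ≠ 0 satisfies ℓ_{ê′} ≈₂ ℓ_ê. Let c ∈ ℝ^{Ê} be a circulation on C (B_C^⊤c = 0) and w ∈ ℝ^{Ê}_{>0} satisfy |ℓ_ê·c_ê| ≤ w_ê for all ê. Define c^S := Σ_{ê∈Ê} c_ê·Π(ê) ∈ ℝ^{E_S} and w^S := 2·Σ_{ê∈Ê} w_ê·|Π(ê)| ∈ ℝ^{E_S}. Then: (a) c^S is a circulation on S, i.e. B_S^⊤c^S = 0; (b) |ℓ_{ê′}·c^S_{ê′}| ≤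 w^S_{ê′} for every ê′ ∈ E_S; and (c) ‖w‖₁ ≤ ‖w^S‖₁ ≤ 2·γ_l·‖w‖₁. -/
open Finset
open scoped Classical

noncomputable section

/-- validity of rerouting a circulation through a spanner embedding:
given an embedding `emb` of each arc `ê` of the core graph `C` as a signed path vector in
the spanner `S` (arc set `ES`), with length ≤ `γl` and `2`-approximate lengths on its
support, the rerouted circulation `c^S = Σ_ê c_ê · emb ê` is a circulation on `S`, the
rerouted widths `w^S = 2 Σ_ê w_ê |emb ê|` are valid length upper bounds, and
`‖w‖₁ ≤ ‖w^S‖₁ ≤ 2 γl ‖w‖₁`. -/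
theorem stmt12
    {V Eh : Type} [Fintype V] [Fintype Eh] [DecidableEq V]
    (tail head : Eh → V) (hth : ∀ e, tail e ≠ head e)
    (ℓ : Eh → ℝ) (hℓ : ∀ e, 0 < ℓ e)
    (ES : Finset Eh)
    (γl : ℝ) (hγl : 1 ≤ γl)
    (emb : Eh → Eh → ℝ)
    (hval : ∀ e e', emb e e' = -1 ∨ emb e e' = 0 ∨ emb e e' = 1)
    (hsupp : ∀ e e', emb e e' ≠ 0 → e' ∈ ES)
    (hcard : ∀ e, ((univ.filter fun e' => emb e e' ≠ 0).card : ℝ) ≤ γl)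
    (hpath : ∀ e v,
      (∑ e', emb e e' *
          ((if tail e' = v then (1 : ℝ) else 0) - if head e' = v then 1 else 0))
        = (if tail e = v then (1 : ℝ) else 0) - if head e = v then 1 else 0)
    (hlen : ∀ e e', emb e e' ≠ 0 → ℓ e / 2 ≤ ℓ e' ∧ ℓ e' ≤ 2 * ℓ e)
    (c w : Eh → ℝ)
    (hcirc : ∀ v,
      (∑ e, c e * ((if tail e = v then (1 : ℝ) else 0) - if head e = v then 1 else 0)) = 0)
    (hw : ∀ e, 0 < w e) (hwc : ∀ e, |ℓ e * c e| ≤ w e) :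
    (∀ v, (∑ e' ∈ ES, (∑ e, c e * emb e e') *
        ((if tail e' = v then (1 : ℝ) else 0) - if head e' = v then 1 else 0)) = 0) ∧
      (∀ e' ∈ ES, |ℓ e' * ∑ e, c e * emb e e'| ≤ 2 * ∑ e, w e * |emb e e'|) ∧
      ((∑ e, w e) ≤ ∑ e' ∈ ES, 2 * ∑ e, w e * |emb e e'|) ∧
      (∑ e' ∈ ES, 2 * ∑ e, w e * |emb e e'|) ≤ 2 * γl * ∑ e, w e := by
  have hz : ∀ e e', e' ∉ ES → emb e e' = 0 := fun e e' h => by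
    by_contra h2
    exact h (hsupp e e' h2)
  have hN : ∀ e, ∑ e' ∈ ES, |emb e e'| = ((univ.filter fun e' => emb e e' ≠ 0).card : ℝ) := by
    intro e
    rw [Finset.sum_subset (Finset.subset_univ ES)
      (fun x _ hx => by rw [hz e x hx, abs_zero]), Finset.card_filter]
    push_cast
    refine Finset.sum_congr rfl fun e' _ => ?_
    rcases hval e e' with h | h | h <;> simp [h]
  have hpos : ∀ e, (1 : ℝ) ≤ ((univ.filter fun e' => emb e e' ≠ 0).card : ℝ) := by
    intro e
    have : 0 < (univ.filter fun e' => emb e e' ≠ 0).card := by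
      rw [Finset.card_pos]
      by_contra hne
      have h0 : ∀ e', emb e e' = 0 := by
        intro e'
        by_contra h
        exact hne ⟨e', by simp [h]⟩
      have := hpath e (tail e)
      simp [h0, (hth e).symm] at this
    exact_mod_cast this
  have hsum : ∑ e' ∈ ES, 2 * ∑ e, w e * |emb e e'|
      = ∑ e, 2 * (w e * ((univ.filter fun e' => emb e e' ≠ 0).card : ℝ)) := by
    rw [← Finset.mul_sum, Finset.sum_comm, ← Finset.mul_sum]
    congr 1
    refine Finset.sum_congr rfl fun e _ => ?_
    rw [← Finset.mul_sum, hN]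
  refine ⟨?_, ?_, ?_, ?_⟩
  · intro v
    rw [Finset.sum_subset (Finset.subset_univ ES)
      (fun x _ hx => by simp [hz _ x hx])]
    refine Eq.trans ?_ (hcirc v)
    simp_rw [Finset.sum_mul]
    rw [Finset.sum_comm]
    refine Finset.sum_congr rfl fun e _ => ?_
    rw [← hpath e v, Finset.mul_sum]
    refine Finset.sum_congr rfl fun e' _ => ?_
    ring
  · intro e' _
    rw [Finset.mul_sum, Finset.mul_sum]
    refine (Finset.abs_sum_le_sum_abs _ _).trans (Finset.sum_le_sum fun e _ => ?_)
    by_cases h : emb e e' = 0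
    · simp [h]
    · have h1 := (hlen e e' h).2
      have h2 := hwc e
      rw [abs_mul, abs_of_pos (hℓ e)] at h2
      rw [abs_mul, abs_mul, abs_of_pos (hℓ e')]
      have h3 : ℓ e' * |c e| ≤ 2 * w e := by
        have := mul_le_mul_of_nonneg_right h1 (abs_nonneg (c e))
        linarith
      have := mul_le_mul_of_nonneg_right h3 (abs_nonneg (emb e e'))
      linarith
  · rw [hsum]
    refine Finset.sum_le_sum fun e _ => ?_
    nlinarith [hw e, hpos e]
  · rw [hsum, Finset.mul_sum]
    refine Finset.sum_le_sum fun e _ => ?_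
    nlinarith [mul_le_mul_of_nonneg_left (hcard e) (hw e).le]
end
end

section
/- (1/(n+1)-optimality implies exact optimality.) Consider a min-cost circulation instance on a directed multigraph G = (V,E) with n = |V|, integral capacities u ∈ ℤ^E with u_e ≥ 1, and integral costs c ∈ ℤ^E. Let f be a feasible integral circulation (f ∈ ℤ^E, 0 ≤ f ≤ u, and flow conservation at every vertex). Suppose there exists y ∈ ℝ^V such that every residual arc of G(f) has reduced cost with respect to y strictly greater than −1/(n+1); that is, for every arc e with f_e < u_e: c_e − y_{tail(e)} + y_{head(e)} > −1/(n+1), and for every arc e with f_e > 0: −c_e − y_{head(e)} + y_{tail(e)} > −1/(n+1). Then f is an exact minimizer: c^⊤f ≤ c^⊤f′ for every (not necessarily integral) circulation f′ with 0 ≤ f′ ≤ u. -/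
open Finset

theorem exists_shift {V : Type} [Fintype V] (y : V → ℝ) :
    ∃ t : ℝ, ∀ v, Int.fract (y v - t) ≤ 1 - 1 / ((Fintype.card V : ℝ) + 1) := by
  by_contra hcon
  push Not at hcon
  have hN : (0 : ℝ) < (Fintype.card V : ℝ) + 1 := by positivity
  choose g hg using fun k : Fin (Fintype.card V + 1) =>
    hcon ((k : ℕ) / ((Fintype.card V : ℝ) + 1))
  have hinj : Function.Injective g := by
    intro a b hab
    have ha := hg a
    have hb := hg b
    rw [hab] at ha
    have ha1 := Int.fract_lt_one (y (g b) - (a : ℕ) / ((Fintype.card V : ℝ) + 1))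
    have hb1 := Int.fract_lt_one (y (g b) - (b : ℕ) / ((Fintype.card V : ℝ) + 1))
    unfold Int.fract at ha hb ha1 hb1
    generalize ⌊y (g b) - (a : ℕ) / ((Fintype.card V : ℝ) + 1)⌋ = i at *
    generalize ⌊y (g b) - (b : ℕ) / ((Fintype.card V : ℝ) + 1)⌋ = j at *
    have hA : ((a : ℕ) : ℝ) / ((Fintype.card V : ℝ) + 1) * ((Fintype.card V : ℝ) + 1)
      = (a : ℕ) := by field_simp
    have hB : ((b : ℕ) : ℝ) / ((Fintype.card V : ℝ) + 1) * ((Fintype.card V : ℝ) + 1)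
      = (b : ℕ) := by field_simp
    have hC : 1 / ((Fintype.card V : ℝ) + 1) * ((Fintype.card V : ℝ) + 1) = 1 := by
      field_simp
    have h1 : (((a : ℕ) : ℤ) - (b : ℕ) + (i - j) * ((Fintype.card V : ℤ) + 1) : ℤ) < 1 := by
      have h : ((a : ℕ) : ℝ) / ((Fintype.card V : ℝ) + 1) - (b : ℕ) / ((Fintype.card V : ℝ) + 1)
        + (i - j) < 1 / ((Fintype.card V : ℝ) + 1) := by linarith
      have h' := mul_lt_mul_of_pos_right h hN
      rw [hC, add_mul, sub_mul, hA, hB] at h'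
      exact_mod_cast h'
    have h2 : -1 < (((a : ℕ) : ℤ) - (b : ℕ) + (i - j) * ((Fintype.card V : ℤ) + 1) : ℤ) := by
      have h : -(1 / ((Fintype.card V : ℝ) + 1)) < ((a : ℕ) : ℝ) / ((Fintype.card V : ℝ) + 1)
        - (b : ℕ) / ((Fintype.card V : ℝ) + 1) + (i - j) := by linarith
      have h' := mul_lt_mul_of_pos_right h hN
      rw [neg_mul, hC, add_mul, sub_mul, hA, hB] at h'
      exact_mod_cast h'
    have ha2 := a.2
    have hb2 := b.2
    have h0 : i - j = 0 := by
      generalize i - j = d at *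
      by_contra hd
      rcases lt_or_gt_of_ne hd with hd | hd
      · have : d * ((Fintype.card V : ℤ) + 1) ≤ -1 * ((Fintype.card V : ℤ) + 1) :=
          mul_le_mul_of_nonneg_right (by omega) (by positivity)
        omega
      · have : 1 * ((Fintype.card V : ℤ) + 1) ≤ d * ((Fintype.card V : ℤ) + 1) :=
          mul_le_mul_of_nonneg_right (by omega) (by positivity)
        omega
    rw [h0] at h1 h2
    apply Fin.ext
    omega
  have := Fintype.card_le_of_injective g hinj
  simp at this

theorem sum_potential {V E : Type} [Fintype V] [Fintype E] [DecidableEq V]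
    (h : E → V) (p : V → ℝ) (g : E → ℝ) :
    ∑ e, p (h e) * g e = ∑ v, p v * ∑ e ∈ univ.filter (fun e => h e = v), g e := by
  rw [← Finset.sum_fiberwise univ h]
  refine Finset.sum_congr rfl fun v _ => ?_
  rw [Finset.mul_sum]
  refine Finset.sum_congr rfl fun e he => ?_
  rw [(Finset.mem_filter.mp he).2]

/-- `1/(n+1)`-optimality implies exact optimality: if a feasible
integral circulation `f` admits a potential `y` under which every residual arc has
reduced cost strictly greater than `-1/(n+1)`, then `f` minimizes `cᵀf` among all
(real-valued) circulations. -/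
theorem stmt14
    {V E : Type} [Fintype V] [Fintype E] [DecidableEq V]
    (tail head : E → V)
    (u c : E → ℤ) (hu : ∀ e, 1 ≤ u e)
    (f : E → ℤ)
    (hfcap : ∀ e, 0 ≤ f e ∧ f e ≤ u e)
    (hfcons : ∀ v, (∑ e ∈ univ.filter (fun e => tail e = v), f e)
      = ∑ e ∈ univ.filter (fun e => head e = v), f e)
    (y : V → ℝ)
    (hfwd : ∀ e, f e < u e →
      -(1 / ((Fintype.card V : ℝ) + 1)) < (c e : ℝ) - y (tail e) + y (head e))
    (hbwd : ∀ e, 0 < f e →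
      -(1 / ((Fintype.card V : ℝ) + 1)) < -(c e : ℝ) - y (head e) + y (tail e)) :
    ∀ f' : E → ℝ,
      ((∀ e, 0 ≤ f' e ∧ f' e ≤ (u e : ℝ)) ∧
        ∀ v, (∑ e ∈ univ.filter (fun e => tail e = v), f' e)
          = ∑ e ∈ univ.filter (fun e => head e = v), f' e) →
      (∑ e, (c e : ℝ) * (f e : ℝ)) ≤ ∑ e, (c e : ℝ) * f' e := by
  rintro f' ⟨hcap, hcons⟩
  obtain ⟨t, ht⟩ := exists_shift y
  set p : V → ℤ := fun v => ⌊y v - t⌋ with hp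
  have hfr : ∀ v, Int.fract (y v - t) = y v - t - p v := fun v => rfl
  have h0 : ∀ v, 0 ≤ y v - t - p v := fun v => hfr v ▸ Int.fract_nonneg _
  have h1 : ∀ v, y v - t - p v ≤ 1 - 1 / ((Fintype.card V : ℝ) + 1) := fun v => hfr v ▸ ht v
  have hF : ∀ e, f e < u e → (0 : ℝ) ≤ (c e : ℝ) - p (tail e) + p (head e) := by
    intro e he
    have : (-1 : ℝ) < (c e : ℝ) - p (tail e) + p (head e) := by
      linarith [hfwd e he, h0 (tail e), h1 (head e)]
    have h' : (-1 : ℤ) < c e - p (tail e) + p (head e) := by exact_mod_cast this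
    have h'' : (0 : ℤ) ≤ c e - p (tail e) + p (head e) := by omega
    exact_mod_cast h''
  have hB : ∀ e, 0 < f e → (c e : ℝ) - p (tail e) + p (head e) ≤ 0 := by
    intro e he
    have : (c e : ℝ) - p (tail e) + p (head e) < 1 := by
      linarith [hbwd e he, h1 (tail e), h0 (head e)]
    have h' : c e - p (tail e) + p (head e) < 1 := by exact_mod_cast this
    have h'' : c e - p (tail e) + p (head e) ≤ 0 := by omega
    exact_mod_cast h''
  have hterm : ∀ e, 0 ≤ ((c e : ℝ) - p (tail e) + p (head e)) * (f' e - f e) := by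
    intro e
    rcases lt_trichotomy (f' e) (f e : ℝ) with h | h | h
    · have : 0 < f e := by
        have := lt_of_le_of_lt (hcap e).1 h
        exact_mod_cast this
      exact mul_nonneg_of_nonpos_of_nonpos (hB e this) (by linarith)
    · simp [h]
    · have : f e < u e := by
        have := lt_of_lt_of_le h (hcap e).2
        exact_mod_cast this
      exact mul_nonneg (hF e this) (by linarith)
  have hsum := Finset.sum_nonneg fun e (_ : e ∈ (univ : Finset E)) => hterm e
  have hpot : ∀ g : E → ℝ, (∀ v, (∑ e ∈ univ.filter (fun e => tail e = v), g e)
          = ∑ e ∈ univ.filter (fun e => head e = v), g e) →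
      ∑ e, (p (tail e) : ℝ) * g e = ∑ e, (p (head e) : ℝ) * g e := by
    intro g hg
    rw [sum_potential tail (fun v => (p v : ℝ)) g, sum_potential head (fun v => (p v : ℝ)) g]
    simp only [hg]
  have e1 := hpot f' hcons
  have e2 := hpot (fun e => (f e : ℝ)) (fun v => by exact_mod_cast hfcons v)
  have key : ∑ e, ((c e : ℝ) - p (tail e) + p (head e)) * (f' e - f e)
      = ((∑ e, (c e : ℝ) * f' e) - ∑ e, (c e : ℝ) * (f e : ℝ))
        - ((∑ e, (p (tail e) : ℝ) * f' e) - ∑ e, (p (head e) : ℝ) * f' e)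
        + ((∑ e, (p (tail e) : ℝ) * (f e : ℝ)) - ∑ e, (p (head e) : ℝ) * (f e : ℝ)) := by
    simp only [← Finset.sum_sub_distrib, ← Finset.sum_add_distrib]
    exact Finset.sum_congr rfl fun e _ => by ring
  linarith
end

section
/- (One cost-scaling step halves the optimality parameter.) Consider a min-cost circulation instance on G = (V,E) with m = |E| ≥ 2, integral capacities u ∈ ℤ^E with u_e ≥ 1, and integral costs c ∈ ℤ^E. Let f be a feasible integral circulation that is ε-optimal, witnessed by y ∈ ℝ^V. For each residual arc a of G(f), let ĉ_a denote its reduced cost with respect to y, and let c̃_a be a multiple of ε/m^8 with |c̃_a − ĉ_a| ≤ ε/m^8. Suppose Δ is an integral vector indexed by the residual arcs with 0 ≤ Δ_a ≤ (residual capacity of a), satisfying flow conservation at every vertex, with Δ_{(e,+)}·Δ_{(e,−)} = 0 for every e, and suppose there exist Δy ∈ ℝ^V and s⁻, s⁺ ≥ 0 (indexed by residual arcs) with Δy_{tail(a)} − Δy_{head(a)} + s⁻_a − s⁺_a = c̃_a for every residual arc a, and satisfying complementary slackness: Δ_a < (residual capacity of a) implies s⁺_a = 0, and Δ_a > 0 implies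 s⁻_a = 0. Define f′ ∈ ℤ^E by f′_e := f_e + Δ_{(e,+)} − Δ_{(e,−)} (with absent coordinates taken as 0). Then f′ is a feasible integral circulation, every residual arc of G(f′) has reduced cost with respect to y + Δy at least −ε/m^8, and in particular f′ is (ε/2)-optimal. -/
open Finset

/-- one cost-scaling step halves the optimality parameter: augmenting
an `ε`-optimal integral circulation `f` by an optimal primal-dual pair for the instance
with reduced costs rounded to multiples of `ε/m⁸` yields a feasible integral circulation
`f'` all of whose residual arcs have reduced cost at least `-ε/m⁸` with respect to
`y + Δy`; in particular `f'` is `(ε/2)`-optimal.  Forward and backward residual arcs of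
an edge `e` are indexed by `(e,+)` and `(e,-)`; quantities on absent residual arcs are
forced to `0` by the capacity constraints. -/
theorem stmt15
    {V E : Type} [Fintype V] [Fintype E] [DecidableEq V]
    (tail head : E → V)
    (m : ℕ) (hmcard : m = Fintype.card E) (hm : 2 ≤ m)
    (u c : E → ℤ) (hu : ∀ e, 1 ≤ u e)
    (ε : ℝ) (hε : 0 < ε)
    (f : E → ℤ)
    (hfcap : ∀ e, 0 ≤ f e ∧ f e ≤ u e)
    (hfcons : ∀ v, (∑ e ∈ univ.filter (fun e => tail e = v), f e)
      = ∑ e ∈ univ.filter (fun e => head e = v), f e)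
    (y : V → ℝ)
    (hoptFwd : ∀ e, f e < u e → -ε < (c e : ℝ) - y (tail e) + y (head e))
    (hoptBwd : ∀ e, 0 < f e → -ε < -(c e : ℝ) - y (head e) + y (tail e))
    (ctp ctm : E → ℝ)
    (hctp : ∀ e, f e < u e → (∃ z : ℤ, ctp e = z * (ε / (m : ℝ) ^ 8)) ∧
      |ctp e - ((c e : ℝ) - y (tail e) + y (head e))| ≤ ε / (m : ℝ) ^ 8)
    (hctm : ∀ e, 0 < f e → (∃ z : ℤ, ctm e = z * (ε / (m : ℝ) ^ 8)) ∧
      |ctm e - (-(c e : ℝ) - y (head e) + y (tail e))| ≤ ε / (m : ℝ) ^ 8)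
    (Δp Δm : E → ℤ)
    (hΔcap : ∀ e, 0 ≤ Δp e ∧ Δp e ≤ u e - f e ∧ 0 ≤ Δm e ∧ Δm e ≤ f e ∧
      Δp e * Δm e = 0)
    (hΔcons : ∀ v, (∑ e ∈ univ.filter (fun e => tail e = v), (Δp e - Δm e))
      = ∑ e ∈ univ.filter (fun e => head e = v), (Δp e - Δm e))
    (Δy : V → ℝ) (sLp sLm sUp sUm : E → ℝ)
    (hs : ∀ e, 0 ≤ sLp e ∧ 0 ≤ sLm e ∧ 0 ≤ sUp e ∧ 0 ≤ sUm e)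
    (hdualFwd : ∀ e, f e < u e → Δy (tail e) - Δy (head e) + sLp e - sUp e = ctp e)
    (hdualBwd : ∀ e, 0 < f e → Δy (head e) - Δy (tail e) + sLm e - sUm e = ctm e)
    (hcsFwd : ∀ e, f e < u e →
      (Δp e < u e - f e → sUp e = 0) ∧ (0 < Δp e → sLp e = 0))
    (hcsBwd : ∀ e, 0 < f e →
      (Δm e < f e → sUm e = 0) ∧ (0 < Δm e → sLm e = 0)) :
    let f' : E → ℤ := fun e => f e + Δp e - Δm e
    ((∀ e, 0 ≤ f' e ∧ f' e ≤ u e) ∧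
      ∀ v, (∑ e ∈ univ.filter (fun e => tail e = v), f' e)
        = ∑ e ∈ univ.filter (fun e => head e = v), f' e) ∧
      (∀ e, f' e < u e →
        -(ε / (m : ℝ) ^ 8) ≤
          (c e : ℝ) - (y (tail e) + Δy (tail e)) + (y (head e) + Δy (head e))) ∧
      (∀ e, 0 < f' e →
        -(ε / (m : ℝ) ^ 8) ≤
          -(c e : ℝ) - (y (head e) + Δy (head e)) + (y (tail e) + Δy (tail e))) ∧
      (∃ y' : V → ℝ,
        (∀ e, f' e < u e → -(ε / 2) < (c e : ℝ) - y' (tail e) + y' (head e)) ∧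
          ∀ e, 0 < f' e → -(ε / 2) < -(c e : ℝ) - y' (head e) + y' (tail e)) := by
  intro f'
  have hδ : ε / (m : ℝ) ^ 8 < ε / 2 := by
    have h2 : (2 : ℝ) ≤ m := by exact_mod_cast hm
    have h8 : (2 : ℝ) ^ 8 ≤ (m : ℝ) ^ 8 := by gcongr
    apply div_lt_div_of_pos_left hε (by norm_num)
    norm_num at h8
    linarith
  have hF : ∀ e, f' e < u e →
        -(ε / (m : ℝ) ^ 8) ≤
          (c e : ℝ) - (y (tail e) + Δy (tail e)) + (y (head e) + Δy (head e)) := by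
    intro e he
    have he' : f e + Δp e - Δm e < u e := he
    obtain ⟨h1, h2, h3, h4, h5⟩ := hΔcap e
    obtain ⟨s1, s2, s3, s4⟩ := hs e
    by_cases hc : Δp e < u e - f e
    · have hfu : f e < u e := by omega
      have ha := abs_le.mp (hctp e hfu).2
      have hd := hdualFwd e hfu
      have hz := (hcsFwd e hfu).1 hc
      linarith [ha.1, ha.2]
    · have hm0 : 0 < Δm e := by omega
      have hf0 : 0 < f e := by omega
      have ha := abs_le.mp (hctm e hf0).2
      have hd := hdualBwd e hf0
      have hz := (hcsBwd e hf0).2 hm0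
      linarith [ha.1, ha.2]
  have hB : ∀ e, 0 < f' e →
        -(ε / (m : ℝ) ^ 8) ≤
          -(c e : ℝ) - (y (head e) + Δy (head e)) + (y (tail e) + Δy (tail e)) := by
    intro e he
    have he' : 0 < f e + Δp e - Δm e := he
    obtain ⟨h1, h2, h3, h4, h5⟩ := hΔcap e
    obtain ⟨s1, s2, s3, s4⟩ := hs e
    by_cases hc : Δm e < f e
    · have hf0 : 0 < f e := by omega
      have ha := abs_le.mp (hctm e hf0).2
      have hd := hdualBwd e hf0
      have hz := (hcsBwd e hf0).1 hc
      linarith [ha.1, ha.2]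
    · have hp0 : 0 < Δp e := by omega
      have hfu : f e < u e := by omega
      have ha := abs_le.mp (hctp e hfu).2
      have hd := hdualFwd e hfu
      have hz := (hcsFwd e hfu).2 hp0
      linarith [ha.1, ha.2]
  refine ⟨⟨?_, ?_⟩, hF, hB, fun v => y v + Δy v, ?_, ?_⟩
  · intro e
    obtain ⟨h1, h2, h3, h4, h5⟩ := hΔcap e
    change 0 ≤ f e + Δp e - Δm e ∧ f e + Δp e - Δm e ≤ u e
    constructor <;> omega
  · intro v
    have h := congrArg₂ (· + ·) (hfcons v) (hΔcons v)
    simp only [← Finset.sum_add_distrib] at h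
    simpa only [f', add_sub_assoc] using h
  · intro e he
    have := hF e he
    linarith
  · intro e he
    have := hB e he
    linarith
end

section
/- (Capacity rounding preserves near-optimality.) Consider a min-cost circulation instance on G = (V,E) with m = |E| ≥ 2, integral costs c ∈ ℤ^E with |c_e| ≤ m^{10} for all e, and integral capacities u ∈ ℤ^E with u_e ≥ 1, and let F* := min{c^⊤f : f a circulation with 0 ≤ f ≤ u}. Let B > 0 be a real with F* ≤ −B and F* ≥ −m^{12}·B. Let q := ⌈B/m^{20}⌉ and M := ⌈B·m^{20}⌉, and define rounded capacities u^B ∈ ℤ^E by u^B_e := M if u_e > B·m^{20}, and u^B_e := q·⌊u_e/q⌋ otherwise. Then every minimizer f^B of c^⊤f over circulations f with 0 ≤ f ≤ u^B satisfies 0 ≤ f^B ≤ u (so f^B is feasible for the original instance) and F* ≤ c^⊤f^B ≤ (1 − 2·m^{−8})·F*. -/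
open Finset
open scoped Classical

noncomputable section

/-- `f` is a (real-valued) circulation respecting the capacities `cap`: `0 ≤ f ≤ cap`
and flow conservation at every vertex. -/
def IsCirc {V E : Type} [Fintype E] [DecidableEq V] (tail head : E → V)
    (cap : E → ℤ) (f : E → ℝ) : Prop :=
  (∀ e, 0 ≤ f e ∧ f e ≤ (cap e : ℝ)) ∧
    ∀ v, (∑ e ∈ univ.filter (fun e => tail e = v), f e)
      = ∑ e ∈ univ.filter (fun e => head e = v), f e

/-- The cost `cᵀ f` of a flow (integral costs, real flow). -/
def costZ {E : Type} [Fintype E] (c : E → ℤ) (f : E → ℝ) : ℝ := ∑ e, (c e : ℝ) * f e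

def Cons {V E : Type} [Fintype E] [DecidableEq V] (tail head : E → V) (f : E → ℝ) : Prop :=
  ∀ v, (∑ e ∈ univ.filter (fun e => tail e = v), f e)
      = ∑ e ∈ univ.filter (fun e => head e = v), f e

def chi {E : Type} (S : Finset E) (e : E) : ℝ := if e ∈ S then 1 else 0

lemma chi_nonneg {E : Type} (S : Finset E) (e : E) : 0 ≤ chi S e := by
  unfold chi; split_ifs <;> norm_num

lemma chi_le_one {E : Type} (S : Finset E) (e : E) : chi S e ≤ 1 := by
  unfold chi; split_ifs <;> norm_num

lemma cons_sum {V E : Type} [Fintype E] [DecidableEq V] (tail head : E → V)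
    (l : Finset E → ℝ) (h : ∀ S, l S ≠ 0 → Cons tail head (chi S)) :
    Cons tail head (fun e => ∑ S, l S * chi S e) := by
  intro v
  show (∑ e ∈ _, ∑ S, _) = ∑ e ∈ _, ∑ S, _
  rw [sum_comm, sum_comm (s := univ.filter (fun e => head e = v))]
  refine sum_congr rfl fun S _ => ?_
  rw [← mul_sum, ← mul_sum]
  by_cases h0 : l S = 0
  · simp [h0]
  · rw [h S h0 v]

lemma exists_cycle {V E : Type} [Fintype E] [DecidableEq V] (tail head : E → V)
    (f : E → ℝ) (hf : ∀ e, 0 ≤ f e) (hC : Cons tail head f) (e0 : E) (he0 : 0 < f e0) :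
    ∃ S : Finset E, S.Nonempty ∧ (∀ e ∈ S, 0 < f e) ∧ Cons tail head (chi S) := by
  have hn : ∀ e, ∃ e', (0 < f e → 0 < f e' ∧ tail e' = head e) ∧ (¬ 0 < f e → e' = e) := by
    intro e
    by_cases h : 0 < f e
    · have h1 : 0 < ∑ e' ∈ univ.filter (fun e' => head e' = head e), f e' :=
        sum_pos' (fun i _ => hf i) ⟨e, by simp, h⟩
      rw [← hC] at h1
      obtain ⟨e', he', h2⟩ := exists_lt_of_sum_lt (f := fun _ => (0:ℝ)) (by simpa using h1)
      exact ⟨e', fun _ => ⟨h2, by simpa using he'⟩, fun h' => absurd h h'⟩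
    · exact ⟨e, fun h' => absurd h' h, fun _ => rfl⟩
  choose next hn1 hn2 using hn
  have hit : ∀ k, 0 < f (next^[k] e0) := by
    intro k
    induction k with
    | zero => simpa
    | succ k ih => rw [Function.iterate_succ_apply']; exact (hn1 _ ih).1
  have hbij := Function.bijOn_periodicPts next
  refine ⟨univ.filter (fun e => 0 < f e ∧ e ∈ Function.periodicPts next), ?_, ?_, ?_⟩
  · obtain ⟨a, b, hab, h⟩ := Finite.exists_ne_map_eq_of_infinite (fun k : ℕ => next^[k] e0)
    have key : ∀ a b : ℕ, a < b → next^[a] e0 = next^[b] e0 →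
        next^[a] e0 ∈ Function.periodicPts next := by
      intro a b hab h
      refine ⟨b - a, by omega, ?_⟩
      show next^[b-a] (next^[a] e0) = _
      rw [← Function.iterate_add_apply, Nat.sub_add_cancel hab.le, h]
    rcases lt_or_gt_of_ne hab with h1 | h1
    · exact ⟨_, by simpa using ⟨hit a, key a b h1 h⟩⟩
    · exact ⟨_, by simpa using ⟨hit b, key b a h1 h.symm⟩⟩
  · intro e he; simp at he; exact he.1
  · intro v
    unfold chi
    rw [← sum_filter, ← sum_filter]
    symm
    refine sum_bij (fun e _ => next e) ?_ ?_ ?_ (fun _ _ => rfl)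
    · intro e he
      simp only [mem_filter, mem_univ, true_and] at he ⊢
      exact ⟨(hn1 e he.2.1).2.trans he.1, (hn1 e he.2.1).1, hbij.mapsTo he.2.2⟩
    · intro e he e' he' h
      simp only [mem_filter, mem_univ, true_and] at he he'
      exact hbij.injOn he.2.2 he'.2.2 h
    · intro e' he'
      simp only [mem_filter, mem_univ, true_and] at he'
      obtain ⟨e, he, rfl⟩ := hbij.surjOn he'.2.2
      have hp : 0 < f e := by
        by_contra h
        have := he'.2.1
        rw [hn2 e h] at this
        exact h this
      refine ⟨e, ?_, rfl⟩
      simp only [mem_filter, mem_univ, true_and]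
      exact ⟨(hn1 e hp).2.symm.trans he'.1, hp, he⟩

lemma decomp {V E : Type} [Fintype E] [DecidableEq V] (tail head : E → V) (n : ℕ) :
    ∀ (f : E → ℝ), (∀ e, 0 ≤ f e) → Cons tail head f →
      (univ.filter (fun e => 0 < f e)).card ≤ n →
    ∃ l : Finset E → ℝ, (∀ S, 0 ≤ l S) ∧ (∀ S, l S ≠ 0 → Cons tail head (chi S)) ∧
      ∀ e, f e = ∑ S, l S * chi S e := by
  induction n with
  | zero =>
    intro f hf hC hn
    refine ⟨fun _ => 0, by simp, by simp, fun e => ?_⟩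
    have h : univ.filter (fun e => 0 < f e) = ∅ := by simpa using hn
    have : ¬ 0 < f e := by
      intro he
      have : e ∈ univ.filter (fun e => 0 < f e) := by simpa using he
      rw [h] at this; simp at this
    simp; linarith [hf e]
  | succ n ih =>
    intro f hf hC hn
    by_cases hz : ∃ e, 0 < f e
    · obtain ⟨e0, he0⟩ := hz
      obtain ⟨T, hT, hTp, hTC⟩ := exists_cycle tail head f hf hC e0 he0
      obtain ⟨e1, he1, hmin⟩ := exists_min_image T f hT
      have hg0 : ∀ e, 0 ≤ f e - f e1 * chi T e := by
        intro e
        unfold chi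
        split_ifs with h
        · linarith [hmin e h]
        · linarith [hf e]
      obtain ⟨l, hl0, hlC, hl⟩ := ih (fun e => f e - f e1 * chi T e) hg0 (by
        intro v
        show (∑ e ∈ _, (_ - _)) = ∑ e ∈ _, (_ - _)
        rw [sum_sub_distrib, sum_sub_distrib, ← mul_sum, ← mul_sum, hC v, hTC v]) (by
        apply Nat.le_of_lt_succ
        refine lt_of_lt_of_le (card_lt_card ?_) hn
        rw [ssubset_iff_of_subset]
        · exact ⟨e1, by simpa using hTp e1 he1, by simp [chi, he1]⟩
        · intro e he
          simp only [mem_filter, mem_univ, true_and] at he ⊢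
          have := mul_nonneg (hf e1) (chi_nonneg T e)
          linarith)
      refine ⟨fun S => l S + if S = T then f e1 else 0, ?_, ?_, ?_⟩
      · intro S
        have := hl0 S
        have := hf e1
        dsimp only
        split_ifs <;> linarith
      · intro S hS
        by_cases h : S = T
        · rw [h]; exact hTC
        · apply hlC; simpa [h] using hS
      · intro e
        have := hl e
        simp only [add_mul, sum_add_distrib, ite_mul, zero_mul, sum_ite_eq', mem_univ, if_true]
        linarith
    · refine ⟨fun _ => 0, by simp, by simp, fun e => ?_⟩
      have : ¬ 0 < f e := fun h => hz ⟨e, h⟩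
      simp; linarith [hf e]

lemma cost_sum {E : Type} [Fintype E] (c : E → ℤ) (l : Finset E → ℝ) :
    costZ c (fun e => ∑ S, l S * chi S e) = ∑ S, l S * costZ c (chi S) := by
  unfold costZ
  simp only [mul_sum]
  rw [sum_comm]
  refine sum_congr rfl fun S _ => sum_congr rfl fun e _ => by ring

lemma cost_chi {E : Type} [Fintype E] (c : E → ℤ) (S : Finset E) :
    costZ c (chi S) = ((∑ e ∈ S, c e : ℤ) : ℝ) := by
  unfold costZ chi
  simp

/-- the reduction step -/
lemma reduce {V E : Type} [Fintype E] [DecidableEq V] (tail head : E → V)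
    (c : E → ℤ) (K : ℝ) (hK : ∀ e, |(c e : ℝ)| ≤ K) (hK0 : 0 ≤ K)
    (l : Finset E → ℝ) (hl0 : ∀ S, 0 ≤ l S) (hlC : ∀ S, l S ≠ 0 → Cons tail head (chi S))
    (r : ℝ) (hr : 0 ≤ r) :
    ∃ g : E → ℝ, Cons tail head g ∧ (∀ e, 0 ≤ g e) ∧
      (∀ e, g e ≤ ∑ S, l S * chi S e) ∧
      (∀ e, g e ≤ max ((∑ S, l S * chi S e) - r) 0) ∧
      costZ c g ≤ costZ c (fun e => ∑ S, l S * chi S e)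
        + (Fintype.card E * K) * (Fintype.card E * r) := by
  set f : E → ℝ := fun e => ∑ S, l S * chi S e with hf
  have hf0 : ∀ e, 0 ≤ f e := fun e => sum_nonneg fun S _ => mul_nonneg (hl0 S) (chi_nonneg S e)
  let t : E → ℝ := fun e => min 1 (r / f e)
  have ht0 : ∀ e, 0 ≤ t e := fun e => le_min zero_le_one (div_nonneg hr (hf0 e))
  have ht1 : ∀ e, t e ≤ 1 := fun e => min_le_left _ _
  have htf : ∀ e, t e * f e ≤ r := by
    intro e
    rcases (hf0 e).eq_or_lt with h | h
    · rw [← h]; simpa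
    · calc t e * f e ≤ r / f e * f e := by gcongr; exact min_le_right _ _
        _ = r := by field_simp
  let τ : Finset E → ℝ := fun S => min 1 (∑ e, t e * chi S e)
  have hτ0 : ∀ S, 0 ≤ τ S := fun S =>
    le_min zero_le_one (sum_nonneg fun e _ => mul_nonneg (ht0 e) (chi_nonneg S e))
  have hτ1 : ∀ S, τ S ≤ 1 := fun S => min_le_left _ _
  have hτt : ∀ S, ∀ e ∈ S, t e ≤ τ S := by
    intro S e he
    refine le_min (ht1 e) ?_
    have := single_le_sum (f := fun e => t e * chi S e)
      (fun e _ => mul_nonneg (ht0 e) (chi_nonneg S e)) (mem_univ e)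
    simpa [chi, he] using this
  have hk : ∀ S, 0 ≤ l S * (1 - τ S) := fun S => mul_nonneg (hl0 S) (by linarith [hτ1 S])
  have hge : ∀ e, ∑ S, l S * (1 - τ S) * chi S e ≤ (1 - t e) * f e := by
    intro e
    rw [hf]; simp only [mul_sum]
    refine sum_le_sum fun S _ => ?_
    by_cases h : e ∈ S
    · have := mul_le_mul_of_nonneg_left (hτt S e h) (hl0 S)
      simp only [chi, h, if_true]; linarith
    · simp [chi, h]
  refine ⟨fun e => ∑ S, (l S * (1 - τ S)) * chi S e, ?_, ?_, ?_, ?_, ?_⟩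
  · exact cons_sum tail head _ fun S hS => hlC S (left_ne_zero_of_mul hS)
  · exact fun e => sum_nonneg fun S _ => mul_nonneg (hk S) (chi_nonneg S e)
  · intro e
    refine (hge e).trans ?_
    nlinarith [mul_nonneg (ht0 e) (hf0 e)]
  · intro e
    refine (hge e).trans ?_
    rcases (hf0 e).eq_or_lt with h | h
    · rw [← h]; simp
    · by_cases h1 : 1 ≤ r / f e
      · have : t e = 1 := min_eq_left h1
        rw [this]; simp
      · have : t e = r / f e := min_eq_right (not_le.1 h1).le
        rw [this]
        refine le_max_of_le_left (le_of_eq ?_)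
        show (1 - r / f e) * f e = f e - r
        rw [sub_mul, one_mul, div_mul_cancel₀ _ h.ne']
  · rw [cost_sum, hf, cost_sum]
    have hχ : ∀ S, -(Fintype.card E * K) ≤ costZ c (chi S) := by
      intro S
      have : ∑ e : E, -K ≤ costZ c (chi S) := by
        refine sum_le_sum fun e _ => ?_
        have := abs_le.1 (hK e)
        unfold chi; split_ifs <;> linarith
      simpa using this
    have hsum : ∑ S, l S * τ S ≤ Fintype.card E * r := by
      calc ∑ S, l S * τ S ≤ ∑ S, l S * ∑ e, t e * chi S e :=
            sum_le_sum fun S _ => mul_le_mul_of_nonneg_left (min_le_right _ _) (hl0 S)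
        _ = ∑ e, t e * f e := by
            simp only [hf, mul_sum]
            rw [sum_comm]
            refine sum_congr rfl fun S _ => sum_congr rfl fun e _ => by ring
        _ ≤ ∑ e : E, r := sum_le_sum fun e _ => htf e
        _ = _ := by simp
    have hN : 0 ≤ Fintype.card E * K := by positivity
    have h1 : ∑ S, l S * (1 - τ S) * costZ c (chi S)
        ≤ ∑ S, l S * costZ c (chi S) + (Fintype.card E * K) * ∑ S, l S * τ S := by
      rw [mul_sum, ← sum_add_distrib]
      refine sum_le_sum fun S _ => ?_
      have := mul_le_mul_of_nonneg_left (hχ S) (mul_nonneg (hl0 S) (hτ0 S))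
      linarith
    have := mul_le_mul_of_nonneg_left hsum hN
    linarith

/-- capacity rounding preserves near-optimality: rounding the
capacities down to multiples of `q = ⌈B/m²⁰⌉` (capping them at `M = ⌈B·m²⁰⌉`) changes the
optimal circulation value by at most a `(1 - 2 m⁻⁸)` factor, where `-B` is an
`m¹²`-approximation of the (negative) optimal value `F*`. -/
theorem stmt16
    {V E : Type} [Fintype V] [Fintype E] [DecidableEq V]
    (tail head : E → V)
    (m : ℕ) (hmcard : m = Fintype.card E) (hm : 2 ≤ m)
    (c u : E → ℤ) (hc : ∀ e, |c e| ≤ (m : ℤ) ^ 10) (hu : ∀ e, 1 ≤ u e)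
    (Fstar : ℝ)
    (hex : ∃ f, IsCirc tail head u f ∧ costZ c f = Fstar)
    (hmin : ∀ f, IsCirc tail head u f → Fstar ≤ costZ c f)
    (B : ℝ) (hB : 0 < B) (hFB : Fstar ≤ -B) (hFB' : -(m : ℝ) ^ 12 * B ≤ Fstar) :
    let q : ℤ := ⌈B / (m : ℝ) ^ 20⌉
    let M : ℤ := ⌈B * (m : ℝ) ^ 20⌉
    let uB : E → ℤ := fun e => if B * (m : ℝ) ^ 20 < (u e : ℝ) then M else q * (u e / q)
    ∀ fB : E → ℝ, IsCirc tail head uB fB →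
      (∀ g, IsCirc tail head uB g → costZ c fB ≤ costZ c g) →
      (∀ e, 0 ≤ fB e ∧ fB e ≤ (u e : ℝ)) ∧ Fstar ≤ costZ c fB ∧
        costZ c fB ≤ (1 - 2 / (m : ℝ) ^ 8) * Fstar := by
  intro q M uB fB hfB hopt
  have hm0 : (2:ℝ) ≤ m := by exact_mod_cast hm
  have hmp : (0:ℝ) < m := by linarith
  have hm1 : (1:ℝ) ≤ m := by linarith
  have hq : 1 ≤ q := Int.one_le_ceil_iff.2 (by positivity)
  have hqr : ((q:ℝ) - 1) ≤ B / (m:ℝ)^20 := by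
    have := Int.ceil_lt_add_one (B / (m:ℝ)^20)
    show (((⌈B / (m : ℝ) ^ 20⌉ : ℤ) : ℝ) - 1) ≤ _
    linarith
  have hM : B * (m:ℝ)^20 ≤ M := Int.le_ceil _
  have huB : ∀ e, uB e ≤ u e := by
    intro e
    simp only [uB]
    split_ifs with h
    · exact Int.ceil_le.2 h.le
    · exact Int.mul_ediv_self_le (by omega)
  have hfeas : ∀ e, 0 ≤ fB e ∧ fB e ≤ (u e : ℝ) := fun e =>
    ⟨(hfB.1 e).1, (hfB.1 e).2.trans (by exact_mod_cast huB e)⟩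
  refine ⟨hfeas, hmin fB ⟨hfeas, hfB.2⟩, ?_⟩
  obtain ⟨f, hf, hfF⟩ := hex
  obtain ⟨l, hl0, hlC, hl⟩ := decomp tail head _ f (fun e => (hf.1 e).1) hf.2 le_rfl
  -- keep only negative cycles
  let l' : Finset E → ℝ := fun S => if costZ c (chi S) < 0 then l S else 0
  have hl'0 : ∀ S, 0 ≤ l' S := by
    intro S; simp only [l']; split_ifs
    · exact hl0 S
    · exact le_rfl
  have hl'l : ∀ S, l' S ≤ l S := by
    intro S; simp only [l']; split_ifs
    · exact le_rfl
    · exact hl0 S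
  have hl'C : ∀ S, l' S ≠ 0 → Cons tail head (chi S) := by
    intro S hS
    apply hlC
    intro h; apply hS; simp [l', h]
  have hf'f : ∀ e, ∑ S, l' S * chi S e ≤ f e := by
    intro e
    rw [hl e]
    exact sum_le_sum fun S _ => mul_le_mul_of_nonneg_right (hl'l S) (chi_nonneg S e)
  have hf'0 : ∀ e, 0 ≤ ∑ S, l' S * chi S e := fun e =>
    sum_nonneg fun S _ => mul_nonneg (hl'0 S) (chi_nonneg S e)
  have hcost : costZ c (fun e => ∑ S, l' S * chi S e) ≤ Fstar := by
    have : f = fun e => ∑ S, l S * chi S e := funext hl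
    rw [← hfF, this, cost_sum, cost_sum]
    refine sum_le_sum fun S _ => ?_
    simp only [l']
    split_ifs with h
    · exact le_rfl
    · rw [zero_mul]; exact mul_nonneg (hl0 S) (not_lt.1 h)
  have hcost2 : Fstar ≤ costZ c (fun e => ∑ S, l' S * chi S e) :=
    hmin _ ⟨fun e => ⟨hf'0 e, (hf'f e).trans (hf.1 e).2⟩, cons_sum tail head l' hl'C⟩
  have hsum : ∑ S, l' S ≤ (m:ℝ)^12 * B := by
    have h1 : costZ c (fun e => ∑ S, l' S * chi S e) ≤ ∑ S, - l' S := by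
      rw [cost_sum]
      refine sum_le_sum fun S _ => ?_
      by_cases h : costZ c (chi S) < 0
      · have h2 : costZ c (chi S) ≤ -1 := by
          rw [cost_chi] at h ⊢
          have h3 : (∑ e ∈ S, c e) < 0 := by exact_mod_cast h
          have h4 : (∑ e ∈ S, c e) ≤ -1 := by omega
          exact_mod_cast h4
        have := mul_le_mul_of_nonneg_left h2 (hl'0 S)
        linarith
      · simp [l', h]
    rw [sum_neg_distrib] at h1
    linarith
  have hf'M : ∀ e, ∑ S, l' S * chi S e ≤ M := by
    intro e
    have h1 : ∑ S, l' S * chi S e ≤ ∑ S, l' S :=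
      sum_le_sum fun S _ => mul_le_of_le_one_right (hl'0 S) (chi_le_one S e)
    have h2 : (m:ℝ)^12 ≤ (m:ℝ)^20 := pow_le_pow_right₀ hm1 (by norm_num)
    have := mul_le_mul_of_nonneg_right h2 hB.le
    linarith
  obtain ⟨g, hgC, hg0, hg1, hg2, hg3⟩ := reduce tail head c ((m:ℝ)^10)
    (fun e => by exact_mod_cast hc e) (by positivity) l' hl'0 hl'C ((q:ℝ) - 1)
    (by have : (1:ℝ) ≤ q := by exact_mod_cast hq
        linarith)
  have hgcirc : IsCirc tail head uB g := by
    refine ⟨fun e => ⟨hg0 e, ?_⟩, hgC⟩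
    simp only [uB]
    split_ifs with h
    · exact (hg1 e).trans (hf'M e)
    · refine (hg2 e).trans (max_le ?_ ?_)
      · have h1 : u e - (q - 1) ≤ q * (u e / q) := by
          have h2 := Int.emod_lt_of_pos (u e) (show 0 < q by omega)
          have h3 := Int.mul_ediv_add_emod (u e) q
          omega
        have h4 : (u e : ℝ) - (q - 1) ≤ ((q * (u e / q) : ℤ) : ℝ) := by exact_mod_cast h1
        have := (hf'f e).trans (hf.1 e).2
        linarith
      · have : 0 ≤ q * (u e / q) :=
          mul_nonneg (by omega) (Int.ediv_nonneg (by linarith [hu e]) (by omega))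
        exact_mod_cast this
  have hfin := hopt g hgcirc
  rw [← hmcard] at hg3
  have hloss : ((m:ℝ) * (m:ℝ)^10) * (m * ((q:ℝ) - 1)) ≤ B / (m:ℝ)^8 := by
    calc ((m:ℝ) * (m:ℝ)^10) * (m * ((q:ℝ) - 1))
        ≤ ((m:ℝ) * (m:ℝ)^10) * (m * (B / (m:ℝ)^20)) := by gcongr
      _ = B / (m:ℝ)^8 := by field_simp
  have h5 : B / (m:ℝ)^8 ≤ (-Fstar) / (m:ℝ)^8 := by gcongr; linarith
  have h6 : 0 ≤ (-Fstar) / (m:ℝ)^8 := div_nonneg (by linarith) (by positivity)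
  have h7 : (1 - 2 / (m : ℝ) ^ 8) * Fstar = Fstar + 2 * ((-Fstar) / (m:ℝ)^8) := by ring
  rw [h7]
  linarith
end
end

section
/- (Derivatives of a partially minimized bivariate function.) Let X ⊆ ℝ² be open and ψ : X → ℝ three times continuously differentiable. Let I ⊆ ℝ be open and y : I → ℝ twice continuously differentiable with (x, y(x)) ∈ X for all x ∈ I and ψ_y(x, y(x)) = 0 for all x ∈ I, where ψ_y denotes the partial derivative of ψ in its second argument. Define ζ(x) := ψ(x, y(x)) and v(x) := (1, y′(x)) ∈ ℝ². Then for all x ∈ I: ζ′(x) = ψ_x(x, y(x)); ζ″(x) = v(x)^⊤ ∇²ψ(x, y(x)) v(x); ζ‴(x) = ∇³ψ(x, y(x))[v(x), v(x), v(x)]; and moreover, if ψ_{yy}(x, y(x)) ≠ 0, then y′(x) = −ψ_{xy}(x, y(x)) / ψ_{yy}(x, y(x)). -/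
noncomputable section

/-- derivatives of a partially minimized bivariate function: if
`ψ : ℝ² → ℝ` is `C³` on an open set `X`, `y : ℝ → ℝ` is `C²` on an open set `I` with
`(x, y x) ∈ X` and `ψ_y(x, y x) = 0` on `I`, then the derivatives of
`ζ x = ψ (x, y x)` are given by the stated formulas with `v x = (1, y' x)`; moreover
`y' x = -ψ_{xy}/ψ_{yy}` whenever `ψ_{yy}(x, y x) ≠ 0`. -/
theorem stmt17
    (X : Set (ℝ × ℝ)) (hX : IsOpen X)
    (ψ : ℝ × ℝ → ℝ) (hψ : ContDiffOn ℝ 3 ψ X)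
    (I : Set ℝ) (hI : IsOpen I)
    (y : ℝ → ℝ) (hy : ContDiffOn ℝ 2 y I)
    (hmem : ∀ x ∈ I, (x, y x) ∈ X)
    (hcrit : ∀ x ∈ I, fderiv ℝ ψ (x, y x) (0, 1) = 0) :
    ∀ x ∈ I,
      deriv (fun s => ψ (s, y s)) x = fderiv ℝ ψ (x, y x) (1, 0) ∧
        deriv (deriv fun s => ψ (s, y s)) x
          = iteratedFDeriv ℝ 2 ψ (x, y x) ![(1, deriv y x), (1, deriv y x)] ∧
        deriv (deriv (deriv fun s => ψ (s, y s))) x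
          = iteratedFDeriv ℝ 3 ψ (x, y x)
              ![(1, deriv y x), (1, deriv y x), (1, deriv y x)] ∧
        (iteratedFDeriv ℝ 2 ψ (x, y x) ![((0 : ℝ), (1 : ℝ)), ((0 : ℝ), (1 : ℝ))] ≠ 0 →
          deriv y x =
            -(iteratedFDeriv ℝ 2 ψ (x, y x) ![((1 : ℝ), (0 : ℝ)), ((0 : ℝ), (1 : ℝ))])
              / iteratedFDeriv ℝ 2 ψ (x, y x) ![((0 : ℝ), (1 : ℝ)), ((0 : ℝ), (1 : ℝ))]) := by
  intro x hx
  have hnX : ∀ s ∈ I, X ∈ nhds (s, y s) := fun s hs => hX.mem_nhds (hmem s hs)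
  have hnI : ∀ s ∈ I, I ∈ nhds s := fun s hs => hI.mem_nhds hs
  have hc : ∀ s ∈ I, ContDiffAt ℝ 3 ψ (s, y s) := fun s hs => hψ.contDiffAt (hnX s hs)
  have hc1 : ∀ s ∈ I, ContDiffAt ℝ 2 (fderiv ℝ ψ) (s, y s) := fun s hs =>
    (hc s hs).fderiv_right (by norm_num)
  have hc2 : ∀ s ∈ I, ContDiffAt ℝ 1 (fderiv ℝ (fderiv ℝ ψ)) (s, y s) := fun s hs =>
    (hc1 s hs).fderiv_right (by norm_num)
  have hyc : ∀ s ∈ I, ContDiffAt ℝ 2 y s := fun s hs => hy.contDiffAt (hnI s hs)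
  have hγ : ∀ s ∈ I, HasDerivAt (fun s => (s, y s)) ((1 : ℝ), deriv y s) s := fun s hs =>
    (hasDerivAt_id s).prodMk ((hyc s hs).differentiableAt (by norm_num)).hasDerivAt
  have hy2 : ∀ s ∈ I, HasDerivAt (deriv y) (deriv (deriv y) s) s := fun s hs => by
    have h : ContDiffOn ℝ 1 (deriv y) I := hy.deriv_of_isOpen hI (by norm_num)
    exact ((h.contDiffAt (hnI s hs)).differentiableAt (by norm_num)).hasDerivAt
  have hv : ∀ s ∈ I, HasDerivAt (fun s => ((1 : ℝ), deriv y s)) ((0 : ℝ), deriv (deriv y) s) s :=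
    fun s hs => (hasDerivAt_const s (1 : ℝ)).prodMk (hy2 s hs)
  have dec : ∀ a b : ℝ, ((a, b) : ℝ × ℝ) = a • (1, 0) + b • (0, 1) := by
    intro a b; simp
  have h1 : ∀ s ∈ I, deriv (fun s => ψ (s, y s)) s = fderiv ℝ ψ (s, y s) (1, 0) := by
    intro s hs
    have h := ((hc s hs).differentiableAt (by norm_num)).hasFDerivAt.comp_hasDerivAt s (hγ s hs)
    have h' : deriv (fun s => ψ (s, y s)) s = fderiv ℝ ψ (s, y s) (1, deriv y s) := h.deriv
    rw [h', dec 1 (deriv y s), map_add, map_smul, map_smul, hcrit s hs]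
    simp
  have hD : ∀ s ∈ I, ∀ w, HasDerivAt (fun s => fderiv ℝ ψ (s, y s) w)
      (fderiv ℝ (fderiv ℝ ψ) (s, y s) (1, deriv y s) w) s := by
    intro s hs w
    have h := ((hc1 s hs).differentiableAt (by norm_num)).hasFDerivAt.comp_hasDerivAt s (hγ s hs)
    simpa using h.clm_apply (hasDerivAt_const s w)
  have hD2 : ∀ s ∈ I, ∀ w, HasDerivAt
      (fun s => fderiv ℝ (fderiv ℝ ψ) (s, y s) (1, deriv y s) w)
      (fderiv ℝ (fderiv ℝ (fderiv ℝ ψ)) (s, y s) (1, deriv y s) (1, deriv y s) w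
        + fderiv ℝ (fderiv ℝ ψ) (s, y s) (0, deriv (deriv y) s) w) s := by
    intro s hs w
    have h := ((hc2 s hs).differentiableAt (by norm_num)).hasFDerivAt.comp_hasDerivAt s (hγ s hs)
    simpa using (h.clm_apply (hv s hs)).clm_apply (hasDerivAt_const s w)
  have hz : ∀ s ∈ I, fderiv ℝ (fderiv ℝ ψ) (s, y s) (1, deriv y s) (0, 1) = 0 := by
    intro s hs
    rw [← (hD s hs (0, 1)).deriv]
    have : (fun s => fderiv ℝ ψ (s, y s) (0, 1)) =ᶠ[nhds s] fun _ => (0 : ℝ) := by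
      filter_upwards [hnI s hs] with t ht using hcrit t ht
    rw [this.deriv_eq]; simp
  have h2 : ∀ s ∈ I, deriv (deriv fun s => ψ (s, y s)) s
      = fderiv ℝ (fderiv ℝ ψ) (s, y s) (1, deriv y s) (1, 0) := by
    intro s hs
    have : (deriv fun s => ψ (s, y s)) =ᶠ[nhds s] fun s => fderiv ℝ ψ (s, y s) (1, 0) := by
      filter_upwards [hnI s hs] with t ht using h1 t ht
    rw [this.deriv_eq, (hD s hs (1, 0)).deriv]
  have hz2 : fderiv ℝ (fderiv ℝ (fderiv ℝ ψ)) (x, y x) (1, deriv y x) (1, deriv y x) (0, 1)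
        + fderiv ℝ (fderiv ℝ ψ) (x, y x) (0, deriv (deriv y) x) (0, 1) = 0 := by
    rw [← (hD2 x hx (0, 1)).deriv]
    have : (fun s => fderiv ℝ (fderiv ℝ ψ) (s, y s) (1, deriv y s) (0, 1))
        =ᶠ[nhds x] fun _ => (0 : ℝ) := by
      filter_upwards [hnI x hx] with t ht using hz t ht
    rw [this.deriv_eq]; simp
  have h3 : deriv (deriv (deriv fun s => ψ (s, y s))) x
      = fderiv ℝ (fderiv ℝ (fderiv ℝ ψ)) (x, y x) (1, deriv y x) (1, deriv y x) (1, 0)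
        + fderiv ℝ (fderiv ℝ ψ) (x, y x) (0, deriv (deriv y) x) (1, 0) := by
    have : (deriv (deriv fun s => ψ (s, y s))) =ᶠ[nhds x]
        fun s => fderiv ℝ (fderiv ℝ ψ) (s, y s) (1, deriv y s) (1, 0) := by
      filter_upwards [hnI x hx] with t ht using h2 t ht
    rw [this.deriv_eq, (hD2 x hx (1, 0)).deriv]
  have hsymm : ∀ a b, fderiv ℝ (fderiv ℝ ψ) (x, y x) a b = fderiv ℝ (fderiv ℝ ψ) (x, y x) b a :=
    fun a b => ((hc x hx).isSymmSndFDerivAt (by simp; norm_num)) a b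
  have hzx := hz x hx
  have split : ∀ (L : ℝ × ℝ →L[ℝ] ℝ) (a b : ℝ), L (a, b) = a * L (1, 0) + b * L (0, 1) := by
    intro L a b
    rw [dec a b, map_add, map_smul, map_smul]; simp
  have e3 : iteratedFDeriv ℝ 3 ψ (x, y x)
        ![(1, deriv y x), (1, deriv y x), (1, deriv y x)]
      = fderiv ℝ (fderiv ℝ (fderiv ℝ ψ)) (x, y x) (1, deriv y x) (1, deriv y x)
        (1, deriv y x) := by
    rw [iteratedFDeriv_succ_apply_right, iteratedFDeriv_two_apply]
    rfl
  refine ⟨h1 x hx, ?_, ?_, ?_⟩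
  · rw [h2 x hx, iteratedFDeriv_two_apply]
    simp only [Matrix.cons_val_zero, Matrix.cons_val_one]
    rw [split (fderiv ℝ (fderiv ℝ ψ) (x, y x) (1, deriv y x)) 1 (deriv y x), hzx]
    ring
  · rw [h3, e3, split (fderiv ℝ (fderiv ℝ (fderiv ℝ ψ)) (x, y x) (1, deriv y x) (1, deriv y x)) 1
      (deriv y x)]
    rw [hsymm _ (0, 1), split _ 0 (deriv (deriv y) x)] at hz2
    rw [hsymm _ (1, 0), split _ 0 (deriv (deriv y) x)]
    rw [hsymm, split _ 1] at hzx
    rw [hsymm (1, 0) (0, 1)]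
    linear_combination (-deriv y x) * hz2 + deriv (deriv y) x * hzx
  · intro hne
    rw [iteratedFDeriv_two_apply] at hne
    rw [iteratedFDeriv_two_apply, iteratedFDeriv_two_apply]
    simp only [Matrix.cons_val_zero, Matrix.cons_val_one] at hne ⊢
    rw [hsymm, split _ 1] at hzx
    rw [eq_div_iff hne, hsymm (1, 0) (0, 1)]
    linear_combination hzx
end
end

section
/- (Self-concordance of the partially minimized exponential barrier.) Let X ⊆ ℝ² be open and ψ : X → ℝ three times continuously differentiable with ψ ≥ 0 on X, and suppose for some ν ≥ 1 that for all (x,y) ∈ X and all w ∈ ℝ²: |∇³ψ(x,y)[w,w,w]| ≤ 2·(w^⊤∇²ψ(x,y)w)^{3/2} and ⟨∇ψ(x,y), w⟩² ≤ ν·w^⊤∇²ψ(x,y)w (in particular ∇²ψ is positive semidefinite). Let α ∈ (0, 1/(1000ν)], t ∈ ℝ, let I ⊆ ℝ be open, and let y : I → ℝ be twice continuously differentiable with (x, y(x)) ∈ X for all x ∈ I and with y(x) a critical point of the map y ↦ t·y + exp(α·ψ(x,y)) for every x ∈ I, i.e. t + α·ψ_y(x,y(x))·exp(α·ψ(x,y(x)))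 = 0. Define ζ(x) := t·y(x) + exp(α·ψ(x, y(x))). Then for all x ∈ I: ζ″(x) ≥ 0 and α^{−1}·|ζ‴(x)| ≤ 4·(α^{−1}·ζ″(x))^{3/2}; equivalently, the function 4·α^{−1}·ζ is self-concordant on I. -/
noncomputable section

lemma stmt18_ineq (ν α E a b c : ℝ) (hν : 1 ≤ ν) (hα0 : 0 < α) (hα : α ≤ 1 / (1000 * ν))
    (hE : 1 ≤ E) (hc : |c| ≤ 2 * b ^ ((3 : ℝ) / 2)) (ha : a ^ 2 ≤ ν * b) :
    0 ≤ α * E * (α * a ^ 2 + b) ∧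
      α⁻¹ * |α * E * (α ^ 2 * a ^ 3 + 3 * α * a * b + c)|
        ≤ 4 * (α⁻¹ * (α * E * (α * a ^ 2 + b))) ^ ((3 : ℝ) / 2) := by
  have hb : 0 ≤ b := by
    by_contra h
    push Not at h
    nlinarith [sq_nonneg a]
  have hpos : 0 ≤ α * a ^ 2 + b := by positivity
  refine ⟨by positivity, ?_⟩
  have key : ∀ r : ℝ, 0 ≤ r → r ^ ((3 : ℝ) / 2) = (Real.sqrt r) ^ 3 := by
    intro r hr
    rw [Real.sqrt_eq_rpow, ← Real.rpow_natCast, ← Real.rpow_mul hr]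
    norm_num
  have hαν : α * ν ≤ 1 / 1000 := by
    have h0 : 0 < 1000 * ν := by linarith
    rw [le_div_iff₀ h0] at hα
    linarith
  have e1 : α⁻¹ * (α * E * (α * a ^ 2 + b)) = E * (α * a ^ 2 + b) := by
    field_simp
  have e2 : α⁻¹ * |α * E * (α ^ 2 * a ^ 3 + 3 * α * a * b + c)|
      = E * |α ^ 2 * a ^ 3 + 3 * α * a * b + c| := by
    rw [abs_mul, abs_of_pos (by positivity : 0 < α * E)]
    field_simp
  rw [e1, e2, key _ (by positivity)]
  rw [key b hb] at hc
  set s := Real.sqrt b with hs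
  have hs0 : 0 ≤ s := Real.sqrt_nonneg b
  have hsb : s ^ 2 = b := Real.sq_sqrt hb
  have h1 : E * s ^ 3 ≤ Real.sqrt (E * (α * a ^ 2 + b)) ^ 3 := by
    have hE1 : 1 ≤ Real.sqrt E := by
      rw [Real.one_le_sqrt]; exact hE
    have h2 : Real.sqrt E * s ≤ Real.sqrt (E * (α * a ^ 2 + b)) := by
      rw [hs, ← Real.sqrt_mul (by linarith)]
      apply Real.sqrt_le_sqrt
      have : 0 ≤ α * a ^ 2 := by positivity
      nlinarith
    have h3 : E * s ^ 3 ≤ (Real.sqrt E * s) ^ 3 := by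
      have h4 : (Real.sqrt E) ^ 2 = E := Real.sq_sqrt (by linarith)
      have h5 : (Real.sqrt E * s) ^ 3 = Real.sqrt E * (E * s ^ 3) := by
        rw [← h4]
        rw [Real.sqrt_sq (by positivity)]
        ring
      rw [h5]
      have : 0 ≤ E * s ^ 3 := by positivity
      nlinarith
    exact h3.trans (pow_le_pow_left₀ (by positivity) h2 3)
  have haν : α * |a| ≤ s / 1000 := by
    have h6 : |a| ≤ ν * s := by
      have hνs : 0 ≤ ν * s := by positivity
      refine abs_le_of_sq_le_sq ?_ hνs
      rw [← hsb] at ha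
      have : 0 ≤ s ^ 2 := by positivity
      have : ν * s ^ 2 ≤ ν * (ν * s ^ 2) := by
        apply mul_le_mul_of_nonneg_left _ (by linarith)
        nlinarith
      nlinarith
    calc α * |a| ≤ α * (ν * s) := by gcongr
      _ = (α * ν) * s := by ring
      _ ≤ 1 / 1000 * s := by gcongr
      _ = s / 1000 := by ring
  have hαa2 : α * |a| ^ 2 ≤ s ^ 2 / 1000 := by
    rw [sq_abs]
    rw [← hsb] at ha
    calc α * a ^ 2 ≤ α * (ν * s ^ 2) := by gcongr
      _ = (α * ν) * s ^ 2 := by ring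
      _ ≤ 1 / 1000 * s ^ 2 := by gcongr
      _ = _ := by ring
  have h7 : |α ^ 2 * a ^ 3 + 3 * α * a * b + c| ≤ 4 * s ^ 3 := by
    have t1 : |α ^ 2 * a ^ 3| ≤ s ^ 3 / 2 := by
      have : |α ^ 2 * a ^ 3| = (α * |a|) * (α * |a| ^ 2) := by
        rw [abs_mul, abs_pow, abs_pow, abs_of_pos hα0]; ring
      rw [this]
      calc (α * |a|) * (α * |a| ^ 2) ≤ (s / 1000) * (s ^ 2 / 1000) := by gcongr
        _ ≤ s ^ 3 / 2 := by nlinarith [pow_nonneg hs0 3]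
    have t2 : |3 * α * a * b| ≤ s ^ 3 / 2 := by
      have : |3 * α * a * b| = 3 * (α * |a|) * s ^ 2 := by
        rw [abs_mul, abs_mul, abs_mul, abs_of_pos hα0, abs_of_nonneg hb, hsb]
        rw [abs_of_pos (by norm_num : (0 : ℝ) < 3)]; ring
      rw [this]
      calc 3 * (α * |a|) * s ^ 2 ≤ 3 * (s / 1000) * s ^ 2 := by gcongr
        _ ≤ s ^ 3 / 2 := by nlinarith [pow_nonneg hs0 3]
    have t3 := abs_add_le (α ^ 2 * a ^ 3 + 3 * α * a * b) c
    have t4 := abs_add_le (α ^ 2 * a ^ 3) (3 * α * a * b)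
    have := pow_nonneg hs0 3
    linarith
  calc E * |α ^ 2 * a ^ 3 + 3 * α * a * b + c| ≤ E * (4 * s ^ 3) := by gcongr
    _ = 4 * (E * s ^ 3) := by ring
    _ ≤ _ := by gcongr

/-- self-concordance of the partially minimized exponential barrier:
if `ψ ≥ 0` is `C³`, `ν`-self-concordant on the open set `X` (third-derivative bound and
gradient bound), `α ∈ (0, 1/(1000ν)]`, and `y x` is a critical point of
`y ↦ t y + exp(α ψ(x, y))` for each `x ∈ I`, then
`ζ x = t·y x + exp(α ψ(x, y x))` satisfies `ζ'' ≥ 0` and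
`α⁻¹ |ζ'''| ≤ 4 (α⁻¹ ζ'')^{3/2}` on `I`; i.e. `4 α⁻¹ ζ` is self-concordant on `I`. -/
theorem stmt18
    (X : Set (ℝ × ℝ)) (hX : IsOpen X)
    (ψ : ℝ × ℝ → ℝ) (hψ : ContDiffOn ℝ 3 ψ X)
    (hψ0 : ∀ p ∈ X, 0 ≤ ψ p)
    (ν : ℝ) (hν : 1 ≤ ν)
    (hsc : ∀ p ∈ X, ∀ w : ℝ × ℝ,
      |iteratedFDeriv ℝ 3 ψ p ![w, w, w]|
          ≤ 2 * (iteratedFDeriv ℝ 2 ψ p ![w, w]) ^ ((3 : ℝ) / 2) ∧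
        (fderiv ℝ ψ p w) ^ 2 ≤ ν * iteratedFDeriv ℝ 2 ψ p ![w, w])
    (α t : ℝ) (hα : 0 < α ∧ α ≤ 1 / (1000 * ν))
    (I : Set ℝ) (hI : IsOpen I)
    (y : ℝ → ℝ) (hy : ContDiffOn ℝ 2 y I)
    (hmem : ∀ x ∈ I, (x, y x) ∈ X)
    (hcrit : ∀ x ∈ I,
      t + α * fderiv ℝ ψ (x, y x) (0, 1) * Real.exp (α * ψ (x, y x)) = 0) :
    ∀ x ∈ I,
      0 ≤ deriv (deriv fun s => t * y s + Real.exp (α * ψ (s, y s))) x ∧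
        α⁻¹ * |deriv (deriv (deriv fun s => t * y s + Real.exp (α * ψ (s, y s)))) x|
          ≤ 4 * (α⁻¹ * deriv (deriv fun s => t * y s + Real.exp (α * ψ (s, y s))) x)
              ^ ((3 : ℝ) / 2) := by
  have ho : ∀ x ∈ I, I ∈ nhds x := fun x hx => hI.mem_nhds hx
  have hψ2 : ContDiffOn ℝ 2 (fderiv ℝ ψ) X := hψ.fderiv_of_isOpen hX (by norm_num)
  have hψ1 : ContDiffOn ℝ 1 (fderiv ℝ (fderiv ℝ ψ)) X :=
    hψ2.fderiv_of_isOpen hX (by norm_num)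
  have d0 : ∀ q ∈ X, HasFDerivAt ψ (fderiv ℝ ψ q) q := fun q hq =>
    ((hψ.differentiableOn (by norm_num)).differentiableAt (hX.mem_nhds hq)).hasFDerivAt
  have d1 : ∀ q ∈ X, HasFDerivAt (fderiv ℝ ψ) (fderiv ℝ (fderiv ℝ ψ) q) q := fun q hq =>
    ((hψ2.differentiableOn (by norm_num)).differentiableAt (hX.mem_nhds hq)).hasFDerivAt
  have d2 : ∀ q ∈ X, HasFDerivAt (fderiv ℝ (fderiv ℝ ψ))
      (fderiv ℝ (fderiv ℝ (fderiv ℝ ψ)) q) q := fun q hq =>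
    ((hψ1.differentiableOn (by norm_num)).differentiableAt (hX.mem_nhds hq)).hasFDerivAt
  have hsymm : ∀ q ∈ X, ∀ v w, fderiv ℝ (fderiv ℝ ψ) q v w = fderiv ℝ (fderiv ℝ ψ) q w v := by
    intro q hq v w
    have := ((hψ.contDiffAt (hX.mem_nhds hq)).isSymmSndFDerivAt (by simp; norm_num))
    exact this v w
  have hy1 : ∀ s ∈ I, HasDerivAt y (deriv y s) s := fun s hs =>
    ((hy.differentiableOn (by norm_num)).differentiableAt (ho s hs)).hasDerivAt
  have hyd : ContDiffOn ℝ 1 (deriv y) I := hy.deriv_of_isOpen hI (by norm_num)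
  have hy2 : ∀ s ∈ I, HasDerivAt (deriv y) (deriv (deriv y) s) s := fun s hs =>
    ((hyd.differentiableOn (by norm_num)).differentiableAt (ho s hs)).hasDerivAt
  have hp : ∀ s ∈ I, HasDerivAt (fun s => (s, y s)) ((1 : ℝ), deriv y s) s := fun s hs =>
    (hasDerivAt_id s).prodMk (hy1 s hs)
  have hw : ∀ s ∈ I, HasDerivAt (fun s => ((1 : ℝ), deriv y s)) ((0 : ℝ), deriv (deriv y) s) s :=
    fun s hs => (hasDerivAt_const s (1 : ℝ)).prodMk (hy2 s hs)
  have hψp : ∀ s ∈ I, HasDerivAt (fun s => ψ (s, y s))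
      (fderiv ℝ ψ (s, y s) (1, deriv y s)) s := fun s hs =>
    (d0 _ (hmem s hs)).comp_hasDerivAt s (hp s hs)
  have hD1 : ∀ s ∈ I, HasDerivAt (fun s => fderiv ℝ ψ (s, y s))
      (fderiv ℝ (fderiv ℝ ψ) (s, y s) (1, deriv y s)) s := fun s hs =>
    (d1 _ (hmem s hs)).comp_hasDerivAt s (hp s hs)
  have hD2 : ∀ s ∈ I, HasDerivAt (fun s => fderiv ℝ (fderiv ℝ ψ) (s, y s))
      (fderiv ℝ (fderiv ℝ (fderiv ℝ ψ)) (s, y s) (1, deriv y s)) s := fun s hs =>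
    (d2 (s, y s) (hmem s hs)).comp_hasDerivAt (l := fderiv ℝ (fderiv ℝ ψ))
      (f := fun s => (s, y s)) s (hp s hs)
  have hE : ∀ s ∈ I, HasDerivAt (fun s => Real.exp (α * ψ (s, y s)))
      (Real.exp (α * ψ (s, y s)) * (α * fderiv ℝ ψ (s, y s) (1, deriv y s))) s := fun s hs =>
    ((hψp s hs).const_mul α).exp
  have hDv : ∀ v : ℝ × ℝ, ∀ s ∈ I, HasDerivAt (fun s => fderiv ℝ ψ (s, y s) v)
      (fderiv ℝ (fderiv ℝ ψ) (s, y s) (1, deriv y s) v) s := by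
    intro v s hs
    have := (hD1 s hs).clm_apply (hasDerivAt_const s v)
    simpa using this
  have hdec : ∀ z : ℝ, ((1 : ℝ), z) = ((1 : ℝ), (0 : ℝ)) + z • ((0 : ℝ), (1 : ℝ)) := by
    intro z; simp
  have hdec0 : ∀ z : ℝ, ((0 : ℝ), z) = z • ((0 : ℝ), (1 : ℝ)) := by
    intro z; simp
  -- first derivative
  have hζ1 : ∀ s ∈ I, HasDerivAt (fun s => t * y s + Real.exp (α * ψ (s, y s)))
      (α * Real.exp (α * ψ (s, y s)) * fderiv ℝ ψ (s, y s) (1, 0)) s := by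
    intro s hs
    have h := ((hy1 s hs).const_mul t).add (hE s hs)
    refine h.congr_deriv ?_
    have hc := hcrit s hs
    rw [hdec (deriv y s), map_add, map_smul, smul_eq_mul]
    linear_combination (deriv y s) * hc
  -- differentiated critical point equation
  have hC : ∀ s ∈ I, α * fderiv ℝ ψ (s, y s) (1, deriv y s) * fderiv ℝ ψ (s, y s) (0, 1)
      + fderiv ℝ (fderiv ℝ ψ) (s, y s) (1, deriv y s) (0, 1) = 0 := by
    intro s hs
    have h := ((((hDv (0, 1) s hs).const_mul α).mul (hE s hs)).const_add t)
    have h0 : HasDerivAt (fun _ : ℝ => (0 : ℝ)) 0 s := hasDerivAt_const s 0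
    have h1 := h0.congr_of_eventuallyEq
      (Filter.eventuallyEq_of_mem (ho s hs) (fun r hr => hcrit r hr))
    have h2 := h.unique h1
    have h3 : α * Real.exp (α * ψ (s, y s)) *
      (α * fderiv ℝ ψ (s, y s) (1, deriv y s) * fderiv ℝ ψ (s, y s) (0, 1)
      + fderiv ℝ (fderiv ℝ ψ) (s, y s) (1, deriv y s) (0, 1)) = 0 := by
      linear_combination h2
    have h4 : α * Real.exp (α * ψ (s, y s)) ≠ 0 := by
      have := hα.1
      positivity
    exact (mul_eq_zero.mp h3).resolve_left h4
  have hζ2 : ∀ s ∈ I, HasDerivAt (deriv fun s => t * y s + Real.exp (α * ψ (s, y s)))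
      (α * Real.exp (α * ψ (s, y s)) * (α * (fderiv ℝ ψ (s, y s) (1, deriv y s)) ^ 2
        + fderiv ℝ (fderiv ℝ ψ) (s, y s) (1, deriv y s) (1, deriv y s))) s := by
    intro s hs
    have h := ((hE s hs).const_mul α).mul (hDv (1, 0) s hs)
    have h' := h.congr_of_eventuallyEq
      (Filter.eventuallyEq_of_mem (ho s hs) (fun r hr => (hζ1 r hr).deriv))
    refine h'.congr_deriv ?_
    have hc := hC s hs
    have e1 : fderiv ℝ ψ (s, y s) (1, deriv y s) = fderiv ℝ ψ (s, y s) (1, 0)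
        + deriv y s * fderiv ℝ ψ (s, y s) (0, 1) := by
      rw [hdec (deriv y s), map_add, map_smul, smul_eq_mul]
    have e2 : ∀ w, fderiv ℝ (fderiv ℝ ψ) (s, y s) w (1, deriv y s)
        = fderiv ℝ (fderiv ℝ ψ) (s, y s) w (1, 0)
        + deriv y s * fderiv ℝ (fderiv ℝ ψ) (s, y s) w (0, 1) := by
      intro w
      rw [hdec (deriv y s), map_add, map_smul, smul_eq_mul]
    rw [e2]
    generalize fderiv ℝ (fderiv ℝ ψ) (s, y s) (1, deriv y s) (1, 0) = m1 at *
    generalize fderiv ℝ (fderiv ℝ ψ) (s, y s) (1, deriv y s) (0, 1) = m2 at *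
    generalize fderiv ℝ ψ (s, y s) (1, deriv y s) = a at *
    generalize fderiv ℝ ψ (s, y s) (1, 0) = u1 at *
    generalize fderiv ℝ ψ (s, y s) (0, 1) = u2 at *
    generalize Real.exp (α * ψ (s, y s)) = E at *
    generalize deriv y s = z at *
    linear_combination (-α * E * z) * hc - (α ^ 2 * E * a) * e1
  have hζ3 : ∀ s ∈ I, HasDerivAt (deriv (deriv fun s => t * y s + Real.exp (α * ψ (s, y s))))
      (α * Real.exp (α * ψ (s, y s)) * (α ^ 2 * (fderiv ℝ ψ (s, y s) (1, deriv y s)) ^ 3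
        + 3 * α * fderiv ℝ ψ (s, y s) (1, deriv y s) *
          fderiv ℝ (fderiv ℝ ψ) (s, y s) (1, deriv y s) (1, deriv y s)
        + fderiv ℝ (fderiv ℝ (fderiv ℝ ψ)) (s, y s) (1, deriv y s) (1, deriv y s)
            (1, deriv y s))) s := by
    intro s hs
    have ha := (hD1 s hs).clm_apply (hw s hs)
    have hb := ((hD2 s hs).clm_apply (hw s hs)).clm_apply (hw s hs)
    have h := ((hE s hs).const_mul α).mul (((ha.pow 2).const_mul α).add hb)
    have h' := h.congr_of_eventuallyEq
      (Filter.eventuallyEq_of_mem (ho s hs) (fun r hr => (hζ2 r hr).deriv))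
    refine h'.congr_deriv ?_
    have hc := hC s hs
    simp only [Pi.add_apply, Pi.mul_apply, Pi.pow_apply, ContinuousLinearMap.add_apply]
    rw [hsymm _ (hmem s hs) (0, deriv (deriv y) s) (1, deriv y s)]
    have e1 : fderiv ℝ ψ (s, y s) (0, deriv (deriv y) s) =
        deriv (deriv y) s * fderiv ℝ ψ (s, y s) (0, 1) := by
      rw [hdec0 (deriv (deriv y) s), map_smul, smul_eq_mul]
    have e2 : ∀ w, fderiv ℝ (fderiv ℝ ψ) (s, y s) w (0, deriv (deriv y) s)
        = deriv (deriv y) s * fderiv ℝ (fderiv ℝ ψ) (s, y s) w (0, 1) := by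
      intro w
      rw [hdec0 (deriv (deriv y) s), map_smul, smul_eq_mul]
    rw [e1, e2]
    push_cast
    linear_combination (2 * α * Real.exp (α * ψ (s, y s)) * deriv (deriv y) s) * hc
  intro x hx
  rw [(hζ2 x hx).deriv, (hζ3 x hx).deriv]
  obtain ⟨h3, h2⟩ := hsc _ (hmem x hx) (1, deriv y x)
  have i2 : iteratedFDeriv ℝ 2 ψ (x, y x) ![(1, deriv y x), (1, deriv y x)]
      = fderiv ℝ (fderiv ℝ ψ) (x, y x) (1, deriv y x) (1, deriv y x) := by
    rw [iteratedFDeriv_two_apply]; rfl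
  have i3 : iteratedFDeriv ℝ 3 ψ (x, y x) ![(1, deriv y x), (1, deriv y x), (1, deriv y x)]
      = fderiv ℝ (fderiv ℝ (fderiv ℝ ψ)) (x, y x) (1, deriv y x) (1, deriv y x)
          (1, deriv y x) := by
    rw [iteratedFDeriv_succ_apply_right, iteratedFDeriv_two_apply]; rfl
  rw [i2, i3] at h3
  rw [i2] at h2
  refine stmt18_ineq ν α _ _ _ _ hν hα.1 hα.2 ?_ h3 h2
  exact Real.one_le_exp (mul_nonneg hα.1.le (hψ0 _ (hmem x hx)))
end
end
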